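/- arXiv:2109.04944 — 5 statements merged into one kernel-verified Lean document; each statement's English description precedes it below -/
import Mathlib

section
/- There is an absolute constant C > 0 such that the following holds with δ(ε) = ε^C / C and n₀(ε) = C·ε^{-C}, for all ε ∈ (0,1). Let H be a 3-uniform hypergraph on n ≥ n₀(ε) vertices which contains fewer than δ(ε)·n⁴ induced copies of D₂. Then there is a partition V(H) = X ∪ Y with X, Y nonempty such that (X,Y) is ε-homogeneous. -/
open Finset

/-- The number of induced copies of `D₂` (4 vertices spanning exactly 2 edges). -/
def inducedD2Count {V : Type} [Fintype V] [DecidableEq V] (E : Finset (Finset V)) : ℕ :=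
  (((Finset.univ : Finset V).powersetCard 4).filter
    (fun S => (E.filter (fun e => e ⊆ S)).card = 2)).card

/-- `e(X,X,Y)`: the number of edges with two vertices in `X` and one vertex in `Y`. -/
def eXXY {V : Type} [DecidableEq V] (E : Finset (Finset V)) (X Y : Finset V) : ℕ :=
  (E.filter (fun e => (e ∩ X).card = 2 ∧ (e ∩ Y).card = 1)).card

/-- `d(X,X,Y) = e(X,X,Y) / (C(|X|,2)·|Y|)`. -/
noncomputable def dXXY {V : Type} [DecidableEq V] (E : Finset (Finset V))
    (X Y : Finset V) : ℝ :=
  (eXXY E X Y : ℝ) / ((X.card.choose 2 : ℝ) * (Y.card : ℝ))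

/-- The pair `(X,Y)` is `ε`-homogeneous. -/
noncomputable def EpsHomogeneous {V : Type} [DecidableEq V]
    (E : Finset (Finset V)) (X Y : Finset V) (ε : ℝ) : Prop :=
  (dXXY E X Y ≥ 1 - ε ∧ dXXY E Y X ≥ 1 - ε) ∨ (dXXY E X Y ≤ ε ∧ dXXY E Y X ≤ ε)


namespace D2

def hh {V : Type} [DecidableEq V] (E : Finset (Finset V)) (a b c : V) : Prop :=
  ({a, b, c} : Finset V) ∈ E

instance hhDec {V : Type} [DecidableEq V] (E : Finset (Finset V)) (a b c : V) :
    Decidable (hh E a b c) := inferInstanceAs (Decidable (_ ∈ E))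

def ex2 (A B C D : Prop) : Prop :=
  (A ∧ B ∧ ¬C ∧ ¬D) ∨ (A ∧ ¬B ∧ C ∧ ¬D) ∨ (A ∧ ¬B ∧ ¬C ∧ D) ∨
  (¬A ∧ B ∧ C ∧ ¬D) ∨ (¬A ∧ B ∧ ¬C ∧ D) ∨ (¬A ∧ ¬B ∧ C ∧ D)

def Dist {V : Type} (a b c d : V) : Prop :=
  a ≠ b ∧ a ≠ c ∧ a ≠ d ∧ b ≠ c ∧ b ≠ d ∧ c ≠ d

def Bd {V : Type} [DecidableEq V] (E : Finset (Finset V)) (a b c d : V) : Prop :=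
  Dist a b c d ∧ ex2 (hh E a b c) (hh E a b d) (hh E a c d) (hh E b c d)

def Clean {V : Type} [DecidableEq V] (E : Finset (Finset V)) (S : Finset V) : Prop :=
  ∀ a ∈ S, ∀ b ∈ S, ∀ c ∈ S, ∀ d ∈ S, ¬ Bd E a b c d

def U3 {V : Type} (E : Finset (Finset V)) : Prop := ∀ e ∈ E, e.card = 3

section basic
variable {V : Type} [DecidableEq V] {E : Finset (Finset V)}

lemma hh_12 {a b c : V} : hh E a b c ↔ hh E b a c := by
  unfold hh; rw [Finset.insert_comm]

lemma hh_23 {a b c : V} : hh E a b c ↔ hh E a c b := by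
  unfold hh; rw [Finset.pair_comm]

lemma hh_dist (h3 : U3 E) {a b c : V} (h : hh E a b c) : a ≠ b ∧ a ≠ c ∧ b ≠ c := by
  have := h3 _ h
  exact Finset.card_eq_three.1 this |> fun _ => by
    refine ⟨?_, ?_, ?_⟩
    · rintro rfl
      have h2 := Finset.card_le_two (a := a) (b := c)
      simp only [Finset.insert_eq_of_mem (Finset.mem_insert_self _ _)] at this
      omega
    · rintro rfl
      have h2 := Finset.card_le_two (a := b) (b := a)
      rw [Finset.insert_comm, Finset.insert_eq_of_mem (Finset.mem_singleton_self a)] at this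
      omega
    · rintro rfl
      have h2 := Finset.card_le_two (a := a) (b := b)
      simp at this
      omega

lemma Clean.q {S : Finset V} (hS : Clean E S) {a b c d : V} (ha : a ∈ S) (hb : b ∈ S)
    (hc : c ∈ S) (hd : d ∈ S) (hD : Dist a b c d) :
    ¬ ex2 (hh E a b c) (hh E a b d) (hh E a c d) (hh E b c d) :=
  fun h => hS a ha b hb c hc d hd ⟨hD, h⟩

lemma clean_mono {S T : Finset V} (hS : Clean E S) (hT : T ⊆ S) : Clean E T :=
  fun a ha b hb c hc d hd => hS a (hT ha) b (hT hb) c (hT hc) d (hT hd)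

/-- two vertices of `P` with common neighbour -/
lemma logic_PPR1 {u v w p q r : V} (hS : Clean E {u, v, w, p, q, r})
    (h3 : U3 E) (huv : u ≠ v) (hw : hh E u v w)
    (hp : p ≠ u ∧ p ≠ v ∧ ¬ hh E u v p) (hq : q ≠ u ∧ q ≠ v ∧ ¬ hh E u v q)
    (hr : r ≠ u ∧ r ≠ v ∧ ¬ hh E u v r)
    (h1 : hh E u w p) (h2 : hh E u w q) (h4 : ¬ hh E u w r) (h5 : hh E p q r) : False := by
  obtain ⟨-, d1, d2⟩ := hh_dist h3 hw
  obtain ⟨d3, d4, d5⟩ := hh_dist h3 h5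
  obtain ⟨-, -, d6⟩ := hh_dist h3 h1
  obtain ⟨-, -, d7⟩ := hh_dist h3 h2
  have d8 : w ≠ r := by rintro rfl; exact hr.2.2 hw
  obtain ⟨a1, a2, a3⟩ := hp
  obtain ⟨b1, b2, b3⟩ := hq
  obtain ⟨c1, c2, c3⟩ := hr
  have q1 := hS.q (a := u) (b := v) (c := w) (d := p) (by simp) (by simp) (by simp) (by simp) (by refine ⟨?_, ?_, ?_, ?_, ?_, ?_⟩ <;> first | assumption | (apply Ne.symm; assumption))
  have q2 := hS.q (a := u) (b := v) (c := w) (d := q) (by simp) (by simp) (by simp) (by simp) (by refine ⟨?_, ?_, ?_, ?_, ?_, ?_⟩ <;> first | assumption | (apply Ne.symm; assumption))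
  have q3 := hS.q (a := u) (b := v) (c := w) (d := r) (by simp) (by simp) (by simp) (by simp) (by refine ⟨?_, ?_, ?_, ?_, ?_, ?_⟩ <;> first | assumption | (apply Ne.symm; assumption))
  have q4 := hS.q (a := u) (b := v) (c := p) (d := r) (by simp) (by simp) (by simp) (by simp) (by refine ⟨?_, ?_, ?_, ?_, ?_, ?_⟩ <;> first | assumption | (apply Ne.symm; assumption))
  have q5 := hS.q (a := u) (b := v) (c := q) (d := r) (by simp) (by simp) (by simp) (by simp) (by refine ⟨?_, ?_, ?_, ?_, ?_, ?_⟩ <;> first | assumption | (apply Ne.symm; assumption))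
  have q6 := hS.q (a := u) (b := v) (c := p) (d := q) (by simp) (by simp) (by simp) (by simp) (by refine ⟨?_, ?_, ?_, ?_, ?_, ?_⟩ <;> first | assumption | (apply Ne.symm; assumption))
  have q7 := hS.q (a := u) (b := w) (c := p) (d := r) (by simp) (by simp) (by simp) (by simp) (by refine ⟨?_, ?_, ?_, ?_, ?_, ?_⟩ <;> first | assumption | (apply Ne.symm; assumption))
  have q8 := hS.q (a := v) (b := w) (c := p) (d := r) (by simp) (by simp) (by simp) (by simp) (by refine ⟨?_, ?_, ?_, ?_, ?_, ?_⟩ <;> first | assumption | (apply Ne.symm; assumption))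
  have q9 := hS.q (a := u) (b := w) (c := q) (d := r) (by simp) (by simp) (by simp) (by simp) (by refine ⟨?_, ?_, ?_, ?_, ?_, ?_⟩ <;> first | assumption | (apply Ne.symm; assumption))
  have q10 := hS.q (a := v) (b := w) (c := q) (d := r) (by simp) (by simp) (by simp) (by simp) (by refine ⟨?_, ?_, ?_, ?_, ?_, ?_⟩ <;> first | assumption | (apply Ne.symm; assumption))
  have q11 := hS.q (a := w) (b := p) (c := q) (d := r) (by simp) (by simp) (by simp) (by simp) (by refine ⟨?_, ?_, ?_, ?_, ?_, ?_⟩ <;> first | assumption | (apply Ne.symm; assumption))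
  have q12 := hS.q (a := u) (b := w) (c := p) (d := q) (by simp) (by simp) (by simp) (by simp) (by refine ⟨?_, ?_, ?_, ?_, ?_, ?_⟩ <;> first | assumption | (apply Ne.symm; assumption))
  have q13 := hS.q (a := v) (b := w) (c := p) (d := q) (by simp) (by simp) (by simp) (by simp) (by refine ⟨?_, ?_, ?_, ?_, ?_, ?_⟩ <;> first | assumption | (apply Ne.symm; assumption))
  clear hS
  have e1 : hh E v w p := by simpa [ex2, hw, a3, h1] using q1
  have e2 : hh E v w q := by simpa [ex2, hw, b3, h2] using q2
  have e3 : ¬ hh E v w r := by simpa [ex2, hw, c3, h4] using q3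
  have e4 : ¬ hh E w p r := by
    simp [ex2, a3, c3, h1, h4, e1, e3] at q4 q7 q8; clear * - q4 q7 q8; tauto
  have e5 : ¬ hh E w q r := by
    simp [ex2, b3, c3, h2, h4, e2, e3] at q5 q9 q10; clear * - q5 q9 q10; tauto
  have e6 : ¬ hh E w p q := by simpa [ex2, e4, e5, h5] using q11
  simp [ex2, a3, b3, h1, h2, e1, e2, e6] at q6 q12 q13; clear * - q6 q12 q13; tauto

/-- no induced matching -/
lemma logic_2K2 {u v w x p q : V} (hS : Clean E {u, v, w, x, p, q})
    (h3 : U3 E) (huv : u ≠ v) (hw : hh E u v w) (hx : hh E u v x)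
    (hp : p ≠ u ∧ p ≠ v ∧ ¬ hh E u v p) (hq : q ≠ u ∧ q ≠ v ∧ ¬ hh E u v q)
    (h1 : hh E u w p) (h2 : ¬ hh E u w q) (h4 : ¬ hh E u x p) (h5 : hh E u x q) : False := by
  obtain ⟨-, d1, d2⟩ := hh_dist h3 hw
  obtain ⟨-, d3, d4⟩ := hh_dist h3 hx
  have d5 : w ≠ x := by rintro rfl; exact h4 h1
  have d6 : p ≠ q := by rintro rfl; exact h4 h5
  have d7 : w ≠ p := by rintro rfl; exact hp.2.2 hw
  have d8 : w ≠ q := by rintro rfl; exact hq.2.2 hw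
  have d9 : x ≠ p := by rintro rfl; exact hp.2.2 hx
  have d10 : x ≠ q := by rintro rfl; exact hq.2.2 hx
  obtain ⟨a1, a2, a3⟩ := hp
  obtain ⟨b1, b2, b3⟩ := hq
  have q1 := hS.q (a := u) (b := v) (c := w) (d := p) (by simp) (by simp) (by simp) (by simp) (by refine ⟨?_, ?_, ?_, ?_, ?_, ?_⟩ <;> first | assumption | (apply Ne.symm; assumption))
  have q2 := hS.q (a := u) (b := v) (c := w) (d := q) (by simp) (by simp) (by simp) (by simp) (by refine ⟨?_, ?_, ?_, ?_, ?_, ?_⟩ <;> first | assumption | (apply Ne.symm; assumption))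
  have q3 := hS.q (a := u) (b := v) (c := x) (d := p) (by simp) (by simp) (by simp) (by simp) (by refine ⟨?_, ?_, ?_, ?_, ?_, ?_⟩ <;> first | assumption | (apply Ne.symm; assumption))
  have q4 := hS.q (a := u) (b := v) (c := x) (d := q) (by simp) (by simp) (by simp) (by simp) (by refine ⟨?_, ?_, ?_, ?_, ?_, ?_⟩ <;> first | assumption | (apply Ne.symm; assumption))
  have q5 := hS.q (a := u) (b := v) (c := w) (d := x) (by simp) (by simp) (by simp) (by simp) (by refine ⟨?_, ?_, ?_, ?_, ?_, ?_⟩ <;> first | assumption | (apply Ne.symm; assumption))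
  have q6 := hS.q (a := u) (b := v) (c := p) (d := q) (by simp) (by simp) (by simp) (by simp) (by refine ⟨?_, ?_, ?_, ?_, ?_, ?_⟩ <;> first | assumption | (apply Ne.symm; assumption))
  have q7 := hS.q (a := u) (b := w) (c := x) (d := p) (by simp) (by simp) (by simp) (by simp) (by refine ⟨?_, ?_, ?_, ?_, ?_, ?_⟩ <;> first | assumption | (apply Ne.symm; assumption))
  have q8 := hS.q (a := v) (b := w) (c := x) (d := p) (by simp) (by simp) (by simp) (by simp) (by refine ⟨?_, ?_, ?_, ?_, ?_, ?_⟩ <;> first | assumption | (apply Ne.symm; assumption))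
  have q9 := hS.q (a := u) (b := w) (c := x) (d := q) (by simp) (by simp) (by simp) (by simp) (by refine ⟨?_, ?_, ?_, ?_, ?_, ?_⟩ <;> first | assumption | (apply Ne.symm; assumption))
  have q10 := hS.q (a := v) (b := w) (c := x) (d := q) (by simp) (by simp) (by simp) (by simp) (by refine ⟨?_, ?_, ?_, ?_, ?_, ?_⟩ <;> first | assumption | (apply Ne.symm; assumption))
  have q11 := hS.q (a := w) (b := x) (c := p) (d := q) (by simp) (by simp) (by simp) (by simp) (by refine ⟨?_, ?_, ?_, ?_, ?_, ?_⟩ <;> first | assumption | (apply Ne.symm; assumption))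
  have q12 := hS.q (a := u) (b := w) (c := p) (d := q) (by simp) (by simp) (by simp) (by simp) (by refine ⟨?_, ?_, ?_, ?_, ?_, ?_⟩ <;> first | assumption | (apply Ne.symm; assumption))
  have q13 := hS.q (a := v) (b := w) (c := p) (d := q) (by simp) (by simp) (by simp) (by simp) (by refine ⟨?_, ?_, ?_, ?_, ?_, ?_⟩ <;> first | assumption | (apply Ne.symm; assumption))
  have q14 := hS.q (a := u) (b := x) (c := p) (d := q) (by simp) (by simp) (by simp) (by simp) (by refine ⟨?_, ?_, ?_, ?_, ?_, ?_⟩ <;> first | assumption | (apply Ne.symm; assumption))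
  have q15 := hS.q (a := v) (b := x) (c := p) (d := q) (by simp) (by simp) (by simp) (by simp) (by refine ⟨?_, ?_, ?_, ?_, ?_, ?_⟩ <;> first | assumption | (apply Ne.symm; assumption))
  clear hS
  have e1 : hh E v w p := by simpa [ex2, hw, a3, h1] using q1
  have e2 : ¬ hh E v w q := by simpa [ex2, hw, b3, h2] using q2
  have e3 : ¬ hh E v x p := by simpa [ex2, hx, a3, h4] using q3
  have e4 : hh E v x q := by simpa [ex2, hx, b3, h5] using q4
  have e5 : hh E w x p := by simp [ex2, hw, hx, h1, h4, e1, e3] at q5 q7 q8; clear * - q5 q7 q8; tauto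
  have e6 : hh E w x q := by simp [ex2, hw, hx, h2, h5, e2, e4] at q5 q9 q10; clear * - q5 q9 q10; tauto
  have e7 : ¬ hh E w p q := by simp [ex2, a3, b3, h1, h2, e1, e2] at q6 q12 q13; clear * - q6 q12 q13; tauto
  have e8 : ¬ hh E x p q := by simp [ex2, a3, b3, h4, h5, e3, e4] at q6 q14 q15; clear * - q6 q14 q15; tauto
  simp [ex2, e5, e6, e7, e8] at q11

lemma logic_NNR {u v k l r : V} (hS : Clean E {u, v, k, l, r})
    (h3 : U3 E) (huv : u ≠ v) (hk : hh E u v k) (hl : hh E u v l)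
    (hr : r ≠ u ∧ r ≠ v ∧ ¬ hh E u v r)
    (h1 : ¬ hh E u k r) (h2 : ¬ hh E u l r) (h5 : hh E k l r) : False := by
  obtain ⟨-, d1, d2⟩ := hh_dist h3 hk
  obtain ⟨-, d3, d4⟩ := hh_dist h3 hl
  obtain ⟨d5, d6, d7⟩ := hh_dist h3 h5
  obtain ⟨c1, c2, c3⟩ := hr
  have q1 := hS.q (a := u) (b := v) (c := k) (d := l) (by simp) (by simp) (by simp) (by simp) (by refine ⟨?_, ?_, ?_, ?_, ?_, ?_⟩ <;> first | assumption | (apply Ne.symm; assumption))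
  have q2 := hS.q (a := u) (b := v) (c := k) (d := r) (by simp) (by simp) (by simp) (by simp) (by refine ⟨?_, ?_, ?_, ?_, ?_, ?_⟩ <;> first | assumption | (apply Ne.symm; assumption))
  have q3 := hS.q (a := u) (b := v) (c := l) (d := r) (by simp) (by simp) (by simp) (by simp) (by refine ⟨?_, ?_, ?_, ?_, ?_, ?_⟩ <;> first | assumption | (apply Ne.symm; assumption))
  have q4 := hS.q (a := u) (b := k) (c := l) (d := r) (by simp) (by simp) (by simp) (by simp) (by refine ⟨?_, ?_, ?_, ?_, ?_, ?_⟩ <;> first | assumption | (apply Ne.symm; assumption))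
  have q5 := hS.q (a := v) (b := k) (c := l) (d := r) (by simp) (by simp) (by simp) (by simp) (by refine ⟨?_, ?_, ?_, ?_, ?_, ?_⟩ <;> first | assumption | (apply Ne.symm; assumption))
  clear hS
  have e1 : ¬ hh E v k r := by simpa [ex2, hk, c3, h1] using q2
  have e2 : ¬ hh E v l r := by simpa [ex2, hl, c3, h2] using q3
  simp [ex2, hk, hl, h1, h2, h5, e1, e2] at q1 q4 q5; clear * - q1 q4 q5; tauto

lemma logic_NPR {u v k w p r : V} (hS : Clean E {u, v, k, w, p, r})
    (h3 : U3 E) (huv : u ≠ v) (hk : hh E u v k) (hw : hh E u v w)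
    (hp : p ≠ u ∧ p ≠ v ∧ ¬ hh E u v p)
    (hr : r ≠ u ∧ r ≠ v ∧ ¬ hh E u v r)
    (h1 : ¬ hh E u k r) (h2 : hh E u w p) (h4 : ¬ hh E u w r) (h5 : hh E k p r) : False := by
  obtain ⟨-, d1, d2⟩ := hh_dist h3 hk
  obtain ⟨-, d3, d4⟩ := hh_dist h3 hw
  obtain ⟨d5, d6, d7⟩ := hh_dist h3 h5
  obtain ⟨-, -, d8⟩ := hh_dist h3 h2
  have d9 : w ≠ r := by rintro rfl; exact hr.2.2 hw
  obtain ⟨a1, a2, a3⟩ := hp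
  obtain ⟨c1, c2, c3⟩ := hr
  have q1 := hS.q (a := u) (b := v) (c := k) (d := p) (by simp) (by simp) (by simp) (by simp) (by refine ⟨?_, ?_, ?_, ?_, ?_, ?_⟩ <;> first | assumption | (apply Ne.symm; assumption))
  have q2 := hS.q (a := u) (b := v) (c := k) (d := r) (by simp) (by simp) (by simp) (by simp) (by refine ⟨?_, ?_, ?_, ?_, ?_, ?_⟩ <;> first | assumption | (apply Ne.symm; assumption))
  have q3 := hS.q (a := u) (b := v) (c := w) (d := p) (by simp) (by simp) (by simp) (by simp) (by refine ⟨?_, ?_, ?_, ?_, ?_, ?_⟩ <;> first | assumption | (apply Ne.symm; assumption))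
  have q4 := hS.q (a := u) (b := v) (c := w) (d := r) (by simp) (by simp) (by simp) (by simp) (by refine ⟨?_, ?_, ?_, ?_, ?_, ?_⟩ <;> first | assumption | (apply Ne.symm; assumption))
  have q5 := hS.q (a := u) (b := v) (c := p) (d := r) (by simp) (by simp) (by simp) (by simp) (by refine ⟨?_, ?_, ?_, ?_, ?_, ?_⟩ <;> first | assumption | (apply Ne.symm; assumption))
  have q6 := hS.q (a := u) (b := k) (c := p) (d := r) (by simp) (by simp) (by simp) (by simp) (by refine ⟨?_, ?_, ?_, ?_, ?_, ?_⟩ <;> first | assumption | (apply Ne.symm; assumption))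
  have q7 := hS.q (a := v) (b := k) (c := p) (d := r) (by simp) (by simp) (by simp) (by simp) (by refine ⟨?_, ?_, ?_, ?_, ?_, ?_⟩ <;> first | assumption | (apply Ne.symm; assumption))
  have q8 := hS.q (a := u) (b := w) (c := p) (d := r) (by simp) (by simp) (by simp) (by simp) (by refine ⟨?_, ?_, ?_, ?_, ?_, ?_⟩ <;> first | assumption | (apply Ne.symm; assumption))
  have q9 := hS.q (a := v) (b := w) (c := p) (d := r) (by simp) (by simp) (by simp) (by simp) (by refine ⟨?_, ?_, ?_, ?_, ?_, ?_⟩ <;> first | assumption | (apply Ne.symm; assumption))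
  have e1 : hh E u k p ↔ hh E v k p := by
    simp [ex2, hk, a3] at q1; clear * - q1; tauto
  have e2 : ¬ hh E v k r := by simpa [ex2, hk, c3, h1] using q2
  have e3 : hh E v w p := by simpa [ex2, hw, a3, h2] using q3
  have e4 : ¬ hh E v w r := by simpa [ex2, hw, c3, h4] using q4
  have e5 : ¬ hh E w p r := by simp [ex2, a3, c3, h2, h4, e3, e4] at q5 q8 q9; clear * - q5 q8 q9; tauto
  have e6 : ¬ hh E u k p := by
    intro h6
    have h7 := e1.1 h6
    simp [ex2, a3, c3, h1, h5, e2, h6, h7] at q5 q6 q7; clear * - q5 q6 q7; tauto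
  have d10 : k ≠ w := by rintro rfl; exact e6 h2
  have q10 := hS.q (a := u) (b := v) (c := k) (d := w) (by simp) (by simp) (by simp) (by simp) (by refine ⟨?_, ?_, ?_, ?_, ?_, ?_⟩ <;> first | assumption | (apply Ne.symm; assumption))
  have q11 := hS.q (a := u) (b := k) (c := w) (d := p) (by simp) (by simp) (by simp) (by simp) (by refine ⟨?_, ?_, ?_, ?_, ?_, ?_⟩ <;> first | assumption | (apply Ne.symm; assumption))
  have q12 := hS.q (a := v) (b := k) (c := w) (d := p) (by simp) (by simp) (by simp) (by simp) (by refine ⟨?_, ?_, ?_, ?_, ?_, ?_⟩ <;> first | assumption | (apply Ne.symm; assumption))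
  have q13 := hS.q (a := k) (b := w) (c := p) (d := r) (by simp) (by simp) (by simp) (by simp) (by refine ⟨?_, ?_, ?_, ?_, ?_, ?_⟩ <;> first | assumption | (apply Ne.symm; assumption))
  have e7 : ¬ hh E k w r := fun h => logic_NNR
    (clean_mono hS (by intro z; simp; tauto)) h3 huv hk hw ⟨c1, c2, c3⟩ h1 h4 h
  clear hS
  have e9 : ¬ hh E v k p := fun h => e6 (e1.2 h)
  have e8 : hh E k w p := by simp [ex2, hk, hw, e6, e9, h2, e3] at q10 q11 q12; clear * - q10 q11 q12; tauto
  simp [ex2, e8, e7, h5, e5] at q13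

end basic
section counting

lemma fib_ge {A B : Type*} [DecidableEq B] (s : Finset A) (t : Finset B) (f : A → B) (c : ℝ)
    (hn : ∀ b ∈ t, c ≤ ((s.filter (fun a => f a = b)).card : ℝ)) : c * (t.card : ℝ) ≤ (s.card : ℝ) := by
  classical
  have h1 : ∑ b ∈ t, (s.filter (fun a => f a = b)).card ≤ s.card := by
    rw [← Finset.card_biUnion]
    · apply Finset.card_le_card
      intro a; simp
    · intro x _ y _ hxy
      apply Finset.disjoint_left.2
      intro a; simp; intro _ h1 _ h2; exact hxy (h1 ▸ h2)
  have h2 : ∑ b ∈ t, c ≤ ∑ b ∈ t, ((s.filter (fun a => f a = b)).card : ℝ) := Finset.sum_le_sum hn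
  rw [Finset.sum_const, nsmul_eq_mul] at h2
  have h3 : (∑ b ∈ t, ((s.filter (fun a => f a = b)).card : ℝ)) ≤ s.card := by exact_mod_cast h1
  linarith

lemma fib_le {A B : Type*} [DecidableEq B] (s : Finset A) (t : Finset B) (f : A → B) (c : ℝ)
    (hf : ∀ a ∈ s, f a ∈ t)
    (hn : ∀ b ∈ t, ((s.filter (fun a => f a = b)).card : ℝ) ≤ c) : (s.card : ℝ) ≤ c * (t.card : ℝ) := by
  rw [Finset.card_eq_sum_card_fiberwise (f := f) (t := t) hf]
  push_cast
  calc _ ≤ ∑ b ∈ t, c := Finset.sum_le_sum hn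
    _ = _ := by rw [Finset.sum_const, nsmul_eq_mul]; ring

variable {V : Type} [Fintype V] [DecidableEq V]

def co (E : Finset (Finset V)) : Finset (Finset V) :=
  ((Finset.univ : Finset V).powersetCard 3).filter (fun e => e ∉ E)

lemma co_U3 (E : Finset (Finset V)) : U3 (co E) := by
  intro e he
  simp [co, Finset.mem_powersetCard] at he
  exact he.1

lemma hh_co {E : Finset (Finset V)} {a b c : V} :
    hh (co E) a b c ↔ (a ≠ b ∧ a ≠ c ∧ b ≠ c) ∧ ¬ hh E a b c := by
  constructor
  · intro h
    refine ⟨hh_dist (co_U3 E) h, ?_⟩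
    simp [hh, co] at h
    exact h.2
  · rintro ⟨h1, h2⟩
    simp only [hh, co, Finset.mem_filter, Finset.mem_powersetCard, Finset.subset_univ, true_and]
    exact ⟨Finset.card_eq_three.2 ⟨a, b, c, h1.1, h1.2.1, h1.2.2, rfl⟩, h2⟩

lemma co_co {E : Finset (Finset V)} (h3 : U3 E) : co (co E) = E := by
  ext e
  simp only [co, Finset.mem_filter, Finset.mem_powersetCard, Finset.subset_univ, true_and]
  have := h3 e
  tauto

lemma Bd_co {E : Finset (Finset V)} {a b c d : V} : Bd (co E) a b c d ↔ Bd E a b c d := by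
  unfold Bd
  refine and_congr_right ?_
  rintro ⟨h1, h2, h3, h4, h5, h6⟩
  have key : ∀ A B C D : Prop, ex2 (¬ A) (¬ B) (¬ C) (¬ D) ↔ ex2 A B C D := by
    intro A B C D
    unfold ex2
    by_cases hA : A <;> by_cases hB : B <;> by_cases hC : C <;> by_cases hD : D <;>
      simp [hA, hB, hC, hD]
  rw [← key (hh E a b c)]
  simp only [hh_co, h1, h2, h3, h4, h5, h6, ne_eq, not_false_eq_true, true_and]

lemma Clean_co {E : Finset (Finset V)} {S : Finset V} : Clean (co E) S ↔ Clean E S := by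
  unfold Clean; simp only [Bd_co]

open Classical in
noncomputable def Tset (E : Finset (Finset V)) (u v : V) : Finset (V × V × V × V × V) :=
  Finset.univ.filter (fun x => ¬ Clean E {u, v, x.1, x.2.1, x.2.2.1, x.2.2.2.1, x.2.2.2.2})

lemma not_clean {E : Finset (Finset V)} {S : Finset V} (h : ¬ Clean E S) :
    ∃ a b c d, a ∈ S ∧ b ∈ S ∧ c ∈ S ∧ d ∈ S ∧ Bd E a b c d := by
  by_contra hn
  exact h (fun a ha b hb c hc d hd hB => hn ⟨a, b, c, d, ha, hb, hc, hd, hB⟩)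

lemma mem_Tset {E : Finset (Finset V)} {u v a b c d e : V} :
    (a, b, c, d, e) ∈ Tset E u v ↔ ¬ Clean E {u, v, a, b, c, d, e} := by
  simp [Tset]

lemma Tset_co (E : Finset (Finset V)) (u v : V) : Tset (co E) u v = Tset E u v := by
  ext ⟨a, b, c, d, e⟩
  rw [mem_Tset, mem_Tset, Clean_co]

/-- number of edges in a bad quadruple -/
lemma Bd_card {E : Finset (Finset V)} (h3 : U3 E) {a b c d : V} (h : Bd E a b c d) :
    ({a, b, c, d} : Finset V).card = 4 ∧
    (E.filter (fun e => e ⊆ ({a, b, c, d} : Finset V))).card = 2 := by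
  obtain ⟨⟨h1, h2, h3', h4, h5, h6⟩, h⟩ := h
  have hc : ({a, b, c, d} : Finset V).card = 4 := by
    simp [h1, h2, h3', h4, h5, h6]
  refine ⟨hc, ?_⟩
  have key : E.filter (fun e => e ⊆ ({a, b, c, d} : Finset V)) =
      ({{a, b, c}, {a, b, d}, {a, c, d}, {b, c, d}} : Finset (Finset V)).filter (fun e => e ∈ E) := by
    ext e
    simp only [Finset.mem_filter]
    constructor
    · rintro ⟨he, hs⟩
      refine ⟨?_, he⟩
      have h1' : (({a, b, c, d} : Finset V) \ e).card = 1 := by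
        rw [Finset.card_sdiff_of_subset hs, hc, h3 e he]
      obtain ⟨x, hx⟩ := Finset.card_eq_one.1 h1'
      have hex : e = ({a, b, c, d} : Finset V) \ {x} := by
        rw [← hx, Finset.sdiff_sdiff_eq_self hs]
      have hxm : x ∈ ({a, b, c, d} : Finset V) := by
        have : x ∈ ({a, b, c, d} : Finset V) \ e := by rw [hx]; simp
        exact (Finset.mem_sdiff.1 this).1
      simp only [Finset.mem_insert, Finset.mem_singleton] at hxm ⊢
      rcases hxm with rfl | rfl | rfl | rfl
      · right; right; right; rw [hex]; ext y; simp; grind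
      · right; right; left; rw [hex]; ext y; simp; grind
      · right; left; rw [hex]; ext y; simp; grind
      · left; rw [hex]; ext y; simp; grind
    · rintro ⟨hm, he⟩
      refine ⟨he, ?_⟩
      simp only [Finset.mem_insert, Finset.mem_singleton] at hm
      rcases hm with rfl | rfl | rfl | rfl <;> (intro y; simp; try tauto)
  rw [key]
  have n1 : ({a, b, c} : Finset V) ≠ {a, b, d} := by
    intro hh; have : c ∈ ({a, b, d} : Finset V) := by rw [← hh]; simp
    simp at this; grind
  have n2 : ({a, b, c} : Finset V) ≠ {a, c, d} := by
    intro hh; have : b ∈ ({a, c, d} : Finset V) := by rw [← hh]; simp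
    simp at this; grind
  have n3 : ({a, b, c} : Finset V) ≠ {b, c, d} := by
    intro hh; have : a ∈ ({b, c, d} : Finset V) := by rw [← hh]; simp
    simp at this; grind
  have n4 : ({a, b, d} : Finset V) ≠ {a, c, d} := by
    intro hh; have : b ∈ ({a, c, d} : Finset V) := by rw [← hh]; simp
    simp at this; grind
  have n5 : ({a, b, d} : Finset V) ≠ {b, c, d} := by
    intro hh; have : a ∈ ({b, c, d} : Finset V) := by rw [← hh]; simp
    simp at this; grind
  have n6 : ({a, c, d} : Finset V) ≠ {b, c, d} := by
    intro hh; have : a ∈ ({b, c, d} : Finset V) := by rw [← hh]; simp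
    simp at this; grind
  unfold ex2 hh at h
  rcases h with h | h | h | h | h | h <;> obtain ⟨g1, g2, g3, g4⟩ := h <;>
    simp [Finset.filter_insert, Finset.filter_singleton, g1, g2, g3, g4, n1, n2, n3, n4, n5, n6]

open Classical in
lemma quad_count {E : Finset (Finset V)} (h3 : U3 E) :
    ((Finset.univ : Finset (Fin 4 → V)).filter (fun f => Bd E (f 0) (f 1) (f 2) (f 3))).card
      ≤ 256 * inducedD2Count E := by
  unfold inducedD2Count
  apply Finset.card_le_mul_card_image_of_maps_to (f := fun f => ({f 0, f 1, f 2, f 3} : Finset V))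
  · intro f hf
    simp only [Finset.mem_filter, Finset.mem_univ, true_and] at hf
    have := Bd_card h3 hf
    simp only [Finset.mem_filter, Finset.mem_powersetCard, Finset.subset_univ, true_and]
    exact this
  · intro S hS
    simp only [Finset.mem_filter, Finset.mem_powersetCard, Finset.subset_univ, true_and] at hS
    have : (Fintype.piFinset (fun _ : Fin 4 => S)).card = 256 := by
      rw [Fintype.card_piFinset]; simp [hS.1]
    rw [← this]
    apply Finset.card_le_card
    intro f hf
    simp only [Finset.mem_filter, Finset.mem_univ, true_and] at hf
    rw [Fintype.mem_piFinset]
    intro i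
    rw [← hf.2]
    fin_cases i <;> simp

open Classical in
lemma inj_count {E : Finset (Finset V)} (i : Fin 4 → Fin 7) (hi : Function.Injective i) :
    ((Finset.univ : Finset (Fin 7 → V)).filter
      (fun f => Bd E (f (i 0)) (f (i 1)) (f (i 2)) (f (i 3)))).card
    ≤ ((Finset.univ : Finset (Fin 4 → V)).filter (fun f => Bd E (f 0) (f 1) (f 2) (f 3))).card
      * Fintype.card V ^ 3 := by
  have hc : Fintype.card ({x : Fin 7 // x ∉ Set.range i} → V) = Fintype.card V ^ 3 := by
    rw [Fintype.card_fun]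
    congr 1
    rw [Fintype.card_subtype_compl]
    have : Fintype.card {x : Fin 7 // x ∈ Set.range i} = 4 := by
      have h := Set.card_range_of_injective hi
      rw [Fintype.card_fin] at h
      exact (Fintype.card_congr (Equiv.refl _)).trans h
    rw [this]; simp
  rw [← hc, ← Finset.card_univ, ← Finset.card_product]
  apply Finset.card_le_card_of_injOn (fun f => (f ∘ i, fun x => f x.1))
  · intro f hf
    simp at hf ⊢
    exact hf
  · intro f _ g _ h
    simp only [Prod.mk.injEq] at h
    ext x
    by_cases hx : x ∈ Set.range i
    · obtain ⟨j, rfl⟩ := hx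
      exact congrFun h.1 j
    · exact congrFun h.2 ⟨x, hx⟩

lemma dirty_ex {E : Finset (Finset V)} (f : Fin 7 → V) (hf2 : ¬ Clean E (Finset.univ.image f)) :
    ∃ i : Fin 4 → Fin 7, Function.Injective i ∧
      Bd E (f (i 0)) (f (i 1)) (f (i 2)) (f (i 3)) := by
  obtain ⟨x1, x2, x3, x4, y1, y2, y3, y4, hB⟩ := not_clean hf2
  obtain ⟨a, y1⟩ : ∃ z, f z = x1 := by simpa using y1
  obtain ⟨b, y2⟩ : ∃ z, f z = x2 := by simpa using y2
  obtain ⟨c, y3⟩ : ∃ z, f z = x3 := by simpa using y3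
  obtain ⟨d, y4⟩ : ∃ z, f z = x4 := by simpa using y4
  rw [← y1, ← y2, ← y3, ← y4] at hB
  refine ⟨![a, b, c, d], ?_, by simpa using hB⟩
  obtain ⟨⟨h1, h2, h3', h4, h5, h6⟩, -⟩ := hB
  have e1 : a ≠ b := fun h => h1 (h ▸ rfl)
  have e2 : a ≠ c := fun h => h2 (h ▸ rfl)
  have e3 : a ≠ d := fun h => h3' (h ▸ rfl)
  have e4 : b ≠ c := fun h => h4 (h ▸ rfl)
  have e5 : b ≠ d := fun h => h5 (h ▸ rfl)
  have e6 : c ≠ d := fun h => h6 (h ▸ rfl)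
  clear y1 y2 y3 y4
  intro x y hxy
  fin_cases x <;> fin_cases y <;> simp_all

open Classical in
lemma total_count {E : Finset (Finset V)} (h3 : U3 E) :
    ((Finset.univ : Finset (Fin 7 → V)).filter (fun f => ¬ Clean E (Finset.univ.image f))).card
      ≤ 614656 * inducedD2Count E * Fintype.card V ^ 3 := by
  have h1 : ((Finset.univ : Finset (Fin 7 → V)).filter (fun f => ¬ Clean E (Finset.univ.image f)))
      ⊆ (Finset.univ : Finset (Fin 4 → Fin 7)).biUnion (fun i =>
        if Function.Injective i then (Finset.univ : Finset (Fin 7 → V)).filter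
      (fun f => Bd E (f (i 0)) (f (i 1)) (f (i 2)) (f (i 3))) else ∅) := by
    intro f hf
    rw [Finset.mem_biUnion]
    have hd := dirty_ex f (Finset.mem_filter.1 hf).2
    exact hd.imp (fun i hi => ⟨Finset.mem_univ _, by
      rw [if_pos hi.1]; exact Finset.mem_filter.2 ⟨Finset.mem_univ _, hi.2⟩⟩)
  refine (Finset.card_le_card h1).trans (Finset.card_biUnion_le.trans ?_)
  have h2 : ∀ i ∈ (Finset.univ : Finset (Fin 4 → Fin 7)), (if Function.Injective i then
      (Finset.univ : Finset (Fin 7 → V)).filter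
      (fun f => Bd E (f (i 0)) (f (i 1)) (f (i 2)) (f (i 3))) else ∅).card
      ≤ 256 * inducedD2Count E * Fintype.card V ^ 3 := by
    intro i _
    split_ifs with hi
    · exact (inj_count i hi).trans (Nat.mul_le_mul_right _ (quad_count h3))
    · simp
  refine (Finset.sum_le_card_nsmul _ _ _ h2).trans ?_
  simp
  apply le_of_eq; ring

open Classical in
lemma choose_pair {E : Finset (Finset V)} (h3 : U3 E) (Md : Finset (V × V)) (τ : ℝ)
    (hM : ∀ x ∈ Md, τ ≤ ((Tset E x.1 x.2).card : ℝ)) :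
    τ * Md.card ≤ 614656 * inducedD2Count E * (Fintype.card V : ℝ) ^ 3 := by
  have h1 := total_count (V := V) h3
  have h2 : (((Finset.univ : Finset (Fin 7 → V)).filter
      (fun f => ¬ Clean E (Finset.univ.image f))).card : ℝ) ≤
      614656 * inducedD2Count E * (Fintype.card V : ℝ) ^ 3 := by exact_mod_cast h1
  refine le_trans (fib_ge _ Md (fun f => (f 0, f 1)) τ ?_) h2
  intro x hx
  refine (hM x hx).trans ?_
  norm_cast
  apply Finset.card_le_card_of_injOn (fun y => ![x.1, x.2, y.1, y.2.1, y.2.2.1, y.2.2.2.1, y.2.2.2.2])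
  · rintro ⟨a, b, c, d, e⟩ hy
    have hy' := mem_Tset.1 (Finset.mem_coe.1 hy)
    rw [Finset.mem_coe, Finset.mem_filter, Finset.mem_filter]
    refine ⟨⟨Finset.mem_univ _, ?_⟩, ?_⟩
    · intro hC
      apply hy'
      apply clean_mono hC
      intro z hz
      simp only [Finset.mem_insert, Finset.mem_singleton] at hz
      rw [Finset.mem_image]
      rcases hz with h | h | h | h | h | h | h
      · exact ⟨0, by simp, by simp [h]⟩
      · exact ⟨1, by simp, by simp [h]⟩
      · exact ⟨2, by simp, by simp [h]⟩
      · exact ⟨3, by simp, by simp [h]⟩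
      · exact ⟨4, by simp, by simp [h]⟩
      · exact ⟨5, by simp, by simp [h]⟩
      · exact ⟨6, by simp, by simp [h]⟩
    · simp
  · rintro ⟨a, b, c, d, e⟩ _ ⟨a', b', c', d', e'⟩ _ h
    have g2 := congrFun h 2
    have g3 := congrFun h 3
    have g4 := congrFun h 4
    have g5 := congrFun h 5
    have g6 := congrFun h 6
    simp at g2 g3 g4 g5 g6
    simp [g2, g3, g4, g5, g6]

end counting
section dens
variable {V : Type} [Fintype V] [DecidableEq V]

def ordc (E : Finset (Finset V)) (X Y : Finset V) : ℕ :=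
  ((X ×ˢ X ×ˢ Y).filter (fun t => hh E t.1 t.2.1 t.2.2)).card

lemma eXXY_le {E : Finset (Finset V)} (h3 : U3 E) {X Y : Finset V} (hd : Disjoint X Y) :
    eXXY E X Y ≤ ordc E X Y := by
  unfold eXXY ordc
  apply Finset.card_le_card_of_surjOn (fun t => ({t.1, t.2.1, t.2.2} : Finset V))
  intro e he
  simp only [Finset.coe_filter, Set.mem_setOf_eq] at he
  obtain ⟨he, h2, h1⟩ := he
  obtain ⟨a, b, hab, hX⟩ := Finset.card_eq_two.1 h2
  obtain ⟨c, hY⟩ := Finset.card_eq_one.1 h1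
  have ha : a ∈ e ∩ X := by rw [hX]; simp
  have hb : b ∈ e ∩ X := by rw [hX]; simp
  have hc : c ∈ e ∩ Y := by rw [hY]; simp
  rw [Finset.mem_inter] at ha hb hc
  have hac : a ≠ c := fun h => Finset.disjoint_left.1 hd ha.2 (h ▸ hc.2)
  have hbc : b ≠ c := fun h => Finset.disjoint_left.1 hd hb.2 (h ▸ hc.2)
  have heq : ({a, b, c} : Finset V) = e := by
    apply Finset.eq_of_subset_of_card_le
    · intro z; simp; rintro (rfl | rfl | rfl)
      exacts [ha.1, hb.1, hc.1]
    · rw [h3 e he, Finset.card_eq_three.2 ⟨a, b, c, hab, hac, hbc, rfl⟩]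
  refine ⟨(a, b, c), ?_, heq⟩
  simp only [Finset.coe_filter, Set.mem_setOf_eq, Finset.mem_product]
  refine ⟨⟨ha.2, hb.2, hc.2⟩, ?_⟩
  unfold hh; rw [heq]; exact he

lemma choose_cast (m : ℕ) : ((m.choose 2 : ℕ) : ℝ) = (m : ℝ) * (m - 1) / 2 :=
  Nat.cast_choose_two ℝ m

lemma d_le {E : Finset (Finset V)} (h3 : U3 E) {X Y : Finset V} (hd : Disjoint X Y) {ε : ℝ}
    (hε : 0 ≤ ε) (h : (ordc E X Y : ℝ) ≤ ε / 4 * (X.card : ℝ) ^ 2 * Y.card) :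
    dXXY E X Y ≤ ε := by
  unfold dXXY
  have h1 : (eXXY E X Y : ℝ) ≤ ordc E X Y := by exact_mod_cast eXXY_le h3 hd
  rcases Nat.lt_or_ge X.card 2 with hx | hx
  · rw [Nat.choose_eq_zero_of_lt hx]; simpa using hε
  · apply div_le_of_le_mul₀ (by positivity) hε
    rw [choose_cast]
    have hx' : (2 : ℝ) ≤ X.card := by exact_mod_cast hx
    have h4 : ε / 4 * (X.card : ℝ) ^ 2 * Y.card ≤ ε * ((X.card : ℝ) * (X.card - 1) / 2 * Y.card) := by
      have : 0 ≤ ε * (Y.card : ℝ) * (X.card * (X.card - 2)) := by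
        have : (0:ℝ) ≤ X.card - 2 := by linarith
        positivity
      nlinarith
    linarith

lemma eXXY_add {E : Finset (Finset V)} {X Y : Finset V} (hd : Disjoint X Y) :
    X.card.choose 2 * Y.card ≤ eXXY E X Y + eXXY (co E) X Y := by
  rw [← Finset.card_powersetCard, ← Finset.card_product]
  unfold eXXY
  rw [← Finset.card_union_of_disjoint]
  · apply Finset.card_le_card_of_injOn (fun t => insert t.2 t.1)
    · rintro ⟨s, y⟩ hs
      simp only [Finset.coe_product, Set.mem_prod, Finset.mem_coe, Finset.mem_powersetCard] at hs
      obtain ⟨⟨hs, hc⟩, hy⟩ := hs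
      have hyX : y ∉ X := fun h => Finset.disjoint_left.1 hd h hy
      have hys : y ∉ s := fun h => hyX (hs h)
      have e1 : insert y s ∩ X = s := by
        rw [Finset.insert_inter_of_notMem hyX, Finset.inter_eq_left.2 hs]
      have e2 : insert y s ∩ Y = {y} := by
        rw [Finset.insert_inter_of_mem hy]
        have : s ∩ Y = ∅ := Finset.disjoint_iff_inter_eq_empty.1 (Finset.disjoint_of_subset_left hs hd)
        rw [this]; rfl
      simp only [Finset.coe_union, Finset.coe_filter, Set.mem_union, Set.mem_setOf_eq, e1, e2, hc,
        Finset.card_singleton, and_true, co, Finset.mem_filter, Finset.mem_powersetCard,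
        Finset.subset_univ, true_and, Finset.card_insert_of_notMem hys]
      tauto
    · rintro ⟨s, y⟩ hs ⟨s', y'⟩ hs' h
      simp only [Finset.coe_product, Set.mem_prod, Finset.mem_coe, Finset.mem_powersetCard] at hs hs'
      obtain ⟨⟨hs, hc⟩, hy⟩ := hs
      obtain ⟨⟨hs', hc'⟩, hy'⟩ := hs'
      have hyX : y ∉ X := fun h => Finset.disjoint_left.1 hd h hy
      have hyX' : y' ∉ X := fun h => Finset.disjoint_left.1 hd h hy'
      simp only at h
      have hyy : y = y' := by
        have : y ∈ insert y' s' := by rw [← h]; simp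
        rcases Finset.mem_insert.1 this with h | h
        · exact h
        · exact absurd (hs' h) hyX
      subst hyy
      have : s = s' := by
        have e1 : insert y s ∩ X = s := by
          rw [Finset.insert_inter_of_notMem hyX, Finset.inter_eq_left.2 hs]
        have e2 : insert y s' ∩ X = s' := by
          rw [Finset.insert_inter_of_notMem hyX, Finset.inter_eq_left.2 hs']
        rw [← e1, ← e2, h]
      rw [this]
  · apply Finset.disjoint_left.2
    intro e h1 h2
    simp only [co, Finset.mem_filter] at h1 h2
    exact h2.1.2 h1.1

lemma d_ge {E : Finset (Finset V)} {X Y : Finset V} (hd : Disjoint X Y) {ε : ℝ}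
    (hX : 2 ≤ X.card) (hY : 1 ≤ Y.card) (h : dXXY (co E) X Y ≤ ε) : dXXY E X Y ≥ 1 - ε := by
  have h1 : ((X.card.choose 2 : ℕ) : ℝ) * Y.card ≤ eXXY E X Y + eXXY (co E) X Y := by
    exact_mod_cast eXXY_add hd
  have hpos : 0 < ((X.card.choose 2 : ℕ) : ℝ) * Y.card := by
    have := Nat.choose_pos hX
    have : (0:ℝ) < (X.card.choose 2 : ℕ) := by exact_mod_cast this
    have : (0:ℝ) < Y.card := by exact_mod_cast hY
    positivity
  unfold dXXY at *
  rw [div_le_iff₀ hpos] at h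
  rw [ge_iff_le, le_div_iff₀ hpos]
  linarith

/-- sparse partition -/
def SP (E : Finset (Finset V)) (X Y : Finset V) (ε : ℝ) : Prop :=
  Disjoint X Y ∧ X ∪ Y = Finset.univ ∧ X.Nonempty ∧ Y.Nonempty ∧
  (ordc E X Y : ℝ) ≤ ε / 4 * (X.card : ℝ) ^ 2 * Y.card ∧
  (ordc E Y X : ℝ) ≤ ε / 4 * (Y.card : ℝ) ^ 2 * X.card

lemma SP_fin {E : Finset (Finset V)} (h3 : U3 E) {X Y : Finset V} {ε : ℝ} (hε : 0 ≤ ε)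
    (h : SP E X Y ε) : ∃ X Y : Finset V,
          Disjoint X Y ∧ X ∪ Y = Finset.univ ∧
          X.Nonempty ∧ Y.Nonempty ∧
          EpsHomogeneous E X Y ε := by
  obtain ⟨h1, h2, h4, h5, h6, h7⟩ := h
  exact ⟨X, Y, h1, h2, h4, h5, Or.inr ⟨d_le h3 h1 hε h6, d_le h3 h1.symm hε h7⟩⟩

lemma SP_co_fin {E : Finset (Finset V)} {X Y : Finset V} {ε : ℝ} (hε : 0 ≤ ε)
    (h : SP (co E) X Y ε) (hX : 2 ≤ X.card) (hY : 2 ≤ Y.card) : ∃ X Y : Finset V,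
          Disjoint X Y ∧ X ∪ Y = Finset.univ ∧
          X.Nonempty ∧ Y.Nonempty ∧
          EpsHomogeneous E X Y ε := by
  obtain ⟨h1, h2, h4, h5, h6, h7⟩ := h
  exact ⟨X, Y, h1, h2, h4, h5, Or.inl ⟨d_ge h1 hX (by omega) (d_le (co_U3 E) h1 hε h6),
    d_ge h1.symm hY (by omega) (d_le (co_U3 E) h1.symm hε h7)⟩⟩

end dens
section dich
variable {V : Type} [Fintype V] [DecidableEq V]

def Nb (E : Finset (Finset V)) (u v : V) : Finset V := Finset.univ.filter (fun w => hh E u v w)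
def Mb (E : Finset (Finset V)) (u v : V) : Finset V :=
  Finset.univ.filter (fun z => z ≠ u ∧ z ≠ v ∧ ¬ hh E u v z)
def Bz (E : Finset (Finset V)) (u v z : V) : Finset V :=
  (Nb E u v).filter (fun w => hh E u w z)
def Cz (E : Finset (Finset V)) (u v w : V) : Finset V :=
  (Mb E u v).filter (fun z => ¬ hh E u w z)

lemma mem_Nb {E : Finset (Finset V)} {u v w : V} : w ∈ Nb E u v ↔ hh E u v w := by simp [Nb]
lemma mem_Mb {E : Finset (Finset V)} {u v w : V} :
    w ∈ Mb E u v ↔ w ≠ u ∧ w ≠ v ∧ ¬ hh E u v w := by simp [Mb]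
lemma mem_Bz {E : Finset (Finset V)} {u v z w : V} :
    w ∈ Bz E u v z ↔ hh E u v w ∧ hh E u w z := by simp [Bz, Nb]

lemma dich {E : Finset (Finset V)} (h3 : U3 E) {u v : V} (huv : u ≠ v) (n β η τ : ℝ)
    (hn : n = Fintype.card V) (hn0 : 0 < n) (hη : 0 < η) (hβ : 2 * η ≤ β)
    (hM : 2 * η * n < (Mb E u v).card)
    (hT : ((Tset E u v).card : ℝ) ≤ τ * n ^ 5)
    (hτ : τ < η * (β - 2 * η) ^ 4) :
    η * n ≤ ((Mb E u v).filter (fun z => ((Bz E u v z).card : ℝ) < β * n)).card ∨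
    η * n ≤ ((Nb E u v).filter (fun w => ((Cz E u v w).card : ℝ) < β * n)).card := by
  classical
  by_contra hcon
  push Not at hcon
  obtain ⟨hc1, hc2⟩ := hcon
  set M := Mb E u v with hMdef
  set N := Nb E u v with hNdef
  set B := Bz E u v with hBdef
  have hex : ∃ t : ℕ, 2 * η * n < (M.filter (fun z => (B z).card ≤ t)).card := by
    refine ⟨Fintype.card V, ?_⟩
    rw [Finset.filter_true_of_mem]
    · exact hM
    · intro z _; exact Finset.card_le_univ _
  obtain ⟨t, ht, htmin⟩ : ∃ t : ℕ, 2 * η * n < (M.filter (fun z => (B z).card ≤ t)).card ∧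
      ((M.filter (fun z => (B z).card < t)).card : ℝ) ≤ 2 * η * n := by
    refine ⟨Nat.find hex, Nat.find_spec hex, ?_⟩
    rcases Nat.eq_zero_or_pos (Nat.find hex) with h0 | h0
    · rw [h0]; simp; positivity
    · have := Nat.find_min hex (m := Nat.find hex - 1) (by omega)
      push Not at this
      have e : M.filter (fun z => (B z).card < Nat.find hex) =
          M.filter (fun z => (B z).card ≤ Nat.find hex - 1) := by
        apply Finset.filter_congr; intro z _; omega
      rw [e]; exact this
  set Z := M.filter (fun z => β * n ≤ (B z).card ∧ (B z).card ≤ t) with hZ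
  set M1 := M.filter (fun z => t ≤ (B z).card) with hM1
  have hZc : η * n ≤ Z.card := by
    have : (M.filter (fun z => (B z).card ≤ t)).card ≤
        Z.card + (M.filter (fun z => ((B z).card : ℝ) < β * n)).card := by
      rw [← Finset.card_union_of_disjoint]
      · apply Finset.card_le_card
        intro z
        simp only [hZ, Finset.mem_filter, Finset.mem_union]
        intro h
        rcases lt_or_ge ((B z).card : ℝ) (β * n) with h' | h'
        · exact Or.inr ⟨h.1, h'⟩
        · exact Or.inl ⟨h.1, h', h.2⟩
      · apply Finset.disjoint_left.2
        intro z
        simp only [hZ, Finset.mem_filter]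
        intro h1 h2
        linarith [h1.2.1, h2.2]
    have : ((M.filter (fun z => (B z).card ≤ t)).card : ℝ) ≤
        Z.card + (M.filter (fun z => ((B z).card : ℝ) < β * n)).card := by exact_mod_cast this
    linarith
  -- lower bound on pairs
  have hW : ∀ z ∈ Z, ((β - 2 * η) * n) ^ 2 ≤
      ∑ z' ∈ M1, (((B z).filter (fun w => ¬ hh E u w z')).card : ℝ) := by
    intro z hz
    have hzZ := (Finset.mem_filter.1 hz).2
    have e1 : ∑ z' ∈ M1, (((B z).filter (fun w => ¬ hh E u w z')).card : ℝ) =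
        ∑ w ∈ B z, ((M1.filter (fun z' => ¬ hh E u w z')).card : ℝ) := by
      simp only [Finset.card_filter]
      push_cast
      exact Finset.sum_comm
    rw [e1]
    set G := (B z).filter (fun w => β * n ≤ ((Cz E u v w).card : ℝ)) with hG
    have hGc : (β - 2 * η) * n ≤ G.card := by
      have h1 := Finset.card_filter_add_card_filter_not (s := B z)
        (fun w => β * n ≤ ((Cz E u v w).card : ℝ))
      have h2 : ((B z).filter (fun w => ¬ β * n ≤ ((Cz E u v w).card : ℝ))).card ≤
          (N.filter (fun w => ((Cz E u v w).card : ℝ) < β * n)).card := by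
        apply Finset.card_le_card
        intro w hw
        rw [Finset.mem_filter] at hw ⊢
        exact ⟨(Finset.mem_filter.1 hw.1).1, not_le.1 hw.2⟩
      have h1' : ((G.card : ℝ)) + ((B z).filter (fun w => ¬ β * n ≤ ((Cz E u v w).card : ℝ))).card
        = (B z).card := by exact_mod_cast h1
      have h2' : (((B z).filter (fun w => ¬ β * n ≤ ((Cz E u v w).card : ℝ))).card : ℝ) ≤
          (N.filter (fun w => ((Cz E u v w).card : ℝ) < β * n)).card := by exact_mod_cast h2
      nlinarith [hzZ.1, mul_pos hη hn0]
    have hGw : ∀ w ∈ G, (β - 2 * η) * n ≤ ((M1.filter (fun z' => ¬ hh E u w z')).card : ℝ) := by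
      intro w hw
      have hw2 := (Finset.mem_filter.1 hw).2
      have : (Cz E u v w).card ≤ (M1.filter (fun z' => ¬ hh E u w z')).card +
          (M.filter (fun z => (B z).card < t)).card := by
        refine le_trans (Finset.card_le_card ?_) (Finset.card_union_le _ _)
        intro y hy
        have hy' := Finset.mem_filter.1 hy
        rcases lt_or_ge (B y).card t with h | h
        · exact Finset.mem_union_right _ (Finset.mem_filter.2 ⟨hy'.1, h⟩)
        · exact Finset.mem_union_left _ (Finset.mem_filter.2 ⟨Finset.mem_filter.2 ⟨hy'.1, h⟩, hy'.2⟩)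
      have : ((Cz E u v w).card : ℝ) ≤ (M1.filter (fun z' => ¬ hh E u w z')).card +
          (M.filter (fun z => (B z).card < t)).card := by exact_mod_cast this
      linarith
    have hnn : 0 ≤ (β - 2 * η) * n := mul_nonneg (by linarith) hn0.le
    calc ((β - 2 * η) * n) ^ 2 ≤ G.card * ((β - 2 * η) * n) := by
          rw [sq]; exact mul_le_mul_of_nonneg_right hGc hnn
      _ = ∑ w ∈ G, (β - 2 * η) * n := by rw [Finset.sum_const, nsmul_eq_mul]
      _ ≤ ∑ w ∈ G, ((M1.filter (fun z' => ¬ hh E u w z')).card : ℝ) := Finset.sum_le_sum hGw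
      _ ≤ _ := Finset.sum_le_sum_of_subset_of_nonneg (Finset.filter_subset _ _)
          (fun _ _ _ => by positivity)
  have hfib : ∀ z ∈ Z, ((β - 2 * η) ^ 4 * n ^ 4) ≤
      (((Tset E u v).filter (fun x => x.1 = z)).card : ℝ) := by
    intro z hz
    have hzZ := (Finset.mem_filter.1 hz)
    have hzM := mem_Mb.1 hzZ.1
    set d : V → ℝ := fun z' => (((B z).filter (fun w => ¬ hh E u w z')).card : ℝ) with hd
    have hcs : (∑ z' ∈ M1, d z') ^ 2 ≤ n * ∑ z' ∈ M1, (d z') ^ 2 := by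
      refine (sq_sum_le_card_mul_sum_sq (s := M1) (f := d)).trans ?_
      apply mul_le_mul_of_nonneg_right _ (Finset.sum_nonneg (fun _ _ => sq_nonneg _))
      rw [hn]; exact_mod_cast Finset.card_le_univ _
    have hsq : ((β - 2 * η) * n) ^ 4 ≤ (∑ z' ∈ M1, d z') ^ 2 := by
      have := hW z hz
      have h0 : 0 ≤ ((β - 2 * η) * n) ^ 2 := sq_nonneg _
      calc ((β - 2 * η) * n) ^ 4 = (((β - 2 * η) * n) ^ 2) ^ 2 := by ring
        _ ≤ _ := pow_le_pow_left₀ h0 this 2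
    have hsum : (β - 2 * η) ^ 4 * n ^ 3 ≤ ∑ z' ∈ M1, (d z') ^ 2 := by
      have : n * ((β - 2 * η) ^ 4 * n ^ 3) ≤ n * ∑ z' ∈ M1, (d z') ^ 2 := by
        calc _ = ((β - 2 * η) * n) ^ 4 := by ring
          _ ≤ _ := hsq.trans hcs
      exact le_of_mul_le_mul_left this hn0
    -- the tuples
    set S : Finset (Σ _ : V, V × V × V) := M1.sigma (fun z' =>
      ((B z).filter (fun w => ¬ hh E u w z')) ×ˢ ((B z').filter (fun w => ¬ hh E u w z)) ×ˢ
        (Finset.univ : Finset V)) with hS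
    have hSc : n * ∑ z' ∈ M1, (d z') ^ 2 ≤ S.card := by
      rw [hS, Finset.card_sigma]
      push_cast
      rw [Finset.mul_sum]
      apply Finset.sum_le_sum
      intro z' hz'
      rw [Finset.card_product, Finset.card_product, Finset.card_univ]
      push_cast
      rw [← hn]
      have hle : ((B z).filter (fun w => ¬ hh E u w z')).card ≤
          ((B z').filter (fun w => ¬ hh E u w z)).card := by
        have hz't := (Finset.mem_filter.1 hz').2
        have a1 := Finset.card_filter_add_card_filter_not (s := B z) (fun w => hh E u w z')
        have a2 := Finset.card_filter_add_card_filter_not (s := B z') (fun w => hh E u w z)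
        have a3 : (B z).filter (fun w => hh E u w z') = (B z').filter (fun w => hh E u w z) := by
          ext w; simp only [hBdef, Finset.mem_filter, mem_Bz]; tauto
        rw [a3] at a1
        have := hzZ.2.2
        omega
      have hle' : d z' ≤ (((B z').filter (fun w => ¬ hh E u w z)).card : ℝ) := by
        simp only [hd]; exact_mod_cast hle
      have hd0 : 0 ≤ d z' := by positivity
      calc n * d z' ^ 2 = d z' * (d z' * n) := by ring
        _ ≤ d z' * ((((B z').filter (fun w => ¬ hh E u w z)).card : ℝ) * n) := by gcongr
    have hST : S.card ≤ ((Tset E u v).filter (fun x => x.1 = z)).card := by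
      apply Finset.card_le_card_of_injOn (fun x => (z, x.1, x.2.1, x.2.2.1, x.2.2.2))
      · rintro ⟨z', w, x, y⟩ h
        simp only [hS, Finset.coe_sigma, Set.mem_sigma_iff, Finset.mem_coe, Finset.mem_product,
          Finset.mem_filter, hBdef, mem_Bz, hM1, hMdef] at h
        obtain ⟨⟨hz'1, -⟩, ⟨⟨hw1, hw2⟩, hw3⟩, ⟨⟨hx1, hx2⟩, hx3⟩, -⟩ := h
        simp only [Finset.mem_coe, Finset.mem_filter, mem_Tset, and_true]
        intro hC
        exact logic_2K2 (clean_mono hC (by intro z; simp; tauto)) h3 huv hw1 hx1 hzM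
          (mem_Mb.1 hz'1) hw2 hw3 hx3 hx2
      · rintro ⟨z', w, x, y⟩ _ ⟨z'', w', x', y'⟩ _ h
        simp at h ⊢
        tauto
    have hST' : (S.card : ℝ) ≤ ((Tset E u v).filter (fun x => x.1 = z)).card := by
      exact_mod_cast hST
    calc (β - 2 * η) ^ 4 * n ^ 4 = n * ((β - 2 * η) ^ 4 * n ^ 3) := by ring
      _ ≤ n * ∑ z' ∈ M1, (d z') ^ 2 := by gcongr
      _ ≤ _ := hSc.trans hST'
  have hfin := fib_ge (Tset E u v) Z (fun x => x.1) _ hfib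
  have h5 : (β - 2 * η) ^ 4 * n ^ 4 * (η * n) ≤ (β - 2 * η) ^ 4 * n ^ 4 * Z.card := by
    apply mul_le_mul_of_nonneg_left hZc
    have : 0 ≤ (β - 2 * η) := by linarith
    positivity
  have h6 : τ * n ^ 5 < η * (β - 2 * η) ^ 4 * n ^ 5 := by gcongr
  nlinarith

end dich
section branch
variable {V : Type} [Fintype V] [DecidableEq V]

lemma pig (M : Finset V) (f : V → ℝ) (n a0 st : ℝ) (hn : n = Fintype.card V) (hst : 0 ≤ st)
    (s : ℕ) (hs : 0 < s) :
    ∃ i < s, (s : ℝ) * ((M.filter (fun z => a0 + i * st ≤ f z ∧ f z < a0 + (i + 1) * st)).card : ℝ) ≤ n := by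
  by_contra hcon
  push Not at hcon
  have h1 : (∑ i ∈ Finset.range s,
      (M.filter (fun z => a0 + i * st ≤ f z ∧ f z < a0 + (i + 1) * st)).card) ≤ Fintype.card V := by
    rw [← Finset.card_biUnion]
    · exact Finset.card_le_univ _
    · have key : ∀ i j : ℕ, i < j → ∀ z, a0 + j * st ≤ f z → f z < a0 + (i + 1) * st → False := by
        intro i j hij z h1 h2
        have : (i : ℝ) + 1 ≤ j := by exact_mod_cast hij
        nlinarith
      intro i _ j _ hij
      apply Finset.disjoint_left.2
      intro z h1 h2
      have h1 := (Finset.mem_filter.1 h1).2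
      have h2 := (Finset.mem_filter.1 h2).2
      rcases lt_or_gt_of_ne hij with h | h
      · exact key i j h z h2.1 h1.2
      · exact key j i h z h1.1 h2.2
  have h2 : (∑ i ∈ Finset.range s,
      ((M.filter (fun z => a0 + i * st ≤ f z ∧ f z < a0 + (i + 1) * st)).card : ℝ)) ≤ n := by
    rw [hn]; exact_mod_cast h1
  have h3 : ∑ i ∈ Finset.range s, n < ∑ i ∈ Finset.range s, (s : ℝ) *
      ((M.filter (fun z => a0 + i * st ≤ f z ∧ f z < a0 + (i + 1) * st)).card : ℝ) := by
    apply Finset.sum_lt_sum_of_nonempty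
    · simpa using hs.ne'
    · intro i hi; exact hcon i (Finset.mem_range.1 hi)
  rw [← Finset.mul_sum, Finset.sum_const, nsmul_eq_mul, Finset.card_range] at h3
  have hs' : (0 : ℝ) < s := by exact_mod_cast hs
  have := lt_of_mul_lt_mul_left h3 hs'.le
  linarith

/-- good bad-triples -/
noncomputable def Gs (E : Finset (Finset V)) (u v : V) (a b : ℝ) : Finset (V × V × V) :=
  Finset.univ.filter (fun t =>
    (t.1 ∈ Nb E u v ∨ (t.1 ∈ Mb E u v ∧ b ≤ ((Bz E u v t.1).card : ℝ))) ∧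
    (t.2.1 ∈ Nb E u v ∨ (t.2.1 ∈ Mb E u v ∧ b ≤ ((Bz E u v t.2.1).card : ℝ))) ∧
    (t.2.2 ∈ Mb E u v ∧ ((Bz E u v t.2.2).card : ℝ) < a) ∧
    t.1 ∉ Bz E u v t.2.2 ∧ t.2.1 ∉ Bz E u v t.2.2 ∧ hh E t.1 t.2.1 t.2.2)

def As (E : Finset (Finset V)) (u v k r : V) : Finset V :=
  if k ∈ Nb E u v then Finset.univ else Bz E u v k \ Bz E u v r

lemma As_card {E : Finset (Finset V)} {u v k r : V} {n g a b : ℝ} (hn : n = Fintype.card V)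
    (hn0 : 0 ≤ n) (hg1 : g ≤ 1) (hab : a + g * n ≤ b)
    (hk : k ∈ Nb E u v ∨ (k ∈ Mb E u v ∧ b ≤ ((Bz E u v k).card : ℝ)))
    (hr : ((Bz E u v r).card : ℝ) < a) : g * n ≤ (As E u v k r).card := by
  unfold As
  split_ifs with h
  · rw [Finset.card_univ, ← hn]; nlinarith
  · have h1 := (hk.resolve_left h).2
    have h2 := Finset.le_card_sdiff (Bz E u v r) (Bz E u v k)
    have h3 : ((Bz E u v k).card : ℝ) ≤ (Bz E u v k \ Bz E u v r).card + (Bz E u v r).card := by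
      have : (Bz E u v k).card ≤ (Bz E u v k \ Bz E u v r).card + (Bz E u v r).card := by omega
      exact_mod_cast this
    linarith

set_option maxHeartbeats 1000000 in
lemma Gs_bad {E : Finset (Finset V)} (h3 : U3 E) {u v : V} (huv : u ≠ v) {a b : ℝ} {k k' r w w' : V}
    (h : (k, k', r) ∈ Gs E u v a b) (hw : w ∈ As E u v k r) (hw' : w' ∈ As E u v k' r) :
    (k, k', r, w, w') ∈ Tset E u v := by
  rw [mem_Tset]
  intro hC
  simp only [Gs, Finset.mem_filter, Finset.mem_univ, true_and] at h
  obtain ⟨hk, hk', ⟨hr, -⟩, hkr, hk'r, hE⟩ := h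
  have hr := mem_Mb.1 hr
  unfold As at hw hw'
  by_cases h1 : k ∈ Nb E u v
  · have a1 := mem_Nb.1 h1
    have b1 : ¬ hh E u k r := fun hx => hkr (mem_Bz.2 ⟨a1, hx⟩)
    by_cases h2 : k' ∈ Nb E u v
    · have a2 := mem_Nb.1 h2
      have b2 : ¬ hh E u k' r := fun hx => hk'r (mem_Bz.2 ⟨a2, hx⟩)
      exact logic_NNR (clean_mono hC (by simp [Finset.insert_subset_iff])) h3 huv a1 a2 hr b1 b2 hE
    · have a2 := mem_Mb.1 (hk'.resolve_left h2).1
      rw [if_neg h2, Finset.mem_sdiff, mem_Bz, mem_Bz] at hw'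
      exact logic_NPR (clean_mono hC (by simp [Finset.insert_subset_iff])) h3 huv a1 hw'.1.1 a2 hr b1 hw'.1.2
        (fun hx => hw'.2 ⟨hw'.1.1, hx⟩) hE
  · have a1 := mem_Mb.1 (hk.resolve_left h1).1
    rw [if_neg h1, Finset.mem_sdiff, mem_Bz, mem_Bz] at hw
    by_cases h2 : k' ∈ Nb E u v
    · have a2 := mem_Nb.1 h2
      have b2 : ¬ hh E u k' r := fun hx => hk'r (mem_Bz.2 ⟨a2, hx⟩)
      exact logic_NPR (clean_mono hC (by simp [Finset.insert_subset_iff])) h3 huv a2 hw.1.1 a1 hr b2 hw.1.2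
        (fun hx => hw.2 ⟨hw.1.1, hx⟩) (hh_12.1 hE)
    · have a2 := mem_Mb.1 (hk'.resolve_left h2).1
      rw [if_neg h2, Finset.mem_sdiff, mem_Bz, mem_Bz] at hw'
      by_cases c1 : hh E u w k'
      · exact logic_PPR1 (clean_mono hC (by simp [Finset.insert_subset_iff])) h3 huv hw.1.1 a1 a2 hr hw.1.2 c1
          (fun hx => hw.2 ⟨hw.1.1, hx⟩) hE
      · by_cases c2 : hh E u w' k
        · exact logic_PPR1 (clean_mono hC (by simp [Finset.insert_subset_iff])) h3 huv hw'.1.1 a1 a2 hr c2 hw'.1.2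
            (fun hx => hw'.2 ⟨hw'.1.1, hx⟩) hE
        · exact logic_2K2 (clean_mono hC (by simp [Finset.insert_subset_iff])) h3 huv hw.1.1 hw'.1.1 a1 a2 hw.1.2
            c1 c2 hw'.1.2

lemma Gs_card {E : Finset (Finset V)} (h3 : U3 E) {u v : V} (huv : u ≠ v) {n g a b : ℝ}
    (hn : n = Fintype.card V) (hn0 : 0 ≤ n) (hg0 : 0 ≤ g) (hg1 : g ≤ 1) (hab : a + g * n ≤ b) :
    (g * n) ^ 2 * ((Gs E u v a b).card : ℝ) ≤ (Tset E u v).card := by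
  apply fib_ge _ _ (fun x => (x.1, x.2.1, x.2.2.1))
  rintro ⟨k, k', r⟩ hG
  have hG' := hG
  simp only [Gs, Finset.mem_filter, Finset.mem_univ, true_and] at hG'
  have c1 := As_card hn hn0 hg1 hab hG'.1 hG'.2.2.1.2
  have c2 := As_card hn hn0 hg1 hab hG'.2.1 hG'.2.2.1.2
  have hle : (As E u v k r ×ˢ As E u v k' r).card ≤
      ((Tset E u v).filter (fun x => (x.1, x.2.1, x.2.2.1) = (k, k', r))).card := by
    apply Finset.card_le_card_of_injOn (fun p => (k, k', r, p.1, p.2))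
    · rintro ⟨w, w'⟩ hp
      have hp := Finset.mem_product.1 (Finset.mem_coe.1 hp)
      simp only [Finset.mem_coe, Finset.mem_filter, and_true]
      exact Gs_bad h3 huv hG hp.1 hp.2
    · rintro ⟨w, w'⟩ _ ⟨x, x'⟩ _ h
      simpa using h
  rw [Finset.card_product] at hle
  have hle' : ((As E u v k r).card : ℝ) * (As E u v k' r).card ≤
      ((Tset E u v).filter (fun x => (x.1, x.2.1, x.2.2.1) = (k, k', r))).card := by exact_mod_cast hle
  refine le_trans ?_ hle'
  rw [sq]
  have : 0 ≤ g * n := by positivity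
  gcongr

lemma exc1 (n c : ℝ) (hn : n = Fintype.card V) (R : Finset V) (B : V → Finset V)
    (hB : ∀ r ∈ R, ((B r).card : ℝ) ≤ c) :
    (((Finset.univ : Finset (V × V × V)).filter (fun t => t.2.2 ∈ R ∧ t.1 ∈ B t.2.2)).card : ℝ)
      ≤ (n * c) * R.card := by
  have hn0 : 0 ≤ n := by rw [hn]; positivity
  apply fib_le _ _ (fun t => t.2.2)
  · intro t ht; exact (Finset.mem_filter.1 ht).2.1
  · intro r hr
    have : (((Finset.univ : Finset (V × V × V)).filter (fun t => t.2.2 ∈ R ∧ t.1 ∈ B t.2.2)).filter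
        (fun t => t.2.2 = r)).card ≤ ((Finset.univ : Finset V) ×ˢ B r).card := by
      apply Finset.card_le_card_of_injOn (fun t => (t.2.1, t.1))
      · rintro ⟨k, k', r'⟩ h
        simp only [Finset.mem_coe, Finset.mem_filter, Finset.mem_univ, true_and] at h
        obtain ⟨h, rfl⟩ := h
        simp [h.2]
      · rintro ⟨k, k', r'⟩ h ⟨l, l', s⟩ h' hh
        simp only [Finset.mem_coe, Finset.mem_filter, Finset.mem_univ, true_and] at h h'
        simp at hh ⊢
        obtain ⟨_, rfl⟩ := h
        obtain ⟨_, rfl⟩ := h'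
        tauto
    rw [Finset.card_product, Finset.card_univ] at this
    have h2 : ((((Finset.univ : Finset (V × V × V)).filter (fun t => t.2.2 ∈ R ∧ t.1 ∈ B t.2.2)).filter
        (fun t => t.2.2 = r)).card : ℝ) ≤ (Fintype.card V : ℝ) * (B r).card := by exact_mod_cast this
    refine h2.trans ?_
    rw [← hn]
    exact mul_le_mul_of_nonneg_left (hB r hr) hn0

lemma exc2 (n c : ℝ) (hn : n = Fintype.card V) (R : Finset V) (B : V → Finset V)
    (hB : ∀ r ∈ R, ((B r).card : ℝ) ≤ c) :
    (((Finset.univ : Finset (V × V × V)).filter (fun t => t.2.2 ∈ R ∧ t.2.1 ∈ B t.2.2)).card : ℝ)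
      ≤ (n * c) * R.card := by
  refine le_trans ?_ (exc1 n c hn R B hB)
  norm_cast
  apply Finset.card_le_card_of_injOn (fun t => (t.2.1, t.1, t.2.2))
  · rintro ⟨k, k', r⟩ h
    simpa using h
  · rintro ⟨k, k', r'⟩ h ⟨l, l', s⟩ h' hh
    simp at hh ⊢
    tauto

lemma ordK {E : Finset (Finset V)} {u v : V} {n a b : ℝ}
    (hn : n = Fintype.card V) (R Q : Finset V)
    (hR : R = (Mb E u v).filter (fun z => ((Bz E u v z).card : ℝ) < a))
    (hQ : Q = (Mb E u v).filter (fun z => a ≤ ((Bz E u v z).card : ℝ) ∧ ((Bz E u v z).card : ℝ) < b)) :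
    (ordc E (Finset.univ \ R) R : ℝ) ≤ (Gs E u v a b).card + 2 * (n * (Q.card + 2 + a) * R.card) := by
  set B : V → Finset V := fun r => Q ∪ {u, v} ∪ Bz E u v r with hB
  have hBc : ∀ r ∈ R, ((B r).card : ℝ) ≤ Q.card + 2 + a := by
    intro r hr
    rw [hR] at hr
    have h1 := (Finset.mem_filter.1 hr).2
    have h2 : (B r).card ≤ Q.card + 2 + (Bz E u v r).card := by
      refine (Finset.card_union_le _ _).trans ?_
      have := Finset.card_union_le Q {u, v}
      have := Finset.card_le_two (a := u) (b := v)
      omega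
    have h2' : ((B r).card : ℝ) ≤ Q.card + 2 + (Bz E u v r).card := by exact_mod_cast h2
    linarith
  have e1 := exc1 n _ hn R B hBc
  have e2 := exc2 n _ hn R B hBc
  have hsub : ordc E (Finset.univ \ R) R ≤ (Gs E u v a b).card +
      (((Finset.univ : Finset (V × V × V)).filter (fun t => t.2.2 ∈ R ∧ t.1 ∈ B t.2.2)).card +
      ((Finset.univ : Finset (V × V × V)).filter (fun t => t.2.2 ∈ R ∧ t.2.1 ∈ B t.2.2)).card) := by
    unfold ordc
    refine le_trans (Finset.card_le_card ?_) ((Finset.card_union_le _ _).trans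
      (Nat.add_le_add_left (Finset.card_union_le _ _) _))
    rintro ⟨k, k', r⟩ h
    simp only [Finset.mem_filter, Finset.mem_product, Finset.mem_sdiff, Finset.mem_univ, true_and] at h
    obtain ⟨⟨hk, hk', hr⟩, hE⟩ := h
    by_cases c1 : k ∈ B r
    · apply Finset.mem_union_right; apply Finset.mem_union_left
      simp only [Finset.mem_filter, Finset.mem_univ, true_and]
      exact ⟨hr, c1⟩
    by_cases c2 : k' ∈ B r
    · apply Finset.mem_union_right; apply Finset.mem_union_right
      simp only [Finset.mem_filter, Finset.mem_univ, true_and]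
      exact ⟨hr, c2⟩
    apply Finset.mem_union_left
    have key : ∀ z, z ∉ R → z ∉ B r →
        (z ∈ Nb E u v ∨ (z ∈ Mb E u v ∧ b ≤ ((Bz E u v z).card : ℝ))) ∧ z ∉ Bz E u v r := by
      intro z hz hzB
      simp only [hB, hQ, Finset.mem_union, Finset.mem_insert, Finset.mem_singleton, not_or,
        Finset.mem_filter] at hzB
      simp only [hR, Finset.mem_filter] at hz
      refine ⟨?_, hzB.2⟩
      by_cases hN : z ∈ Nb E u v
      · exact Or.inl hN
      · right
        have hM : z ∈ Mb E u v := mem_Mb.2 ⟨hzB.1.2.1, hzB.1.2.2, fun h => hN (mem_Nb.2 h)⟩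
        refine ⟨hM, ?_⟩
        by_contra hlt
        push Not at hlt
        rcases lt_or_ge ((Bz E u v z).card : ℝ) a with h | h
        · exact hz ⟨hM, h⟩
        · exact hzB.1.1 ⟨hM, h, hlt⟩
    simp only [Gs, Finset.mem_filter, Finset.mem_univ, true_and]
    have r1 : r ∈ Mb E u v ∧ ((Bz E u v r).card : ℝ) < a := by
      rw [hR] at hr; exact Finset.mem_filter.1 hr
    exact ⟨(key k hk c1).1, (key k' hk' c2).1, r1, (key k hk c1).2, (key k' hk' c2).2, hE⟩
  have hsub' : (ordc E (Finset.univ \ R) R : ℝ) ≤ (Gs E u v a b).card +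
      ((((Finset.univ : Finset (V × V × V)).filter (fun t => t.2.2 ∈ R ∧ t.1 ∈ B t.2.2)).card : ℝ) +
      ((Finset.univ : Finset (V × V × V)).filter (fun t => t.2.2 ∈ R ∧ t.2.1 ∈ B t.2.2)).card) := by
    exact_mod_cast hsub
  linarith
end branch
section branch2
variable {V : Type} [Fintype V] [DecidableEq V]

def Qd (E : Finset (Finset V)) (R K : Finset V) : Finset (V × V × V × V) :=
  (R ×ˢ R ×ˢ K ×ˢ K).filter (fun t => hh E t.1 t.2.1 t.2.2.1 ∧ hh E t.1 t.2.1 t.2.2.2)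

lemma cs_ord (E : Finset (Finset V)) (R K : Finset V) :
    (ordc E R K : ℝ) ^ 2 ≤ (R.card : ℝ) ^ 2 * (Qd E R K).card := by
  set d : V × V → ℝ := fun p => ((K.filter (fun k => hh E p.1 p.2 k)).card : ℝ) with hd
  have e1 : (ordc E R K : ℝ) = ∑ p ∈ R ×ˢ R, d p := by
    have : ordc E R K = ((R ×ˢ R).sigma (fun p => K.filter (fun k => hh E p.1 p.2 k))).card := by
      unfold ordc
      refine Finset.card_bij' (fun t _ => ⟨(t.1, t.2.1), t.2.2⟩) (fun s _ => (s.1.1, s.1.2, s.2)) ?_ ?_ ?_ ?_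
      · rintro ⟨a, b, c⟩ h; simp at h ⊢; tauto
      · rintro ⟨⟨a, b⟩, c⟩ h; simp at h ⊢; tauto
      · intros; rfl
      · intros; rfl
    rw [this, Finset.card_sigma]; push_cast; rfl
  have e2 : ((Qd E R K).card : ℝ) = ∑ p ∈ R ×ˢ R, (d p) ^ 2 := by
    have : (Qd E R K).card = ((R ×ˢ R).sigma (fun p => (K.filter (fun k => hh E p.1 p.2 k)) ×ˢ
        (K.filter (fun k => hh E p.1 p.2 k)))).card := by
      unfold Qd
      refine Finset.card_bij' (fun t _ => ⟨(t.1, t.2.1), t.2.2⟩) (fun s _ => (s.1.1, s.1.2, s.2)) ?_ ?_ ?_ ?_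
      · rintro ⟨a, b, c, e⟩ h; simp at h ⊢; tauto
      · rintro ⟨⟨a, b⟩, c, e⟩ h; simp at h ⊢; tauto
      · intros; rfl
      · intros; rfl
    rw [this, Finset.card_sigma]; push_cast
    apply Finset.sum_congr rfl
    intro p _
    rw [Finset.card_product, sq]; push_cast; rfl
  rw [e1, e2]
  have := sq_sum_le_card_mul_sum_sq (s := R ×ˢ R) (f := d)
  rw [Finset.card_product] at this
  push_cast at this
  rw [sq (R.card : ℝ)]
  exact this

lemma Qd_card {E : Finset (Finset V)} (h3 : U3 E) (u v : V) (R K : Finset V) (n : ℝ)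
    (hn : n = Fintype.card V) (hn0 : 0 < n) :
    ((Qd E R K).card : ℝ) ≤ n ^ 3 + 2 * (R.card * ordc E K R) + (Tset E u v).card / n := by
  classical
  set D : Finset (V × V × V × V) :=
    Finset.univ.filter (fun t => Bd E t.1 t.2.1 t.2.2.1 t.2.2.2) with hD
  have hDn : n * (D.card : ℝ) ≤ (Tset E u v).card := by
    have : (D ×ˢ (Finset.univ : Finset V)).card ≤ (Tset E u v).card := by
      apply Finset.card_le_card_of_injOn
        (fun t => (t.1.1, t.1.2.1, t.1.2.2.1, t.1.2.2.2, t.2))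
      · rintro ⟨⟨a, b, c, d⟩, e⟩ h
        simp only [hD, Finset.mem_coe, Finset.mem_product, Finset.mem_filter, Finset.mem_univ,
          true_and, and_true] at h
        simp only [Finset.mem_coe, mem_Tset]
        intro hC
        exact hC a (by simp) b (by simp) c (by simp) d (by simp) h
      · rintro ⟨⟨a, b, c, d⟩, e⟩ _ ⟨⟨a', b', c', d'⟩, e'⟩ _ h
        simp at h ⊢
        tauto
    rw [Finset.card_product, Finset.card_univ] at this
    rw [mul_comm, hn]; exact_mod_cast this
  have hD' : (D.card : ℝ) ≤ (Tset E u v).card / n := by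
    rw [le_div_iff₀ hn0]; linarith
  set S1 : Finset (V × V × V × V) := (Finset.univ : Finset (V × V × V)).image
    (fun t => (t.1, t.2.1, t.2.2, t.2.2)) with hS1
  have hS1c : (S1.card : ℝ) ≤ n ^ 3 := by
    have : S1.card ≤ Fintype.card V * (Fintype.card V * Fintype.card V) := by
      refine Finset.card_image_le.trans ?_
      rw [Finset.card_univ, Fintype.card_prod, Fintype.card_prod]
    have : (S1.card : ℝ) ≤ n * (n * n) := by rw [hn]; exact_mod_cast this
    linarith [this]
  set O := (K ×ˢ K ×ˢ R).filter (fun t => hh E t.1 t.2.1 t.2.2) with hO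
  set S2 : Finset (V × V × V × V) := (R ×ˢ O).image (fun t => (t.2.2.2, t.1, t.2.1, t.2.2.1)) with hS2
  set S3 : Finset (V × V × V × V) := (R ×ˢ O).image (fun t => (t.1, t.2.2.2, t.2.1, t.2.2.1)) with hS3
  have hS2c : S2.card ≤ R.card * ordc E K R := by
    refine Finset.card_image_le.trans ?_
    rw [Finset.card_product]; rfl
  have hS3c : S3.card ≤ R.card * ordc E K R := by
    refine Finset.card_image_le.trans ?_
    rw [Finset.card_product]; rfl
  have hsub : Qd E R K ⊆ S1 ∪ (S2 ∪ (S3 ∪ D)) := by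
    rintro ⟨r, r', k, k'⟩ h
    simp only [Qd, Finset.mem_filter, Finset.mem_product] at h
    obtain ⟨⟨hr, hr', hk, hk'⟩, h1, h2⟩ := h
    by_cases c0 : k = k'
    · apply Finset.mem_union_left
      rw [hS1, Finset.mem_image]
      exact ⟨(r, r', k), Finset.mem_univ _, by simp [c0]⟩
    apply Finset.mem_union_right
    by_cases c1 : hh E k k' r
    · apply Finset.mem_union_left
      rw [hS2, Finset.mem_image]
      exact ⟨(r', k, k', r), by simp [hO]; tauto, rfl⟩
    apply Finset.mem_union_right
    by_cases c2 : hh E k k' r'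
    · apply Finset.mem_union_left
      rw [hS3, Finset.mem_image]
      exact ⟨(r, k, k', r'), by simp [hO]; tauto, rfl⟩
    apply Finset.mem_union_right
    rw [hD, Finset.mem_filter]
    refine ⟨Finset.mem_univ _, ?_⟩
    have d1 := hh_dist h3 h1
    have d2 := hh_dist h3 h2
    refine ⟨⟨d1.1, d1.2.1, d2.2.1, d1.2.2, d2.2.2, c0⟩, ?_⟩
    have c1' : ¬ hh E r k k' := fun h => c1 (hh_23.1 (hh_12.1 h))
    have c2' : ¬ hh E r' k k' := fun h => c2 (hh_23.1 (hh_12.1 h))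
    exact Or.inl ⟨h1, h2, c1', c2'⟩
  have hc : (Qd E R K).card ≤ S1.card + (S2.card + (S3.card + D.card)) := by
    refine (Finset.card_le_card hsub).trans ((Finset.card_union_le _ _).trans ?_)
    have a1 := Finset.card_union_le S2 (S3 ∪ D)
    have a2 := Finset.card_union_le S3 D
    omega
  have hc' : ((Qd E R K).card : ℝ) ≤ S1.card + (S2.card + (S3.card + D.card)) := by exact_mod_cast hc
  have s2 : (S2.card : ℝ) ≤ R.card * ordc E K R := by exact_mod_cast hS2c
  have s3 : (S3.card : ℝ) ≤ R.card * ordc E K R := by exact_mod_cast hS3c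
  linarith

lemma num1 {x n y m o q a G T : ℝ} (hx : 0 < x) (hx1 : x ≤ 1 / 100) (hn : 1 ≤ n * x ^ 60)
    (hy : x ^ 8 * n ≤ y) (hm : x ^ 2 * n ≤ m) (hT : T ≤ x ^ 45 * n ^ 5)
    (hG : (x ^ 15 * n) ^ 2 * G ≤ T) (hq : q ≤ x ^ 7 * n) (ha : a ≤ 2 * x ^ 7 * n)
    (ho : o ≤ G + 2 * (n * (q + 2 + a) * y)) : o ≤ 9 * x ^ 3 * m ^ 2 * y := by
  have hn0 : 0 < n := by
    by_contra h
    have : n * x ^ 60 ≤ 0 := mul_nonpos_of_nonpos_of_nonneg (by linarith) (by positivity)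
    linarith
  have hy0 : 0 < y := lt_of_lt_of_le (by positivity) hy
  have hG' : G ≤ x ^ 15 * n ^ 3 := by
    have : (x ^ 15 * n) ^ 2 * G ≤ (x ^ 15 * n) ^ 2 * (x ^ 15 * n ^ 3) := by
      calc _ ≤ x ^ 45 * n ^ 5 := hG.trans hT
        _ = _ := by ring
    exact le_of_mul_le_mul_left this (by positivity)
  have hG2 : G ≤ x ^ 7 * n ^ 2 * y := by
    calc G ≤ x ^ 7 * n ^ 2 * (x ^ 8 * n) := by rw [show x ^ 7 * n ^ 2 * (x ^ 8 * n) = x ^ 15 * n ^ 3 by ring]; exact hG'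
      _ ≤ _ := by gcongr
  have h2 : 2 ≤ x ^ 7 * n := by
    have e : x ^ 60 = x ^ 7 * x ^ 53 := by ring
    have : x ^ 53 ≤ 1 / 2 := by
      calc x ^ 53 ≤ x ^ 1 := pow_le_pow_of_le_one hx.le (by linarith) (by norm_num)
        _ ≤ _ := by rw [pow_one]; linarith
    have h7 : 0 ≤ x ^ 7 * n := by positivity
    nlinarith
  have h3 : n * (q + 2 + a) * y ≤ n * (4 * x ^ 7 * n) * y := by
    gcongr; linarith
  have h4 : o ≤ 9 * x ^ 7 * n ^ 2 * y := by nlinarith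
  have h5 : (x ^ 2 * n) ^ 2 ≤ m ^ 2 := pow_le_pow_left₀ (by positivity) hm 2
  calc o ≤ 9 * x ^ 7 * n ^ 2 * y := h4
    _ = 9 * x ^ 3 * (x ^ 2 * n) ^ 2 * y := by ring
    _ ≤ _ := by gcongr

lemma num2 {x n y m o p T Q : ℝ} (hx : 0 < x) (hx1 : x ≤ 1 / 100) (hn : 1 ≤ n * x ^ 60)
    (hy : x ^ 8 * n ≤ y) (hm : x ^ 2 * n ≤ m) (hT : T ≤ x ^ 45 * n ^ 5)
    (ho : o ≤ 9 * x ^ 3 * m ^ 2 * y) (hQ : Q ≤ n ^ 3 + 2 * (y * o) + T / n)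
    (hp : p ^ 2 ≤ y ^ 2 * Q) : p ≤ 25 * x * y ^ 2 * m := by
  have hn0 : 0 < n := by
    by_contra h
    have : n * x ^ 60 ≤ 0 := mul_nonpos_of_nonpos_of_nonneg (by linarith) (by positivity)
    linarith
  have hy0 : 0 < y := lt_of_lt_of_le (by positivity) hy
  have hm0 : 0 < m := lt_of_lt_of_le (by positivity) hm
  have hTn : T / n ≤ x ^ 45 * n ^ 4 := by
    rw [div_le_iff₀ hn0]; calc T ≤ _ := hT
      _ = _ := by ring
  have hym : x ^ 20 * n ^ 4 ≤ y ^ 2 * m ^ 2 := by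
    calc x ^ 20 * n ^ 4 = (x ^ 8 * n) ^ 2 * (x ^ 2 * n) ^ 2 := by ring
      _ ≤ _ := by gcongr
  have h1 : n ^ 3 ≤ x ^ 40 * (y ^ 2 * m ^ 2) := by
    calc n ^ 3 = n ^ 3 * 1 := by ring
      _ ≤ n ^ 3 * (n * x ^ 60) := by gcongr
      _ = x ^ 40 * (x ^ 20 * n ^ 4) := by ring
      _ ≤ _ := by gcongr
  have h2 : T / n ≤ x ^ 25 * (y ^ 2 * m ^ 2) := by
    calc T / n ≤ x ^ 25 * (x ^ 20 * n ^ 4) := by rw [← mul_assoc, ← pow_add]; exact hTn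
      _ ≤ _ := by gcongr
  have h3 : y * o ≤ 9 * x ^ 3 * (y ^ 2 * m ^ 2) := by
    calc y * o ≤ y * (9 * x ^ 3 * m ^ 2 * y) := by gcongr
      _ = _ := by ring
  have x40 : x ^ 40 ≤ x ^ 2 := pow_le_pow_of_le_one hx.le (by linarith) (by norm_num)
  have x25 : x ^ 25 ≤ x ^ 2 := pow_le_pow_of_le_one hx.le (by linarith) (by norm_num)
  have x3 : x ^ 3 ≤ x ^ 2 := pow_le_pow_of_le_one hx.le (by linarith) (by norm_num)
  have hz : 0 ≤ y ^ 2 * m ^ 2 := by positivity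
  have hx2 : 0 ≤ x ^ 2 := by positivity
  have hQ2 : Q ≤ 20 * x ^ 2 * (y ^ 2 * m ^ 2) := by
    have b1 := mul_le_mul_of_nonneg_right x40 hz
    have b2 := mul_le_mul_of_nonneg_right x25 hz
    have b3 := mul_le_mul_of_nonneg_right x3 hz
    nlinarith
  apply le_of_sq_le_sq _ (by positivity)
  calc p ^ 2 ≤ y ^ 2 * Q := hp
    _ ≤ y ^ 2 * (20 * x ^ 2 * (y ^ 2 * m ^ 2)) := by gcongr
    _ ≤ y ^ 2 * (625 * x ^ 2 * (y ^ 2 * m ^ 2)) := by gcongr; norm_num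
    _ = _ := by ring

lemma branch {E : Finset (Finset V)} (h3 : U3 E) {u v : V} (huv : u ≠ v) (n x : ℝ)
    (hn : n = Fintype.card V) (hx : 0 < x) (hx1 : x ≤ 1 / 100) (hnx : 1 ≤ n * x ^ 60)
    (hN : x ^ 2 * n ≤ (Nb E u v).card)
    (hR : x ^ 8 * n ≤ ((Mb E u v).filter (fun z => ((Bz E u v z).card : ℝ) < x ^ 7 * n)).card)
    (hT : ((Tset E u v).card : ℝ) ≤ x ^ 45 * n ^ 5) :
    ∃ X Y : Finset V, SP E X Y (100 * x) ∧ 2 ≤ X.card ∧ 2 ≤ Y.card := by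
  have hn0 : 0 < n := by
    by_contra h
    have : n * x ^ 60 ≤ 0 := mul_nonpos_of_nonpos_of_nonneg (by linarith) (by positivity)
    linarith
  set s := ⌈1 / x ^ 7⌉₊ with hs
  have hs0 : 0 < s := Nat.ceil_pos.2 (by positivity)
  have hs1 : 1 / x ^ 7 ≤ s := Nat.le_ceil _
  have hs2 : (s : ℝ) < 1 / x ^ 7 + 1 := Nat.ceil_lt_add_one (by positivity)
  obtain ⟨i, hi, hpig⟩ := pig (Mb E u v) (fun z => ((Bz E u v z).card : ℝ)) n (x ^ 7 * n)
    (x ^ 15 * n) hn (by positivity) s hs0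
  set a := x ^ 7 * n + i * (x ^ 15 * n) with ha
  set b := x ^ 7 * n + (i + 1) * (x ^ 15 * n) with hb
  set R := (Mb E u v).filter (fun z => ((Bz E u v z).card : ℝ) < a) with hRd
  set Q := (Mb E u v).filter (fun z => a ≤ ((Bz E u v z).card : ℝ) ∧ ((Bz E u v z).card : ℝ) < b)
    with hQd
  set K := (Finset.univ : Finset V) \ R with hK
  have hy : x ^ 8 * n ≤ R.card := by
    refine hR.trans ?_
    norm_cast
    apply Finset.card_le_card
    apply Finset.monotone_filter_right
    intro z hz hlt
    refine lt_of_lt_of_le hlt ?_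
    rw [ha]
    have : 0 ≤ i * (x ^ 15 * n) := by positivity
    linarith
  have hm : x ^ 2 * n ≤ K.card := by
    refine hN.trans ?_
    norm_cast
    apply Finset.card_le_card
    intro z hz
    rw [hK, Finset.mem_sdiff]
    refine ⟨Finset.mem_univ _, fun h => ?_⟩
    exact (mem_Mb.1 (Finset.mem_filter.1 h).1).2.2 (mem_Nb.1 hz)
  have hG := Gs_card h3 huv (n := n) (g := x ^ 15) (a := a) (b := b) hn hn0.le (by positivity)
    (pow_le_one₀ hx.le (by linarith)) (by rw [ha, hb]; linarith)
  have hq : (Q.card : ℝ) ≤ x ^ 7 * n := by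
    have h1 : 1 / x ^ 7 * Q.card ≤ n := le_trans (by gcongr) hpig
    have h7 : 0 < x ^ 7 := by positivity
    have : x ^ 7 * (1 / x ^ 7 * Q.card) ≤ x ^ 7 * n := by gcongr
    rwa [← mul_assoc, mul_one_div_cancel h7.ne', one_mul] at this
  have haa : a ≤ 2 * x ^ 7 * n := by
    have hi' : (i : ℝ) ≤ s := by exact_mod_cast hi.le
    have h7 : 0 < x ^ 7 := by positivity
    have e : (1 / x ^ 7 + 1) * x ^ 15 = x ^ 8 + x ^ 15 := by field_simp; 
    have e1 : (i : ℝ) * x ^ 15 ≤ x ^ 8 + x ^ 15 := by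
      rw [← e]; gcongr; linarith
    have e2 : x ^ 15 ≤ x ^ 8 := pow_le_pow_of_le_one hx.le (by linarith) (by norm_num)
    have e3 : x ^ 8 ≤ x ^ 7 * (1 / 2) := by rw [pow_succ]; gcongr; linarith
    rw [ha]
    have : (i : ℝ) * x ^ 15 ≤ x ^ 7 := by linarith
    nlinarith
  have ho := ordK (E := E) (u := u) (v := v) (a := a) (b := b) hn R Q hRd hQd
  have hoK := num1 hx hx1 hnx hy hm hT hG hq haa ho
  have hQc := Qd_card h3 u v R K n hn hn0
  have hoR := num2 hx hx1 hnx hy hm hT hoK hQc (cs_ord E R K)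
  have key : (2 : ℝ) ≤ x ^ 8 * n := by
    have e : x ^ 60 = x ^ 8 * x ^ 52 := by ring
    have : x ^ 52 ≤ 1 / 2 := by
      calc x ^ 52 ≤ x ^ 1 := pow_le_pow_of_le_one hx.le (by linarith) (by norm_num)
        _ ≤ _ := by rw [pow_one]; linarith
    have h7 : 0 ≤ x ^ 8 * n := by positivity
    nlinarith
  have hR2 : 2 ≤ R.card := by
    have := key.trans hy
    exact_mod_cast this
  have hK2 : 2 ≤ K.card := by
    have : x ^ 8 * n ≤ x ^ 2 * n := by
      gcongr ?_ * n
      exact pow_le_pow_of_le_one hx.le (by linarith) (by norm_num)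
    have := (key.trans this).trans hm
    exact_mod_cast this
  refine ⟨K, R, ⟨Finset.sdiff_disjoint, ?_, ?_, ?_, ?_, ?_⟩, hK2, hR2⟩
  · rw [hK]; exact Finset.sdiff_union_of_subset (Finset.subset_univ _)
  · exact Finset.card_pos.1 (by omega)
  · exact Finset.card_pos.1 (by omega)
  · refine hoK.trans ?_
    gcongr ?_ * _ * _
    have : x ^ 3 ≤ x := pow_le_of_le_one hx.le (by linarith) (by norm_num)
    linarith
  · refine hoR.trans (le_of_eq ?_)
    ring
end branch2
section top
variable {V : Type} [Fintype V] [DecidableEq V]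

lemma Nb_co {E : Finset (Finset V)} {u v : V} (huv : u ≠ v) : Nb (co E) u v = Mb E u v := by
  ext w
  rw [mem_Nb, mem_Mb, hh_co]
  constructor
  · rintro ⟨⟨_, h1, h2⟩, h⟩; exact ⟨h1.symm, h2.symm, h⟩
  · rintro ⟨h1, h2, h⟩; exact ⟨⟨huv, h1.symm, h2.symm⟩, h⟩

lemma Mb_co {E : Finset (Finset V)} (h3 : U3 E) {u v : V} (huv : u ≠ v) :
    Mb (co E) u v = Nb E u v := by
  rw [← Nb_co huv, co_co h3]

lemma Bz_co {E : Finset (Finset V)} (h3 : U3 E) {u v w : V} (huv : u ≠ v) (hw : w ∈ Nb E u v) :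
    Bz (co E) u v w = Cz E u v w := by
  ext z
  have hw' := mem_Nb.1 hw
  have d := hh_dist h3 hw'
  unfold Bz Cz
  rw [Nb_co huv, Finset.mem_filter, Finset.mem_filter, hh_co]
  refine and_congr_right ?_
  intro hz
  have hz' := mem_Mb.1 hz
  have hne : z ≠ w := by rintro rfl; exact hz'.2.2 hw'
  rw [hh_23]
  constructor
  · intro h; exact h.2
  · intro h; exact ⟨⟨hz'.1.symm, d.2.1, hne⟩, h⟩

lemma Nb_self {E : Finset (Finset V)} (h3 : U3 E) (v : V) : Nb E v v = ∅ := by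
  ext w
  simp only [mem_Nb, Finset.notMem_empty, iff_false]
  intro h
  exact (hh_dist h3 h).1 rfl

lemma mid_case {E : Finset (Finset V)} (h3 : U3 E) (n x : ℝ)
    (hn : n = Fintype.card V) (hx : 0 < x) (hx1 : x ≤ 1 / 100) (hnx : 1 ≤ n * x ^ 60)
    (hcount : (inducedD2Count E : ℝ) < x ^ 60 * n ^ 4)
    (hMd : x ^ 4 * n ^ 2 ≤ ((Finset.univ : Finset (V × V)).filter (fun p => p.2 ≠ p.1 ∧
      x ^ 2 * n ≤ (Nb E p.1 p.2).card ∧ x ^ 2 * n ≤ (Nb (co E) p.1 p.2).card)).card) :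
    ∃ X Y : Finset V,
          Disjoint X Y ∧ X ∪ Y = Finset.univ ∧
          X.Nonempty ∧ Y.Nonempty ∧
          EpsHomogeneous E X Y (100 * x) := by
  have hn0 : 0 < n := by
    by_contra h
    have : n * x ^ 60 ≤ 0 := mul_nonpos_of_nonpos_of_nonneg (by linarith) (by positivity)
    linarith
  set Md := ((Finset.univ : Finset (V × V)).filter (fun p => p.2 ≠ p.1 ∧
      x ^ 2 * n ≤ (Nb E p.1 p.2).card ∧ x ^ 2 * n ≤ (Nb (co E) p.1 p.2).card)) with hMdd
  obtain ⟨⟨u, v⟩, hp, hT⟩ : ∃ p ∈ Md, ((Tset E p.1 p.2).card : ℝ) ≤ x ^ 45 * n ^ 5 := by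
    by_contra hcon
    push Not at hcon
    have := choose_pair h3 Md (x ^ 45 * n ^ 5) (fun p hp => (hcon p hp).le)
    rw [← hn] at this
    have a1 : x ^ 45 * n ^ 5 * (x ^ 4 * n ^ 2) ≤ x ^ 45 * n ^ 5 * Md.card := by gcongr
    have a2 : 614656 * (inducedD2Count E : ℝ) * n ^ 3 < 614656 * (x ^ 60 * n ^ 4) * n ^ 3 := by gcongr
    have a3 : x ^ 49 * n ^ 7 < (614656 * x ^ 11) * (x ^ 49 * n ^ 7) := by
      calc x ^ 49 * n ^ 7 = x ^ 45 * n ^ 5 * (x ^ 4 * n ^ 2) := by ring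
        _ < 614656 * (x ^ 60 * n ^ 4) * n ^ 3 := lt_of_le_of_lt (a1.trans this) a2
        _ = _ := by ring
    have a4 : x ^ 11 ≤ (1 / 100) ^ 11 := pow_le_pow_left₀ hx.le hx1 11
    have a5 : 614656 * x ^ 11 ≤ 1 := by norm_num at a4; linarith
    have a6 : 0 < x ^ 49 * n ^ 7 := by positivity
    nlinarith
  rw [hMdd, Finset.mem_filter] at hp
  obtain ⟨-, hne, hN, hNc⟩ := hp
  simp only at hne hN hNc hT
  have huv : u ≠ v := hne.symm
  have hM : x ^ 2 * n ≤ (Mb E u v).card := by rw [← Nb_co huv]; exact hNc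
  have x87 : x ^ 8 ≤ x ^ 7 * (1 / 100) := by rw [pow_succ]; gcongr
  have x82 : x ^ 8 ≤ x ^ 2 * (1 / 100) := by
    have : x ^ 7 ≤ x ^ 2 := pow_le_pow_of_le_one hx.le (by linarith) (by norm_num)
    linarith
  have x7 : 0 < x ^ 7 := by positivity
  have x2 : 0 < x ^ 2 := by positivity
  have hd := dich h3 huv n (x ^ 7) (x ^ 8) (x ^ 45) hn hn0 (by positivity) (by linarith)
    (by
      refine lt_of_lt_of_le ?_ hM
      have : 2 * x ^ 8 < x ^ 2 := by linarith
      exact mul_lt_mul_of_pos_right this hn0) hT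
    (by
      have b1 : x ^ 7 / 2 ≤ x ^ 7 - 2 * x ^ 8 := by linarith
      have b2 : (x ^ 7 / 2) ^ 4 ≤ (x ^ 7 - 2 * x ^ 8) ^ 4 := pow_le_pow_left₀ (by positivity) b1 4
      have b3 : x ^ 8 * (x ^ 7 / 2) ^ 4 ≤ x ^ 8 * (x ^ 7 - 2 * x ^ 8) ^ 4 := by gcongr
      refine lt_of_lt_of_le ?_ b3
      have b4 : x ^ 9 ≤ x := pow_le_of_le_one hx.le (by linarith) (by norm_num)
      have b5 : x ^ 9 < 1 / 16 := by linarith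
      calc x ^ 45 = x ^ 36 * x ^ 9 := by ring
        _ < x ^ 36 * (1 / 16) := by gcongr
        _ = _ := by ring)
  rcases hd with hd | hd
  · obtain ⟨X, Y, hSP, -, -⟩ := branch h3 huv n x hn hx hx1 hnx hN hd hT
    exact SP_fin h3 (by positivity) hSP
  · have e : (Mb (co E) u v).filter (fun z => ((Bz (co E) u v z).card : ℝ) < x ^ 7 * n) =
        (Nb E u v).filter (fun w => ((Cz E u v w).card : ℝ) < x ^ 7 * n) := by
      rw [Mb_co h3 huv]
      apply Finset.filter_congr
      intro w hw
      rw [Bz_co h3 huv hw]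
    obtain ⟨X, Y, hSP, h2, h2'⟩ := branch (co_U3 E) huv n x hn hx hx1 hnx hNc
      (by rw [e]; exact hd) (by rw [Tset_co]; exact hT)
    exact SP_co_fin (by positivity) hSP h2 h2'

lemma sumb (f : V → ℝ) (A B C : Finset V) (a b c : ℝ)
    (h : ∀ w, f w ≤ (if w ∈ A then a else 0) + (if w ∈ B then b else 0) + (if w ∈ C then c else 0)) :
    ∑ w, f w ≤ A.card * a + B.card * b + C.card * c := by
  refine (Finset.sum_le_sum (fun w _ => h w)).trans (le_of_eq ?_)
  simp [Finset.sum_add_distrib]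

lemma AB {E : Finset (Finset V)} (v : V) (A B : Finset V) (n c : ℝ) (hn : n = Fintype.card V)
    (hA : ∀ w ∈ A, w ≠ v ∧ ((Nb (co E) v w).card : ℝ) ≤ c)
    (hB : ∀ w ∈ B, w ≠ v ∧ ((Nb E v w).card : ℝ) ≤ c) :
    (A.card : ℝ) * B.card ≤ c * B.card + c * A.card + n := by
  set S1 := (A ×ˢ B).filter (fun p => hh E v p.2 p.1) with hS1
  set S2 := (A ×ˢ B).filter (fun p => hh (co E) v p.1 p.2) with hS2
  set S3 := (Finset.univ : Finset V).image (fun a => (a, a)) with hS3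
  have c1 : (S1.card : ℝ) ≤ c * B.card := by
    apply fib_le _ _ (fun p => p.2)
    · intro p hp
      exact (Finset.mem_product.1 (Finset.mem_filter.1 hp).1).2
    · intro b hb
      refine le_trans ?_ (hB b hb).2
      norm_cast
      apply Finset.card_le_card_of_injOn (fun p => p.1)
      · rintro ⟨p, q⟩ h
        simp only [hS1, Finset.mem_coe, Finset.mem_filter] at h
        obtain ⟨h, rfl⟩ := h
        exact mem_Nb.2 h.2
      · rintro ⟨p, q⟩ h ⟨p', q'⟩ h' e
        simp only [Finset.mem_coe, Finset.mem_filter] at h h' e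
        rw [Prod.mk.injEq]; exact ⟨e, h.2.trans h'.2.symm⟩
  have c2 : (S2.card : ℝ) ≤ c * A.card := by
    apply fib_le _ _ (fun p => p.1)
    · intro p hp
      exact (Finset.mem_product.1 (Finset.mem_filter.1 hp).1).1
    · intro b hb
      refine le_trans ?_ (hA b hb).2
      norm_cast
      apply Finset.card_le_card_of_injOn (fun p => p.2)
      · rintro ⟨p, q⟩ h
        simp only [hS2, Finset.mem_coe, Finset.mem_filter] at h
        obtain ⟨h, rfl⟩ := h
        exact mem_Nb.2 h.2
      · rintro ⟨p, q⟩ h ⟨p', q'⟩ h' e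
        simp only [Finset.mem_coe, Finset.mem_filter] at h h' e
        rw [Prod.mk.injEq]; exact ⟨h.2.trans h'.2.symm, e⟩
  have c3 : (S3.card : ℝ) ≤ n := by
    rw [hn]; exact_mod_cast Finset.card_image_le
  have hsub : A ×ˢ B ⊆ S1 ∪ (S2 ∪ S3) := by
    rintro ⟨a, b⟩ h
    have h' := Finset.mem_product.1 h
    have ha := (hA a h'.1).1
    have hb := (hB b h'.2).1
    by_cases e : a = b
    · apply Finset.mem_union_right; apply Finset.mem_union_right
      rw [hS3, Finset.mem_image]; exact ⟨a, Finset.mem_univ _, by rw [e]⟩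
    by_cases e1 : hh E v b a
    · apply Finset.mem_union_left
      exact Finset.mem_filter.2 ⟨h, e1⟩
    · apply Finset.mem_union_right; apply Finset.mem_union_left
      refine Finset.mem_filter.2 ⟨h, hh_co.2 ⟨⟨ha.symm, hb.symm, e⟩, ?_⟩⟩
      rwa [hh_23]
  have hc := Finset.card_le_card hsub
  rw [Finset.card_product] at hc
  have hc2 : A.card * B.card ≤ S1.card + (S2.card + S3.card) :=
    hc.trans ((Finset.card_union_le _ _).trans (Nat.add_le_add_left (Finset.card_union_le _ _) _))
  have hc3 : (A.card : ℝ) * B.card ≤ S1.card + (S2.card + S3.card) := by exact_mod_cast hc2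
  linarith

lemma degs {E : Finset (Finset V)} (h3 : U3 E) (v : V) (n x : ℝ)
    (hn : n = Fintype.card V) (hx : 0 < x) (hx1 : x ≤ 1 / 100) (hnx : 1 ≤ n * x ^ 60)
    (hm : (((Finset.univ : Finset V).filter (fun w => w ≠ v ∧
      x ^ 2 * n ≤ (Nb E v w).card ∧ x ^ 2 * n ≤ (Nb (co E) v w).card)).card : ℝ) ≤ x ^ 2 * n)
    (hdeg : 25 / 2 * x * n ^ 2 < ∑ w, ((Nb E v w).card : ℝ)) :
    12 * x * n ≤ ((Finset.univ : Finset V).filter (fun w => w ≠ v ∧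
      ((Nb (co E) v w).card : ℝ) < x ^ 2 * n)).card ∧
    ∑ w, ((Nb (co E) v w).card : ℝ) ≤ x * n ^ 2 := by
  have hn0 : 0 < n := by
    by_contra h
    have : n * x ^ 60 ≤ 0 := mul_nonpos_of_nonpos_of_nonneg (by linarith) (by positivity)
    linarith
  set A := (Finset.univ : Finset V).filter (fun w => w ≠ v ∧
      ((Nb (co E) v w).card : ℝ) < x ^ 2 * n) with hA
  set B := (Finset.univ : Finset V).filter (fun w => w ≠ v ∧
      ((Nb E v w).card : ℝ) < x ^ 2 * n) with hB
  set C := (Finset.univ : Finset V).filter (fun w => w ≠ v ∧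
      x ^ 2 * n ≤ (Nb E v w).card ∧ x ^ 2 * n ≤ (Nb (co E) v w).card) with hC
  have hle : ∀ S : Finset V, (S.card : ℝ) ≤ n := by
    intro S; rw [hn]; exact_mod_cast Finset.card_le_univ S
  have hc0 : 0 ≤ x ^ 2 * n := by positivity
  have hAB := AB (E := E) v A B n (x ^ 2 * n) hn
    (fun w hw => ⟨(Finset.mem_filter.1 hw).2.1, (Finset.mem_filter.1 hw).2.2.le⟩)
    (fun w hw => ⟨(Finset.mem_filter.1 hw).2.1, (Finset.mem_filter.1 hw).2.2.le⟩)
  have s1 := sumb (fun w => ((Nb E v w).card : ℝ)) A B C n (x ^ 2 * n) n (by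
    intro w
    have i1 : (0 : ℝ) ≤ if w ∈ A then n else 0 := by split_ifs <;> linarith
    have i2 : (0 : ℝ) ≤ if w ∈ B then x ^ 2 * n else 0 := by split_ifs <;> linarith
    have i3 : (0 : ℝ) ≤ if w ∈ C then n else 0 := by split_ifs <;> linarith
    by_cases hv : w = v
    · simp only [hv, Nb_self h3, Finset.card_empty, Nat.cast_zero]
      rw [hv] at i1 i2 i3
      linarith
    by_cases h1 : ((Nb E v w).card : ℝ) < x ^ 2 * n
    · have : w ∈ B := by rw [hB, Finset.mem_filter]; exact ⟨Finset.mem_univ _, hv, h1⟩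
      rw [if_pos this]; linarith
    have := hle (Nb E v w)
    by_cases h2 : ((Nb (co E) v w).card : ℝ) < x ^ 2 * n
    · have : w ∈ A := by rw [hA, Finset.mem_filter]; exact ⟨Finset.mem_univ _, hv, h2⟩
      rw [if_pos this]; linarith
    · have : w ∈ C := by
        rw [hC, Finset.mem_filter]; exact ⟨Finset.mem_univ _, hv, not_lt.1 h1, not_lt.1 h2⟩
      rw [if_pos this]; linarith)
  have s2 := sumb (fun w => ((Nb (co E) v w).card : ℝ)) A B C (x ^ 2 * n) n n (by
    intro w
    have i1 : (0 : ℝ) ≤ if w ∈ A then x ^ 2 * n else 0 := by split_ifs <;> linarith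
    have i2 : (0 : ℝ) ≤ if w ∈ B then n else 0 := by split_ifs <;> linarith
    have i3 : (0 : ℝ) ≤ if w ∈ C then n else 0 := by split_ifs <;> linarith
    by_cases hv : w = v
    · simp only [hv, Nb_self (co_U3 E), Finset.card_empty, Nat.cast_zero]
      rw [hv] at i1 i2 i3
      linarith
    by_cases h2 : ((Nb (co E) v w).card : ℝ) < x ^ 2 * n
    · have : w ∈ A := by rw [hA, Finset.mem_filter]; exact ⟨Finset.mem_univ _, hv, h2⟩
      rw [if_pos this]; linarith
    have := hle (Nb (co E) v w)
    by_cases h1 : ((Nb E v w).card : ℝ) < x ^ 2 * n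
    · have : w ∈ B := by rw [hB, Finset.mem_filter]; exact ⟨Finset.mem_univ _, hv, h1⟩
      rw [if_pos this]; linarith
    · have : w ∈ C := by
        rw [hC, Finset.mem_filter]; exact ⟨Finset.mem_univ _, hv, not_lt.1 h1, not_lt.1 h2⟩
      rw [if_pos this]; linarith)
  have hA1 := hle A
  have hB1 := hle B
  have xx : x ^ 2 ≤ x * (1 / 100) := by rw [sq]; gcongr
  have bB : (B.card : ℝ) * (x ^ 2 * n) ≤ n * (x ^ 2 * n) := by gcongr
  have bA : (A.card : ℝ) * (x ^ 2 * n) ≤ n * (x ^ 2 * n) := by gcongr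
  have bC : (C.card : ℝ) * n ≤ x ^ 2 * n * n := by gcongr
  have xn2 : x ^ 2 * n ^ 2 ≤ x * (1 / 100) * n ^ 2 := by gcongr
  have xpos : 0 < x * n ^ 2 := by positivity
  have r1 : 12 * x * n ≤ A.card := by
    have : (12 * x * n) * n ≤ A.card * n := by nlinarith
    exact le_of_mul_le_mul_right this hn0
  refine ⟨r1, ?_⟩
  have hnn : n ≤ x ^ 2 * n ^ 2 := by
    have e : x ^ 60 ≤ x ^ 2 := pow_le_pow_of_le_one hx.le (by linarith) (by norm_num)
    have e2 : 1 ≤ n * x ^ 2 := hnx.trans (by gcongr)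
    nlinarith
  have r2 : (A.card : ℝ) * B.card ≤ 3 * (x ^ 2 * n ^ 2) := by nlinarith
  have r3 : (B.card : ℝ) ≤ x * n / 4 := by
    have h1 : (12 * x * n) * B.card ≤ A.card * B.card := by gcongr
    have h2 : (12 * x * n) * B.card ≤ (12 * x * n) * (x * n / 4) := by
      calc _ ≤ 3 * (x ^ 2 * n ^ 2) := h1.trans r2
        _ = _ := by ring
    exact le_of_mul_le_mul_left h2 (by positivity)
  have r4 : (B.card : ℝ) * n ≤ x * n / 4 * n := by gcongr
  nlinarith

lemma ord_single (F : Finset (Finset V)) (Y : Finset V) (v : V) :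
    (ordc F Y {v} : ℝ) ≤ ∑ w, ((Nb F v w).card : ℝ) := by
  have : ordc F Y {v} ≤ ((Finset.univ : Finset V).sigma (fun w => Nb F v w)).card := by
    unfold ordc
    apply Finset.card_le_card_of_injOn (fun t => ⟨t.1, t.2.1⟩)
    · rintro ⟨a, b, c⟩ h
      simp only [Finset.mem_coe, Finset.mem_filter, Finset.mem_product, Finset.mem_singleton] at h
      obtain ⟨⟨_, _, rfl⟩, h⟩ := h
      simp only [Finset.mem_coe, Finset.mem_sigma, Finset.mem_univ, true_and, mem_Nb]
      exact hh_12.1 (hh_23.1 h)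
    · rintro ⟨a, b, c⟩ h ⟨a', b', c'⟩ h' e
      simp only [Finset.mem_coe, Finset.mem_filter, Finset.mem_product, Finset.mem_singleton] at h h'
      simp at e ⊢
      exact ⟨e.1, e.2, h.1.2.2.trans h'.1.2.2.symm⟩
  rw [Finset.card_sigma] at this
  exact_mod_cast this

lemma ord_pair (F : Finset (Finset V)) (Y : Finset V) (v w : V) :
    ordc F Y {v, w} ≤ ordc F Y {v} + ordc F Y {w} := by
  unfold ordc
  refine le_trans (Finset.card_le_card ?_) (Finset.card_union_le _ _)
  rintro ⟨a, b, c⟩ h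
  simp at h ⊢
  tauto

lemma ord_pair' {F : Finset (Finset V)} (h3 : U3 F) (Y : Finset V) (v w : V) :
    ordc F {v, w} Y ≤ 2 * (Nb F v w).card := by
  unfold ordc
  have : (({v, w} : Finset V) ×ˢ ({v, w} : Finset V) ×ˢ Y).filter (fun t => hh F t.1 t.2.1 t.2.2) ⊆
      (Nb F v w).image (fun y => (v, w, y)) ∪ (Nb F v w).image (fun y => (w, v, y)) := by
    rintro ⟨a, b, c⟩ h
    simp only [Finset.mem_filter, Finset.mem_product, Finset.mem_insert, Finset.mem_singleton] at h
    obtain ⟨⟨h1, h2, _⟩, h⟩ := h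
    have d := (hh_dist h3 h).1
    rw [Finset.mem_union, Finset.mem_image, Finset.mem_image]
    rcases h1 with rfl | rfl <;> rcases h2 with rfl | rfl
    · exact absurd rfl d
    · exact Or.inl ⟨c, mem_Nb.2 h, rfl⟩
    · exact Or.inr ⟨c, mem_Nb.2 (hh_12.1 h), rfl⟩
    · exact absurd rfl d
  refine (Finset.card_le_card this).trans ((Finset.card_union_le _ _).trans ?_)
  have a1 := Finset.card_image_le (s := Nb F v w) (f := fun y => (v, w, y))
  have a2 := Finset.card_image_le (s := Nb F v w) (f := fun y => (w, v, y))
  omega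

lemma main_x {E : Finset (Finset V)} (h3 : U3 E) (n x : ℝ)
    (hn : n = Fintype.card V) (hx : 0 < x) (hx1 : x ≤ 1 / 100) (hnx : 1 ≤ n * x ^ 60)
    (hcount : (inducedD2Count E : ℝ) < x ^ 60 * n ^ 4) :
    ∃ X Y : Finset V,
          Disjoint X Y ∧ X ∪ Y = Finset.univ ∧
          X.Nonempty ∧ Y.Nonempty ∧
          EpsHomogeneous E X Y (100 * x) := by
  have hn0 : 0 < n := by
    by_contra h
    have : n * x ^ 60 ≤ 0 := mul_nonpos_of_nonpos_of_nonneg (by linarith) (by positivity)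
    linarith
  have hn100 : 100 ≤ n := by
    have e : x ^ 60 ≤ x := pow_le_of_le_one hx.le (by linarith) (by norm_num)
    have e2 : n * x ^ 60 ≤ n * (1 / 100) := by gcongr; linarith
    linarith
  by_cases hMd : x ^ 4 * n ^ 2 ≤ ((Finset.univ : Finset (V × V)).filter (fun p => p.2 ≠ p.1 ∧
      x ^ 2 * n ≤ (Nb E p.1 p.2).card ∧ x ^ 2 * n ≤ (Nb (co E) p.1 p.2).card)).card
  · exact mid_case h3 n x hn hx hx1 hnx hcount hMd
  push Not at hMd
  by_cases hdeg : ∃ v, ∑ w, ((Nb E v w).card : ℝ) ≤ 25 / 2 * x * n ^ 2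
  · obtain ⟨v, hv⟩ := hdeg
    have hY : (((Finset.univ : Finset V) \ {v}).card : ℝ) = n - 1 := by
      have := Finset.card_sdiff_add_card_eq_card (Finset.subset_univ ({v} : Finset V))
      rw [Finset.card_singleton, Finset.card_univ] at this
      rw [hn, ← this]; push_cast; ring
    apply SP_fin h3 (X := {v}) (Y := Finset.univ \ {v}) (by positivity)
    refine ⟨Finset.disjoint_sdiff, Finset.union_sdiff_of_subset (Finset.subset_univ _),
      Finset.singleton_nonempty _, ?_, ?_, ?_⟩
    · apply Finset.card_pos.1
      have : (0 : ℝ) < ((Finset.univ : Finset V) \ {v}).card := by rw [hY]; linarith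
      exact_mod_cast this
    · have : ordc E {v} (Finset.univ \ {v}) = 0 := by
        unfold ordc
        rw [Finset.card_eq_zero, Finset.filter_eq_empty_iff]
        rintro ⟨a, b, c⟩ h hE
        simp only [Finset.mem_product, Finset.mem_singleton] at h
        exact (hh_dist h3 hE).1 (h.1.trans h.2.1.symm)
      rw [this]; push_cast; positivity
    · refine (ord_single E _ v).trans (hv.trans ?_)
      rw [hY, Finset.card_singleton]
      have : n ^ 2 ≤ 2 * (n - 1) ^ 2 := by nlinarith
      push_cast
      nlinarith
  push Not at hdeg
  -- few mid pairs and large degrees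
  set mid : V → Finset V := fun v => (Finset.univ : Finset V).filter (fun w => w ≠ v ∧
      x ^ 2 * n ≤ (Nb E v w).card ∧ x ^ 2 * n ≤ (Nb (co E) v w).card) with hmid
  set W := (Finset.univ : Finset V).filter (fun v => x ^ 2 * n < (mid v).card) with hW
  have hWc : (W.card : ℝ) < x ^ 2 * n := by
    have := fib_ge ((Finset.univ : Finset (V × V)).filter (fun p => p.2 ≠ p.1 ∧
      x ^ 2 * n ≤ (Nb E p.1 p.2).card ∧ x ^ 2 * n ≤ (Nb (co E) p.1 p.2).card)) W (fun p => p.1)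
      (x ^ 2 * n) (by
        intro v hv
        refine (Finset.mem_filter.1 hv).2.le.trans ?_
        norm_cast
        apply Finset.card_le_card_of_injOn (fun w => (v, w))
        · intro w hw
          have hw' := (Finset.mem_filter.1 (Finset.mem_coe.1 hw)).2
          simp only [Finset.mem_coe, Finset.mem_filter, Finset.mem_univ, true_and, and_true]
          exact hw'
        · intro w _ w' _ e
          simpa using e)
    have h2 : x ^ 2 * n * W.card < x ^ 2 * n * (x ^ 2 * n) := by
      calc _ ≤ _ := this
        _ < x ^ 4 * n ^ 2 := hMd
        _ = _ := by ring
    exact lt_of_mul_lt_mul_left h2 (by positivity)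
  have xx : x ^ 2 ≤ x * (1 / 100) := by rw [sq]; gcongr
  have pick : ∀ S : Finset V, x ^ 2 * n ≤ S.card → ∃ v ∈ S, v ∉ W := by
    intro S hS
    by_contra hcon
    push Not at hcon
    have : S.card ≤ W.card := Finset.card_le_card hcon
    have : (S.card : ℝ) ≤ W.card := by exact_mod_cast this
    linarith
  have notW : ∀ v, v ∉ W → ((mid v).card : ℝ) ≤ x ^ 2 * n := by
    intro v hv
    by_contra h
    exact hv (Finset.mem_filter.2 ⟨Finset.mem_univ _, not_le.1 h⟩)
  obtain ⟨v, -, hvW⟩ := pick Finset.univ (by rw [Finset.card_univ, ← hn]; nlinarith)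
  obtain ⟨hA, hcv⟩ := degs h3 v n x hn hx hx1 hnx (notW v hvW) (hdeg v)
  obtain ⟨w, hwA, hwW⟩ := pick _ (le_trans (by nlinarith) hA)
  obtain ⟨-, hcw⟩ := degs h3 w n x hn hx hx1 hnx (notW w hwW) (hdeg w)
  obtain ⟨-, hwv, hvw⟩ := Finset.mem_filter.1 hwA
  have hX : ({v, w} : Finset V).card = 2 := Finset.card_pair hwv.symm
  have hY : (((Finset.univ : Finset V) \ {v, w}).card : ℝ) = n - 2 := by
    have := Finset.card_sdiff_add_card_eq_card (Finset.subset_univ ({v, w} : Finset V))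
    rw [hX, Finset.card_univ] at this
    rw [hn, ← this]; push_cast; ring
  have hY2 : 2 ≤ ((Finset.univ : Finset V) \ {v, w}).card := by
    have : (2 : ℝ) ≤ ((Finset.univ : Finset V) \ {v, w}).card := by rw [hY]; linarith
    exact_mod_cast this
  apply SP_co_fin (X := {v, w}) (Y := Finset.univ \ {v, w}) (by positivity) _ hX.ge hY2
  refine ⟨Finset.disjoint_sdiff, Finset.union_sdiff_of_subset (Finset.subset_univ _),
      ⟨v, by simp⟩, Finset.card_pos.1 (by omega), ?_, ?_⟩
  · have h1 : (ordc (co E) {v, w} (Finset.univ \ {v, w}) : ℝ) ≤ 2 * (Nb (co E) v w).card := by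
      exact_mod_cast ord_pair' (co_U3 E) (Finset.univ \ {v, w}) v w
    rw [hX, hY]
    push_cast
    nlinarith [mul_pos hx hn0, mul_le_mul_of_nonneg_right xx hn0.le]
  · have h1 : (ordc (co E) (Finset.univ \ {v, w}) {v, w} : ℝ) ≤
        ordc (co E) (Finset.univ \ {v, w}) {v} + ordc (co E) (Finset.univ \ {v, w}) {w} := by
      exact_mod_cast ord_pair (co E) (Finset.univ \ {v, w}) v w
    have h2 := ord_single (co E) (Finset.univ \ {v, w}) v
    have h4 := ord_single (co E) (Finset.univ \ {v, w}) w
    rw [hX, hY]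
    have h5 : n ^ 2 ≤ 2 * (n - 2) ^ 2 := by nlinarith
    have h6 : x * n ^ 2 ≤ x * (2 * (n - 2) ^ 2) := by gcongr
    have h7 : 0 ≤ x * (n - 2) ^ 2 := by positivity
    push_cast
    nlinarith
end top
lemma final_num (C ε n d : ℝ) (hC : C = 100 ^ 60) (hC60 : 60 ≤ C) (h0 : 0 < ε) (h1 : ε < 1)
    (hn : n ≥ C * ε ^ (-C)) (hd : d < (ε ^ C / C) * n ^ 4) :
    1 ≤ n * (ε / 100) ^ 60 ∧ d < (ε / 100) ^ 60 * n ^ 4 := by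
  have hCpos : 0 < C := by linarith
  have e1 : ε ^ C ≤ ε ^ (60 : ℕ) := by
    rw [← Real.rpow_natCast]
    exact Real.rpow_le_rpow_of_exponent_ge h0 h1.le (by push_cast; exact hC60)
  have hp : 0 < ε ^ C := Real.rpow_pos_of_pos h0 C
  have e2 : (ε / 100) ^ 60 = ε ^ 60 / C := by rw [hC, div_pow]
  rw [e2]
  constructor
  · rw [Real.rpow_neg h0.le] at hn
    have : C * (ε ^ C)⁻¹ * (ε ^ 60 / C) ≤ n * (ε ^ 60 / C) := by gcongr
    refine le_trans ?_ this
    have e3 : C * (ε ^ C)⁻¹ * (ε ^ 60 / C) = ε ^ 60 / ε ^ C := by field_simp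
    rw [e3, le_div_iff₀ hp]
    linarith
  · refine lt_of_lt_of_le hd ?_
    gcongr

end D2

/-- With polynomial dependencies: a 3-uniform hypergraph with few induced copies of `D₂`
admits a partition of its vertex set into two nonempty parts forming an `ε`-homogeneous
pair. -/
theorem main_lemma_testing :
    ∃ C : ℝ, C > 0 ∧ ∀ ε : ℝ, 0 < ε → ε < 1 →
      ∀ (V : Type) [Fintype V] [DecidableEq V] (E : Finset (Finset V)),
        (∀ e ∈ E, e.card = 3) →
        (Fintype.card V : ℝ) ≥ C * ε ^ (-C) →
        (inducedD2Count E : ℝ) < (ε ^ C / C) * (Fintype.card V : ℝ) ^ 4 →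
        ∃ X Y : Finset V,
          Disjoint X Y ∧ X ∪ Y = Finset.univ ∧
          X.Nonempty ∧ Y.Nonempty ∧
          EpsHomogeneous E X Y ε := by
  refine ⟨(100 : ℝ) ^ 60, by positivity, ?_⟩
  obtain ⟨C, hC⟩ : ∃ C : ℝ, C = (100 : ℝ) ^ 60 := ⟨_, rfl⟩
  have hC60 : 60 ≤ C := by rw [hC]; norm_num
  rw [← hC]
  intro ε h0 h1 V _ _ E h3 hn hd
  obtain ⟨a, b⟩ := D2.final_num C ε _ _ hC hC60 h0 h1 hn hd
  have := D2.main_x (E := E) h3 (Fintype.card V : ℝ) (ε / 100) rfl (by positivity) (by linarith) a b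
  rwa [mul_div_cancel₀ ε (by norm_num : (100 : ℝ) ≠ 0)] at this
end

section
/- Every cohypergraph is induced D₂-free: if a 3-uniform hypergraph H is a cohypergraph, then no 4 vertices of H span exactly 2 edges of H. -/
open Finset

/-- The pair `(X,Y)` of disjoint vertex sets is homogeneous in the 3-uniform hypergraph
`E`: either every triple with two vertices in one of the sets and one vertex in the other
is an edge, or no such triple is an edge. -/
def HomogPair {V : Type} [DecidableEq V] (E : Finset (Finset V)) (X Y : Finset V) : Prop :=
  (∀ t : Finset V, t.card = 3 →
      (((t ∩ X).card = 2 ∧ (t ∩ Y).card = 1) ∨ ((t ∩ Y).card = 2 ∧ (t ∩ X).card = 1)) →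
      t ∈ E) ∨
  (∀ t : Finset V, t.card = 3 →
      (((t ∩ X).card = 2 ∧ (t ∩ Y).card = 1) ∨ ((t ∩ Y).card = 2 ∧ (t ∩ X).card = 1)) →
      t ∉ E)

/-- `IsCoHyp E A` means that the subhypergraph of `E` induced on the vertex set `A` is a
cohypergraph: either `A` is a single vertex, or `A` splits into two nonempty parts forming
a homogeneous pair, each inducing a cohypergraph. -/
inductive IsCoHyp {V : Type} [DecidableEq V] (E : Finset (Finset V)) : Finset V → Prop
  | single (v : V) : IsCoHyp E {v}
  | split (X Y : Finset V) : X.Nonempty → Y.Nonempty → Disjoint X Y →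
      HomogPair E X Y → IsCoHyp E X → IsCoHyp E Y → IsCoHyp E (X ∪ Y)

lemma inter_card_add {V : Type} [DecidableEq V] {X Y t : Finset V} (hd : Disjoint X Y)
    (h : t ⊆ X ∪ Y) : (t ∩ X).card + (t ∩ Y).card = t.card := by
  rw [← Finset.card_union_of_disjoint
    (hd.mono Finset.inter_subset_right Finset.inter_subset_right),
    ← Finset.inter_union_distrib_left, Finset.inter_eq_left.mpr h]

lemma eq_of_inter_zero {V : Type} [DecidableEq V] {X Y S t : Finset V} (hd : Disjoint X Y)
    (hS : S ⊆ X ∪ Y) (hc : S.card = 4) (hY : (S ∩ Y).card ≠ 0) (hts : t ⊆ S) (ht : t.card = 3)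
    (h : (t ∩ Y).card = 0) : (S ∩ X).card = 3 ∧ t = S ∩ X := by
  have h1 := inter_card_add hd hS
  have h2 := inter_card_add hd (hts.trans hS)
  have h3 : t ∩ X = t := Finset.eq_of_subset_of_card_le Finset.inter_subset_left (by omega)
  have h4 : t ⊆ S ∩ X := Finset.subset_inter hts (Finset.inter_eq_left.mp h3)
  have h5 := Finset.card_le_card h4
  exact ⟨by omega, Finset.eq_of_subset_of_card_le h4 (by omega)⟩

lemma coHyp_aux {V : Type} [DecidableEq V]
    (E : Finset (Finset V)) (hE : ∀ e ∈ E, e.card = 3) (A : Finset V) (hco : IsCoHyp E A) :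
    ∀ S : Finset V, S ⊆ A → S.card = 4 → (E.filter (fun e => e ⊆ S)).card ≠ 2 := by
  induction hco with
  | single v =>
    intro S hS hc
    have := Finset.card_le_card hS
    simp at this
    omega
  | split X Y _ _ hd hh _ _ ihX ihY =>
    intro S hS hc
    have hab := inter_card_add hd hS
    by_cases hY : (S ∩ Y).card = 0
    · have : S ∩ X = S := Finset.eq_of_subset_of_card_le Finset.inter_subset_left (by omega)
      exact ihX S (Finset.inter_eq_left.mp this) hc
    by_cases hX : (S ∩ X).card = 0
    · have : S ∩ Y = S := Finset.eq_of_subset_of_card_le Finset.inter_subset_left (by omega)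
      exact ihY S (Finset.inter_eq_left.mp this) hc
    obtain ⟨t0, ht0⟩ : ∃ t0 : Finset V, ∀ t : Finset V, t ⊆ S → t.card = 3 → t ≠ t0 →
        (((t ∩ X).card = 2 ∧ (t ∩ Y).card = 1) ∨ ((t ∩ Y).card = 2 ∧ (t ∩ X).card = 1)) := by
      refine ⟨if (S ∩ X).card = 3 then S ∩ X else S ∩ Y, ?_⟩
      intro t hts ht hne
      have h2 := inter_card_add hd (hts.trans hS)
      by_cases h0 : (t ∩ Y).card = 0
      · obtain ⟨h3, h4⟩ := eq_of_inter_zero hd hS hc hY hts ht h0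
        rw [if_pos h3] at hne
        exact absurd h4 hne
      by_cases h1 : (t ∩ X).card = 0
      · obtain ⟨h3, h4⟩ := eq_of_inter_zero hd.symm (by rwa [Finset.union_comm]) hc hX hts ht h1
        rw [if_neg (by omega)] at hne
        exact absurd h4 hne
      omega
    rcases hh with hh | hh
    · have hsub : (S.powersetCard 3).erase t0 ⊆ E.filter (fun e => e ⊆ S) := by
        intro t ht
        rw [Finset.mem_erase, Finset.mem_powersetCard] at ht
        rw [Finset.mem_filter]
        exact ⟨hh t ht.2.2 (ht0 t ht.2.1 ht.2.2 ht.1), ht.2.1⟩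
      have h1 := Finset.card_le_card hsub
      have h2 := Finset.pred_card_le_card_erase (s := S.powersetCard 3) (a := t0)
      have h3 : (S.powersetCard 3).card = 4 := by
        rw [Finset.card_powersetCard, hc]; decide
      omega
    · have hsub : E.filter (fun e => e ⊆ S) ⊆ {t0} := by
        intro t ht
        rw [Finset.mem_filter] at ht
        rw [Finset.mem_singleton]
        by_contra hne
        exact hh t (hE t ht.1) (ht0 t ht.2 (hE t ht.1) hne) ht.1
      have h1 := Finset.card_le_card hsub
      rw [Finset.card_singleton] at h1
      omega

/-- Every cohypergraph is induced `D₂`-free: no 4 vertices span exactly 2 edges. -/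
theorem cohypergraph_D2_free {V : Type} [Fintype V] [DecidableEq V]
    (E : Finset (Finset V)) (hE : ∀ e ∈ E, e.card = 3)
    (hco : IsCoHyp E (Finset.univ : Finset V)) :
    ∀ S : Finset V, S.card = 4 → (E.filter (fun e => e ⊆ S)).card ≠ 2 := by
  intro S hc
  exact coHyp_aux E hE _ hco S (Finset.subset_univ S) hc
end

section
/- Let β > 0 and let H be a 3-uniform hypergraph on n vertices with n ≥ 4/β and β ≤ d(H) ≤ 1 − β. Then there is a vertex v ∈ V(H) with β²/16 ≤ d(L(v)) ≤ 1 − β²/16. -/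
open Finset

/-- The edge density of a 3-uniform hypergraph: `|E| / C(n,3)`. -/
noncomputable def densH {V : Type} [Fintype V] [DecidableEq V]
    (E : Finset (Finset V)) : ℝ :=
  (E.card : ℝ) / ((Fintype.card V).choose 3 : ℝ)

/-- The density of the link graph of `v`: the number of hyperedges containing `v`,
divided by `C(n-1, 2)`. -/
noncomputable def dLinkDensity {V : Type} [Fintype V] [DecidableEq V]
    (E : Finset (Finset V)) (v : V) : ℝ :=
  ((E.filter (fun e => v ∈ e)).card : ℝ) / ((Fintype.card V - 1).choose 2 : ℝ)

lemma aux_sum_deg {V : Type} [Fintype V] [DecidableEq V]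
    (E : Finset (Finset V)) (hE : ∀ e ∈ E, e.card = 3) :
    ∑ v : V, (E.filter (fun e => v ∈ e)).card = 3 * E.card := by
  have h : ∀ v : V, (E.filter (fun e => v ∈ e)).card = ∑ e ∈ E, if v ∈ e then 1 else 0 := by
    intro v; rw [Finset.card_filter]
  simp_rw [h]
  rw [Finset.sum_comm]
  have h2 : ∀ e ∈ E, (∑ v : V, if v ∈ e then 1 else 0) = 3 := by
    intro e he
    simp [hE e he]
  rw [Finset.sum_congr rfl h2]
  simp [mul_comm]

lemma aux_sum_codeg {V : Type} [Fintype V] [DecidableEq V]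
    (E : Finset (Finset V)) (hE : ∀ e ∈ E, e.card = 3) (x : V) :
    ∑ y ∈ univ.erase x, (E.filter (fun e => x ∈ e ∧ y ∈ e)).card
      = 2 * (E.filter (fun e => x ∈ e)).card := by
  have h : ∀ y : V, (E.filter (fun e => x ∈ e ∧ y ∈ e)).card
      = ∑ e ∈ E.filter (fun e => x ∈ e), if y ∈ e then 1 else 0 := by
    intro y; rw [← Finset.card_filter, Finset.filter_filter]
  simp_rw [h]
  rw [Finset.sum_comm]
  have h2 : ∀ e ∈ E.filter (fun e => x ∈ e),
      (∑ y ∈ univ.erase x, if y ∈ e then 1 else 0) = 2 := by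
    intro e he
    rw [Finset.mem_filter] at he
    rw [← Finset.card_filter]
    have : (univ.erase x).filter (fun y => y ∈ e) = e.erase x := by
      ext y; simp
    rw [this, Finset.card_erase_of_mem he.2, hE e he.1]
  rw [Finset.sum_congr rfl h2]
  simp [mul_comm]

lemma aux_codeg_le {V : Type} [Fintype V] [DecidableEq V]
    (E : Finset (Finset V)) (hE : ∀ e ∈ E, e.card = 3) (x y : V) (hxy : x ≠ y) :
    (E.filter (fun e => x ∈ e ∧ y ∈ e)).card + 2 ≤ Fintype.card V := by
  have h1 : E.filter (fun e => x ∈ e ∧ y ∈ e) ⊆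
      (univ \ {x, y}).image (fun z => insert z ({x, y} : Finset V)) := by
    intro e he
    rw [Finset.mem_filter] at he
    obtain ⟨he, hx, hy⟩ := he
    have hs : ({x, y} : Finset V) ⊆ e := by
      intro z hz; simp at hz; rcases hz with rfl | rfl <;> assumption
    have hc : (e \ {x, y}).card = 1 := by
      rw [Finset.card_sdiff_of_subset hs, hE e he, Finset.card_pair hxy]
    obtain ⟨z, hz⟩ := Finset.card_eq_one.1 hc
    rw [Finset.mem_image]
    refine ⟨z, ?_, ?_⟩
    · have : z ∈ e \ {x, y} := by rw [hz]; simp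
      simp only [Finset.mem_sdiff] at this ⊢
      exact ⟨mem_univ _, this.2⟩
    · have := Finset.sdiff_union_of_subset hs
      rw [hz] at this
      exact this
  have h2 := (Finset.card_le_card h1).trans Finset.card_image_le
  rw [Finset.card_sdiff_of_subset (subset_univ _), Finset.card_pair hxy, Finset.card_univ] at h2
  have h3 : 2 ≤ Fintype.card V := by
    have := Finset.card_le_univ ({x, y} : Finset V)
    rwa [Finset.card_pair hxy] at this
  omega

/-- If the density of `H` is bounded away from 0 and 1, then some vertex has a link graph
whose density is bounded away from 0 and 1. -/
theorem link_graph_density {V : Type} [Fintype V] [DecidableEq V]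
    (E : Finset (Finset V)) (hE : ∀ e ∈ E, e.card = 3)
    (β : ℝ) (hβ : 0 < β)
    (hn : (Fintype.card V : ℝ) ≥ 4 / β)
    (hd1 : β ≤ densH E) (hd2 : densH E ≤ 1 - β) :
    ∃ v : V, β ^ 2 / 16 ≤ dLinkDensity E v ∧ dLinkDensity E v ≤ 1 - β ^ 2 / 16 := by
  by_contra hcon
  push Not at hcon
  have hβ2 : β ≤ 1 / 2 := by linarith
  have hn3 : 3 ≤ Fintype.card V := by
    have : (3 : ℝ) ≤ Fintype.card V := by
      have : 4 / β ≥ 4 := by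
        rw [ge_iff_le, le_div_iff₀ hβ]; linarith
      linarith
    exact_mod_cast this
  obtain ⟨m, hm⟩ : ∃ m, Fintype.card V = m + 3 := ⟨_, (Nat.sub_add_cancel hn3).symm⟩
  have hD : (((Fintype.card V - 1).choose 2 : ℕ) : ℝ) = ((m : ℝ) + 2) * (m + 1) / 2 := by
    rw [hm, show m + 3 - 1 = m + 2 by omega, Nat.cast_choose_two]; push_cast; ring
  have hT : (((Fintype.card V).choose 3 : ℕ) : ℝ) * 3
      = ((m : ℝ) + 3) * (((m : ℝ) + 2) * (m + 1) / 2) := by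
    have := Nat.add_one_mul_choose_eq (m + 2) 2
    have h2 : (((m + 2).choose 2 : ℕ) : ℝ) = ((m : ℝ) + 2) * (m + 1) / 2 := by
      rw [Nat.cast_choose_two]; push_cast; ring
    rw [hm, ← h2]
    have h3 : (((m + 2 + 1) * (m + 2).choose 2 : ℕ) : ℝ) = (((m + 2 + 1).choose (2 + 1) * (2 + 1) : ℕ) : ℝ) := by
      rw [this]
    push_cast at h3
    norm_num at h3
    rw [show m + 3 = m + 2 + 1 by omega]
    linarith
  set D : ℝ := ((m : ℝ) + 2) * (m + 1) / 2 with hDdef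
  have hm0 : (0 : ℝ) ≤ m := Nat.cast_nonneg m
  have hDpos : 0 < D := by positivity
  set ε : ℝ := β ^ 2 / 16 with hε
  let g : V → ℝ := fun v => ((E.filter (fun e => v ∈ e)).card : ℝ)
  let c : V → V → ℝ := fun x y => ((E.filter (fun e => x ∈ e ∧ y ∈ e)).card : ℝ)
  have hsum : ∑ v, g v = 3 * E.card := by
    have := aux_sum_deg E hE
    simp only [g]; exact_mod_cast this
  have hc : ∀ x, ∑ y ∈ univ.erase x, c x y = 2 * g x := by
    intro x
    have := aux_sum_codeg E hE x
    simp only [g, c]; exact_mod_cast this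
  have hcle : ∀ x y, x ≠ y → c x y ≤ m + 1 := by
    intro x y hxy
    have := aux_codeg_le E hE x y hxy
    rw [hm] at this
    have h : (E.filter (fun e => x ∈ e ∧ y ∈ e)).card ≤ m + 1 := by omega
    simp only [c]; exact_mod_cast h
  have hc0 : ∀ x y, 0 ≤ c x y := fun x y => Nat.cast_nonneg _
  have hcs : ∀ x y, c x y = c y x := by
    intro x y; simp only [c, and_comm]
  have herase : ∀ x : V, ((univ.erase x).card : ℝ) = m + 2 := by
    intro x
    rw [Finset.card_erase_of_mem (mem_univ _), Finset.card_univ, hm]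
    push_cast [show m + 3 - 1 = m + 2 by omega]; ring
  have hcc : ∀ x, ∑ y ∈ univ.erase x, ((m : ℝ) + 1 - c x y) = 2 * (D - g x) := by
    intro x
    rw [Finset.sum_sub_distrib, hc, Finset.sum_const, nsmul_eq_mul, herase, hDdef]; ring
  have hgD : ∀ x, g x ≤ D := by
    intro x
    have : 0 ≤ ∑ y ∈ univ.erase x, ((m : ℝ) + 1 - c x y) := by
      apply Finset.sum_nonneg
      intro y hy
      have := hcle x y (Finset.ne_of_mem_erase hy).symm
      linarith
    rw [hcc] at this; linarith
  have hlow : ∀ v, ¬ (1 - ε) * D < g v → g v ≤ ε * D := by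
    intro v hv
    by_contra h
    have h1 := hcon v
    simp only [dLinkDensity, hD] at h1
    have h2 := h1 (by rw [le_div_iff₀ hDpos]; exact le_of_lt (not_le.1 h))
    rw [lt_div_iff₀ hDpos] at h2
    exact hv h2
  let A : Finset V := univ.filter (fun v => (1 - ε) * D < g v)
  let B : Finset V := univ.filter (fun v => ¬ (1 - ε) * D < g v)
  have hAB : (A.card : ℝ) + B.card = m + 3 := by
    have := Finset.card_filter_add_card_filter_not (s := (univ : Finset V)) (fun v => (1 - ε) * D < g v)
    rw [Finset.card_univ, hm] at this
    exact_mod_cast this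
  have hgs : ∑ v ∈ A, g v + ∑ v ∈ B, g v = 3 * E.card := by
    rw [← hsum]
    exact Finset.sum_filter_add_sum_filter_not _ _ _
  have hA1 : ∑ v ∈ A, g v ≤ A.card * D := by
    rw [← nsmul_eq_mul]; exact Finset.sum_le_card_nsmul _ _ _ (fun v _ => hgD v)
  have hA2 : A.card * ((1 - ε) * D) ≤ ∑ v ∈ A, g v := by
    rw [← nsmul_eq_mul]
    exact Finset.card_nsmul_le_sum _ _ _ (fun v hv => (Finset.mem_filter.1 hv).2.le)
  have hB1 : ∑ v ∈ B, g v ≤ B.card * (ε * D) := by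
    rw [← nsmul_eq_mul]
    exact Finset.sum_le_card_nsmul _ _ _ (fun v hv => hlow v (Finset.mem_filter.1 hv).2)
  have hB2 : 0 ≤ ∑ v ∈ B, g v := Finset.sum_nonneg (fun v _ => Nat.cast_nonneg _)
  have hdisj : ∀ x ∈ A, ∀ y ∈ B, x ≠ y := by
    rintro x hx y hy rfl
    exact (Finset.mem_filter.1 hy).2 (Finset.mem_filter.1 hx).2
  have hX : ∑ x ∈ A, ∑ y ∈ B, ((m : ℝ) + 1 - c x y) ≤ A.card * (2 * (ε * D)) := by
    rw [← nsmul_eq_mul]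
    apply Finset.sum_le_card_nsmul
    intro x hx
    calc ∑ y ∈ B, ((m : ℝ) + 1 - c x y) ≤ ∑ y ∈ univ.erase x, ((m : ℝ) + 1 - c x y) := by
          apply Finset.sum_le_sum_of_subset_of_nonneg
          · intro y hy
            exact Finset.mem_erase.2 ⟨(hdisj x hx y hy).symm, mem_univ _⟩
          · intro y hy _
            have := hcle x y (Finset.ne_of_mem_erase hy).symm
            linarith
      _ = 2 * (D - g x) := hcc x
      _ ≤ _ := by
          have := (Finset.mem_filter.1 hx).2
          linarith
  have hY : ∑ x ∈ A, ∑ y ∈ B, c x y ≤ B.card * (2 * (ε * D)) := by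
    rw [Finset.sum_comm, ← nsmul_eq_mul]
    apply Finset.sum_le_card_nsmul
    intro y hy
    calc ∑ x ∈ A, c x y = ∑ x ∈ A, c y x := Finset.sum_congr rfl (fun x _ => hcs x y)
      _ ≤ ∑ x ∈ univ.erase y, c y x := by
          apply Finset.sum_le_sum_of_subset_of_nonneg
          · intro x hx
            exact Finset.mem_erase.2 ⟨hdisj x hx y hy, mem_univ _⟩
          · intro x _ _
            exact hc0 y x
      _ = 2 * g y := hc y
      _ ≤ _ := by
          have := hlow y (Finset.mem_filter.1 hy).2
          linarith
  have hXY : ∑ x ∈ A, ∑ y ∈ B, ((m : ℝ) + 1 - c x y) + ∑ x ∈ A, ∑ y ∈ B, c x y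
      = A.card * (B.card * ((m : ℝ) + 1)) := by
    rw [← Finset.sum_add_distrib]
    simp_rw [← Finset.sum_add_distrib, sub_add_cancel]
    simp only [Finset.sum_const, nsmul_eq_mul]
  have hTpos : (0 : ℝ) < ((Fintype.card V).choose 3 : ℕ) := by
    have : 0 < ((m : ℝ) + 3) * D := by positivity
    linarith
  unfold densH at hd1 hd2
  rw [le_div_iff₀ hTpos] at hd1
  rw [div_le_iff₀ hTpos] at hd2
  generalize (A.card : ℝ) = a at *
  generalize (B.card : ℝ) = b at *
  have hb : b = m + 3 - a := by linarith
  have e1 : β * (m + 3) ≤ a + ε * b := by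
    have : (β * (m + 3)) * D ≤ (a + ε * b) * D := by
      have : β * (((Fintype.card V).choose 3 : ℕ) * 3) = β * ((m + 3) * D) := by rw [hT]
      linarith
    exact le_of_mul_le_mul_right this hDpos
  have e2 : (1 - ε) * a ≤ (1 - β) * (m + 3) := by
    have : ((1 - ε) * a) * D ≤ ((1 - β) * (m + 3)) * D := by
      have : (1 - β) * (((Fintype.card V).choose 3 : ℕ) * 3) = (1 - β) * ((m + 3) * D) := by rw [hT]
      linarith
    exact le_of_mul_le_mul_right this hDpos
  have e3 : a * b ≤ ε * ((m + 3) * (m + 2)) := by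
    have h : (a * b) * ((m : ℝ) + 1) ≤ (ε * ((m + 3) * (m + 2))) * (m + 1) := by
      have : (a + b) * (2 * (ε * D)) = (ε * ((m + 3) * (m + 2))) * (m + 1) := by
        rw [hAB, hDdef]; ring
      linarith
    exact le_of_mul_le_mul_right h (by positivity)
  have hεβ : ε ≤ β / 32 := by rw [hε]; nlinarith
  have hε0 : 0 < ε := by positivity
  have hbm : β * (m + 3) > 0 := by positivity
  have hεm : ε * (m + 3) ≤ β / 32 * (m + 3) := by gcongr
  have fa : β * (m + 3) / 2 ≤ a := by
    subst hb
    by_contra h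
    push Not at h
    nlinarith
  have fb : β * (m + 3) / 2 ≤ b := by
    by_contra h
    push Not at h
    nlinarith
  have : (β * (m + 3) / 2) * (β * (m + 3) / 2) ≤ a * b :=
    mul_le_mul fa fb (by linarith) (by linarith)
  have h16 : ε * 16 = β ^ 2 := by rw [hε]; ring
  have k1 : (β * (m + 3) / 2) * (β * (m + 3) / 2) = 4 * (ε * ((m + 3) * (m + 3))) := by
    linear_combination (-((m : ℝ) + 3) ^ 2 / 4) * h16
  have k2 : 0 < ε * ((m + 3) * (m + 3)) := by positivity
  have k3 : ε * (((m : ℝ) + 3) * (m + 2)) ≤ ε * ((m + 3) * (m + 3)) := by gcongr; norm_num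
  linarith
end

section
/- There is a constant C₀ > 1 such that for every C > C₀ the following holds. Let β > 0 and let H be an induced D₂-free 3-uniform hypergraph on n ≥ 4/β vertices satisfying β ≤ d(H) ≤ 1 − β. Set ξ = β²/16 and ε = (1/ξ)·(C/n)^{1/C}. Then there is a partition V(H) = X ∪ Y ∪ S such that |X|, |Y| ≥ ξn/10, |S| ≤ ξn/2, and (X,Y) is ε-homogeneous. -/
open Finset

/-- A 3-uniform hypergraph is induced `D₂`-free if no 4 vertices span exactly 2 edges. -/
def InducedD2Free {V : Type} [Fintype V] [DecidableEq V] (E : Finset (Finset V)) : Prop :=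
  ∀ S : Finset V, S.card = 4 → (E.filter (fun e => e ⊆ S)).card ≠ 2

structure D2T {V : Type} (T : V → V → V → Prop) : Prop where
  s1 : ∀ x y z, T x y z → T y x z
  s2 : ∀ x y z, T x y z → T x z y
  d2 : ∀ a b c d, a ≠ b → a ≠ c → a ≠ d → b ≠ c → b ≠ d → c ≠ d →
    T a b c → T a b d → ¬ T a c d → ¬ T b c d → False

def CT {V : Type} (T : V → V → V → Prop) : V → V → V → Prop := fun x y z => ¬ T x y z

lemma D2T.compl {V : Type} {T : V → V → V → Prop} (h : D2T T) : D2T (CT T) := by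
  refine ⟨fun x y z hh k => hh (h.s1 _ _ _ k), fun x y z hh k => hh (h.s2 _ _ _ k), ?_⟩
  intro a b c d h1 h2 h3 h4 h5 h6 k1 k2 k3 k4
  simp only [CT, not_not] at *
  have s1 := h.s1
  have s2 := h.s2
  exact h.d2 c d a b h6 h2.symm h4.symm h3.symm h5.symm h1
    (s2 _ _ _ (s1 _ _ _ k3) |> fun q => s2 _ _ _ (q) |> fun q => s2 _ _ _ q)
    (s2 _ _ _ (s1 _ _ _ k4) |> fun q => s2 _ _ _ (q) |> fun q => s2 _ _ _ q)
    (fun q => k1 (s2 _ _ _ (s1 _ _ _ (s2 _ _ _ (s2 _ _ _ (s2 _ _ _ q))))|> fun q => by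
      first | exact q | exact s1 _ _ _ q))
    (fun q => k2 (s2 _ _ _ (s1 _ _ _ (s2 _ _ _ (s2 _ _ _ (s2 _ _ _ q)))) |> fun q => by
      first | exact q | exact s1 _ _ _ q))

/-- one link edge gives a non-edge -/
lemma D2T.one {V : Type} {T : V → V → V → Prop} (h : D2T T) {v x y z : V}
    (hx : v ≠ x) (hy : v ≠ y) (hz : v ≠ z) (hxy : x ≠ y) (hxz : x ≠ z) (hyz : y ≠ z)
    (k1 : T v x y) (k2 : ¬ T v x z) (k3 : ¬ T v y z) : ¬ T x y z := by
  intro k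
  exact h.d2 x y v z hxy hx.symm hxz hy.symm hyz hz (h.s2 _ _ _ (h.s1 _ _ _ k1)) k
    (fun q => k2 (h.s1 _ _ _ q)) (fun q => k3 (h.s1 _ _ _ q))

lemma D2T.two {V : Type} {T : V → V → V → Prop} (h : D2T T) {v x y z : V}
    (hx : v ≠ x) (hy : v ≠ y) (hz : v ≠ z) (hxy : x ≠ y) (hxz : x ≠ z) (hyz : y ≠ z)
    (k1 : ¬ T v x y) (k2 : T v x z) (k3 : T v y z) : T x y z := by
  by_contra k
  exact h.compl.one hx hy hz hxy hxz hyz k1 (not_not.2 k2) (not_not.2 k3) k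

lemma D2T.p4 {V : Type} {T : V → V → V → Prop} (h : D2T T) {v a b c d : V}
    (ha : v ≠ a) (hb : v ≠ b) (hc : v ≠ c) (hd : v ≠ d)
    (h1 : a ≠ b) (h2 : a ≠ c) (h3 : a ≠ d) (h4 : b ≠ c) (h5 : b ≠ d) (h6 : c ≠ d)
    (k1 : T v a b) (k2 : T v b c) (k3 : T v c d)
    (k4 : ¬ T v a c) (k5 : ¬ T v a d) (k6 : ¬ T v b d) : False := by
  have s1 := h.s1
  have s2 := h.s2
  have e1 : T a c b := h.two ha hc hb h2 h1 h4.symm k4 k1 (s2 _ _ _ k2)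
  have e2 : T b d c := h.two hb hd hc h5 h4 h6.symm k6 k2 (s2 _ _ _ k3)
  have e3 : ¬ T a b d := h.one ha hb hd h1 h3 h5 k1 k5 k6
  have e4 : ¬ T c d a := h.one hc hd ha h6 h2.symm h3.symm k3 (fun q => k4 (s2 _ _ _ q))
    (fun q => k5 (s2 _ _ _ q))
  refine h.d2 b c a d h4 h1.symm h5 h2.symm h6 h3 ?_ ?_ ?_ ?_
  · grind
  · grind
  · grind
  · grind

def Lk {V : Type} (T : V → V → V → Prop) (v x y : V) : Prop := x ≠ y ∧ T v x y

def Near {V : Type} (T : V → V → V → Prop) (v : V) (Z : Finset V) (x y : V) : Prop :=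
  x = y ∨ Lk T v x y ∨ ∃ w ∈ Z, Lk T v x w ∧ Lk T v w y

lemma Lk.symm {V : Type} {T : V → V → V → Prop} (h : D2T T) {v x y : V} (k : Lk T v x y) :
    Lk T v y x := ⟨k.1.symm, h.s2 _ _ _ k.2⟩

lemma Near.symm {V : Type} {T : V → V → V → Prop} (h : D2T T) {v x y : V} {Z : Finset V}
    (k : Near T v Z x y) : Near T v Z y x := by
  rcases k with k | k | ⟨w, hw, k1, k2⟩
  · exact Or.inl k.symm
  · exact Or.inr (Or.inl (k.symm h))
  · exact Or.inr (Or.inr ⟨w, hw, k2.symm h, k1.symm h⟩)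

lemma Lk.p4 {V : Type} {T : V → V → V → Prop} (h : D2T T) {v a b c d : V}
    (ha : v ≠ a) (hb : v ≠ b) (hc : v ≠ c) (hd : v ≠ d)
    (h2 : a ≠ c) (h3 : a ≠ d) (h5 : b ≠ d)
    (k1 : Lk T v a b) (k2 : Lk T v b c) (k3 : Lk T v c d) :
    Lk T v a c ∨ Lk T v a d ∨ Lk T v b d := by
  by_contra hh
  simp only [Lk, not_or, not_and] at *
  exact h.p4 ha hb hc hd k1.1 h2 h3 k2.1 h5 k3.1 k1.2 k2.2 k3.2 (hh.1 h2) (hh.2.1 h3) (hh.2.2 h5)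

/-- adding one edge keeps nearness -/
lemma Near.step {V : Type} {T : V → V → V → Prop} (h : D2T T) {v x y z : V} {Z : Finset V}
    (hv : v ∉ Z) (hx : x ∈ Z) (hy : y ∈ Z) (hz : z ∈ Z)
    (k : Near T v Z x y) (l : Lk T v y z) : Near T v Z x z := by
  have ne : ∀ u ∈ Z, v ≠ u := fun u hu e => hv (e ▸ hu)
  rcases k with k | k | ⟨w, hw, k1, k2⟩
  · subst k; exact Or.inr (Or.inl l)
  · exact Or.inr (Or.inr ⟨y, hy, k, l⟩)
  · by_cases e1 : x = y
    · subst e1; exact Or.inr (Or.inl l)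
    by_cases e2 : x = z
    · exact Or.inl e2
    by_cases e3 : w = z
    · subst e3; exact Or.inr (Or.inl k1)
    rcases Lk.p4 h (ne x hx) (ne w hw) (ne y hy) (ne z hz) e1 e2 e3 k1 k2 l with q | q | q
    · exact Or.inr (Or.inr ⟨y, hy, q, l⟩)
    · exact Or.inr (Or.inl q)
    · exact Or.inr (Or.inr ⟨w, hw, k1, q⟩)

lemma Near.trans {V : Type} {T : V → V → V → Prop} (h : D2T T) {v x y z : V} {Z : Finset V}
    (hv : v ∉ Z) (hx : x ∈ Z) (hy : y ∈ Z) (hz : z ∈ Z)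
    (k : Near T v Z x y) (l : Near T v Z y z) : Near T v Z x z := by
  rcases l with l | l | ⟨w, hw, l1, l2⟩
  · exact l ▸ k
  · exact k.step h hv hx hy hz l
  · exact (k.step h hv hx hy hw l1).step h hv hx hw hz l2

lemma seinsche_step {V : Type} [DecidableEq V] {T : V → V → V → Prop} (h : D2T T) {v w : V}
    {Z : Finset V} (hv : v ∉ Z) (hw : w ∉ Z) {x y : V} (hx : x ∈ Z) (hy : y ∈ Z)
    (k : ¬ Near T v Z x y) :
    (∃ x ∈ insert w Z, ∃ y ∈ insert w Z, ¬ Near T v (insert w Z) x y) ∨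
    (∃ x ∈ insert w Z, ∃ y ∈ insert w Z, ¬ Near (CT T) v (insert w Z) x y) := by
  by_cases hall : ∀ u ∈ Z, Lk T v w u
  · right
    refine ⟨w, mem_insert_self _ _, x, mem_insert_of_mem hx, ?_⟩
    rintro (q | q | ⟨u, hu, q1, -⟩)
    · exact hw (q ▸ hx)
    · exact q.2 (hall x hx).2
    · rcases mem_insert.1 hu with rfl | hu
      · exact q1.1 rfl
      · exact q1.2 (hall u hu).2
  · left
    push Not at hall
    obtain ⟨u, hu, hwu⟩ := hall
    have key : ∃ x ∈ Z, ∃ y ∈ Z, ¬ Near T v Z x y ∧ ¬ Lk T v w x := by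
      by_cases e : Near T v Z u x
      · by_cases e' : Near T v Z u y
        · exact absurd ((e.symm h).trans h hv hx hu hy e') k
        · exact ⟨u, hu, y, hy, e', hwu⟩
      · exact ⟨u, hu, x, hx, e, hwu⟩
    obtain ⟨x, hx, y, hy, k, kw⟩ := key
    refine ⟨x, mem_insert_of_mem hx, y, mem_insert_of_mem hy, ?_⟩
    rintro (q | q | ⟨u, hu, q1, q2⟩)
    · exact k (Or.inl q)
    · exact k (Or.inr (Or.inl q))
    · rcases mem_insert.1 hu with rfl | hu
      · exact kw (q1.symm h)
      · exact k (Or.inr (Or.inr ⟨u, hu, q1, q2⟩))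

lemma CT_CT {V : Type} (T : V → V → V → Prop) : CT (CT T) = T := by
  funext x y z; simp [CT]

lemma seinsche {V : Type} [DecidableEq V] {T : V → V → V → Prop} (h : D2T T) {v : V}
    (Z : Finset V) (hv : v ∉ Z) (hZ : 2 ≤ Z.card) :
    (∃ x ∈ Z, ∃ y ∈ Z, ¬ Near T v Z x y) ∨ (∃ x ∈ Z, ∃ y ∈ Z, ¬ Near (CT T) v Z x y) := by
  induction Z using Finset.induction_on with
  | empty => simp at hZ
  | insert w Z hw ih =>
    have hvZ : v ∉ Z := fun q => hv (mem_insert_of_mem q)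
    by_cases h2 : 2 ≤ Z.card
    · rcases ih hvZ h2 with ⟨x, hx, y, hy, k⟩ | ⟨x, hx, y, hy, k⟩
      · exact seinsche_step h hvZ hw hx hy k
      · have := seinsche_step h.compl hvZ hw hx hy k
        rw [CT_CT] at this
        exact this.symm
    · rw [card_insert_of_notMem hw] at hZ
      obtain ⟨u, rfl⟩ := card_eq_one.1 (show Z.card = 1 by omega)
      have hne : w ≠ u := fun e => hw (by simp [e])
      by_cases k : T v w u
      · right
        refine ⟨w, by simp, u, by simp, ?_⟩
        rintro (q | q | ⟨t, ht, q1, q2⟩)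
        · exact hne q
        · exact q.2 k
        · simp only [mem_insert, mem_singleton] at ht
          rcases ht with rfl | rfl
          · exact q1.1 rfl
          · exact q2.1 rfl
      · left
        refine ⟨w, by simp, u, by simp, ?_⟩
        rintro (q | q | ⟨t, ht, q1, q2⟩)
        · exact hne q
        · exact k q.2
        · simp only [mem_insert, mem_singleton] at ht
          rcases ht with rfl | rfl
          · exact q1.1 rfl
          · exact q2.1 rfl

def Emp {V : Type} (T : V → V → V → Prop) (X Y : Finset V) : Prop :=
  Disjoint X Y ∧ ∀ x ∈ X, ∀ x' ∈ X, x ≠ x' → ∀ y ∈ Y, ¬ T x x' y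

open Classical in
lemma comp_emp {V : Type} [DecidableEq V] {T : V → V → V → Prop} (h : D2T T) {v x0 : V}
    (Z : Finset V) (hv : v ∉ Z) (hx0 : x0 ∈ Z) :
    Emp T (insert v (Z.filter (Near T v Z x0))) (Z.filter (fun y => ¬ Near T v Z x0 y)) := by
  have ne : ∀ u ∈ Z, v ≠ u := fun u hu e => hv (e ▸ hu)
  have s1 := h.s1
  have s2 := h.s2
  have B0 : ∀ x ∈ Z, Near T v Z x0 x → ∀ y ∈ Z, ¬ Near T v Z x0 y → x ≠ y ∧ ¬ T v x y := by
    intro x hx kx y hy ky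
    have hxy : x ≠ y := by rintro rfl; exact ky kx
    exact ⟨hxy, fun q => ky (kx.step h hv hx0 hx hy ⟨hxy, q⟩)⟩
  have B1 : ∀ x ∈ Z, Near T v Z x0 x → ∀ x' ∈ Z, Near T v Z x0 x' → Lk T v x x' →
      ∀ y ∈ Z, ¬ Near T v Z x0 y → ¬ T x x' y := by
    intro x hx kx x' hx' kx' l y hy ky
    have b := B0 x hx kx y hy ky
    have b' := B0 x' hx' kx' y hy ky
    exact h.one (ne _ hx) (ne _ hx') (ne _ hy) l.1 b.1 b'.1 l.2 b.2 b'.2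
  refine ⟨?_, ?_⟩
  · rw [disjoint_left]
    intro a ha hb
    simp only [mem_insert, mem_filter] at ha hb
    rcases ha with rfl | ha
    · exact hv hb.1
    · exact hb.2 ha.2
  · intro x hx x' hx' hne y hy
    simp only [mem_insert, mem_filter] at hx hx' hy
    rcases hx with rfl | ⟨hx, kx⟩
    · rcases hx' with rfl | ⟨hx', kx'⟩
      · exact absurd rfl hne
      · exact (B0 x' hx' kx' y hy.1 hy.2).2
    · rcases hx' with rfl | ⟨hx', kx'⟩
      · exact fun q => (B0 x hx kx y hy.1 hy.2).2 (s1 _ _ _ q)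
      · by_cases l : Lk T v x x'
        · exact B1 x hx kx x' hx' kx' l y hy.1 hy.2
        rcases (kx.symm h).trans h hv hx hx0 hx' kx' with q | q | ⟨w, hw, l1, l2⟩
        · exact absurd q hne
        · exact absurd q l
        · have kw := kx.step h hv hx0 hx hw l1
          have c1 := B1 x hx kx w hw kw l1 y hy.1 hy.2
          have c2 := B1 w hw kw x' hx' kx' l2 y hy.1 hy.2
          have c3 : T x x' w := h.two (ne _ hx) (ne _ hx') (ne _ hw) hne l1.1 l2.1.symm
            (fun q => l ⟨hne, q⟩) l1.2 (s2 _ _ _ l2.2)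
          intro q
          exact h.d2 x x' w y hne l1.1 (B0 x hx kx y hy.1 hy.2).1 l2.1.symm
            (B0 x' hx' kx' y hy.1 hy.2).1 (B0 w hw kw y hy.1 hy.2).1 c3 q c1
            (fun r => c2 (s1 _ _ _ r))

def DInv {V : Type} [Fintype V] [DecidableEq V] (T : V → V → V → Prop) (v : V)
    (W R0 R1 : Finset V) : Prop :=
  v ∈ W ∧ Emp T W R0 ∧ Emp (CT T) W R1 ∧ Disjoint R0 R1 ∧ W ∪ R0 ∪ R1 = univ

def GoodP {V : Type} [Fintype V] [DecidableEq V] (T : V → V → V → Prop) (a : ℝ) : Prop :=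
  ∃ X Y S : Finset V, Disjoint X Y ∧ Disjoint X S ∧ Disjoint Y S ∧ X ∪ Y ∪ S = univ ∧
    a / 10 ≤ X.card ∧ a / 10 ≤ Y.card ∧ S.card ≤ a / 2 ∧ (Emp T X Y ∨ Emp (CT T) X Y)

lemma DInv.swap {V : Type} [Fintype V] [DecidableEq V] {T : V → V → V → Prop} {v : V}
    {W R0 R1 : Finset V} (h : DInv T v W R0 R1) : DInv (CT T) v W R1 R0 := by
  obtain ⟨h1, h2, h3, h4, h5⟩ := h
  refine ⟨h1, h3, by rwa [CT_CT], h4.symm, ?_⟩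
  rw [← h5, union_assoc, union_assoc, union_comm R1]

lemma GoodP.swap {V : Type} [Fintype V] [DecidableEq V] {T : V → V → V → Prop} {a : ℝ}
    (h : GoodP (CT T) a) : GoodP T a := by
  obtain ⟨X, Y, S, h1, h2, h3, h4, h5, h6, h7, h8⟩ := h
  rw [CT_CT] at h8
  exact ⟨X, Y, S, h1, h2, h3, h4, h5, h6, h7, h8.symm⟩

lemma Emp.mono {V : Type} {T : V → V → V → Prop} {X X' Y : Finset V} (h : Emp T X Y)
    (hX : X' ⊆ X) : Emp T X' Y :=
  ⟨h.1.mono_left hX, fun x hx x' hx' => h.2 x (hX hx) x' (hX hx')⟩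

lemma Emp.union {V : Type} [DecidableEq V] {T : V → V → V → Prop} {X Y Y' : Finset V}
    (h : Emp T X Y) (h' : Emp T X Y') : Emp T X (Y ∪ Y') := by
  refine ⟨disjoint_union_right.2 ⟨h.1, h'.1⟩, ?_⟩
  intro x hx x' hx' hne y hy
  rcases mem_union.1 hy with hy | hy
  · exact h.2 x hx x' hx' hne y hy
  · exact h'.2 x hx x' hx' hne y hy

def Pr {V : Type} (T : V → V → V → Prop) (v x y : V) : Prop := x ≠ y ∧ v ≠ x ∧ v ≠ y ∧ T v x y

open Classical in
noncomputable def Nn {V : Type} [Fintype V] (T : V → V → V → Prop) (v : V) : ℕ :=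
  ∑ x : V, (univ.filter (fun y => Pr T v x y)).card

open Classical in
lemma core {V : Type} [Fintype V] [DecidableEq V] {T : V → V → V → Prop} (h : D2T T) {v : V}
    {a : ℝ} {W R0 R1 : Finset V} (hI : DInv T v W R0 R1)
    (hs : (R0.card : ℝ) + R1.card ≤ a / 2)
    (hmin : ∀ W' R0' R1', DInv T v W' R0' R1' → (R0'.card : ℝ) + R1'.card ≤ a / 2 →
      W.card ≤ W'.card)
    {x0 y0 : V} (hx0 : x0 ∈ W.erase v) (hy0 : y0 ∈ W.erase v)
    (hn : ¬ Near T v (W.erase v) x0 y0) :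
    GoodP T a ∨ (Nn T v : ℝ) ≤ 1.1 * a * Fintype.card V := by
  obtain ⟨hvW, hE0, hE1, hdR, huniv⟩ := hI
  set Z := W.erase v with hZ
  have hv : v ∉ Z := by simp [hZ]
  have hW : ∀ t, t ∈ W ↔ t = v ∨ t ∈ Z := by
    intro t; simp only [hZ, mem_erase]; by_cases e : t = v <;> simp [e, hvW]
  by_cases hbig : ∃ x ∈ Z, a / 10 ≤ ((Z.filter (Near T v Z x)).card : ℝ)
  · left
    obtain ⟨x, hx, hA⟩ := hbig
    have hemp := comp_emp h Z hv hx
    set A := Z.filter (Near T v Z x) with hAd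
    set B := Z.filter (fun y => ¬ Near T v Z x y) with hBd
    have hAW : insert v A ⊆ W := by
      intro t ht
      rw [hW]
      rcases mem_insert.1 ht with e | e
      · exact Or.inl e
      · exact Or.inr (mem_filter.1 e).1
    have hBne : B.Nonempty := by
      by_cases e : Near T v Z x x0
      · refine ⟨y0, mem_filter.2 ⟨hy0, fun q => hn ?_⟩⟩
        exact (e.symm h).trans h hv hx0 hx hy0 q
      · exact ⟨x0, mem_filter.2 ⟨hx0, e⟩⟩
    have hBW : B ⊆ W := fun t ht => (hW t).2 (Or.inr (mem_filter.1 ht).1)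
    have hlt : (insert v A).card < W.card := by
      apply card_lt_card
      refine ⟨hAW, fun q => ?_⟩
      obtain ⟨b, hb⟩ := hBne
      exact disjoint_left.1 hemp.1 (q (hBW hb)) hb
    have hE0' : Emp T (insert v A) (R0 ∪ B) := (hE0.mono hAW).union hemp
    have hE1' : Emp (CT T) (insert v A) R1 := hE1.mono hAW
    have hd' : Disjoint (R0 ∪ B) R1 :=
      disjoint_union_left.2 ⟨hdR, hE1.1.mono_left hBW⟩
    have hu' : insert v A ∪ (R0 ∪ B) ∪ R1 = univ := by
      ext t
      have ht : t ∈ W ∪ R0 ∪ R1 := huniv ▸ mem_univ t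
      simp only [mem_union, hW] at ht
      simp only [mem_union, mem_insert, mem_univ, iff_true, hAd, hBd, mem_filter]
      tauto
    have hI' : DInv T v (insert v A) (R0 ∪ B) R1 :=
      ⟨mem_insert_self _ _, hE0', hE1', hd', hu'⟩
    have hgt : a / 2 < ((R0 ∪ B).card : ℝ) + R1.card := by
      by_contra hc
      have := hmin _ _ _ hI' (not_lt.1 hc)
      omega
    have hX : a / 10 ≤ ((insert v A).card : ℝ) := by
      refine hA.trans ?_
      exact_mod_cast card_le_card (subset_insert v A)
    have r0 : (0 : ℝ) ≤ R0.card := Nat.cast_nonneg _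
    have r1 : (0 : ℝ) ≤ R1.card := Nat.cast_nonneg _
    by_cases hc : a / 10 ≤ ((R0 ∪ B).card : ℝ)
    · exact ⟨insert v A, R0 ∪ B, R1, hE0'.1, hE1'.1, hd', hu', hX, hc, by linarith, Or.inl hE0'⟩
    · refine ⟨insert v A, R1, R0 ∪ B, hE1'.1, hE0'.1, hd'.symm, ?_, hX, by linarith,
        by linarith, Or.inr hE1'⟩
      rw [← hu', union_assoc, union_assoc, union_comm R1]
  · right
    push Not at hbig
    have hdeg : ∀ x ∈ W, ((univ.filter (fun y => Pr T v x y)).card : ℝ) ≤ 0.6 * a := by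
      intro x hxW
      rcases (hW x).1 hxW with rfl | hx
      · have : (univ.filter (fun y => Pr T x x y)) = ∅ := by
          ext y; simp [Pr]
        rw [this]
        have r0 : (0 : ℝ) ≤ R0.card := Nat.cast_nonneg _
        have r1 : (0 : ℝ) ≤ R1.card := Nat.cast_nonneg _
        simp; linarith
      · have hsub : (univ.filter (fun y => Pr T v x y)) ⊆ Z.filter (Near T v Z x) ∪ (R0 ∪ R1) := by
          intro y hy
          simp only [mem_filter, mem_univ, true_and] at hy
          have ht : y ∈ W ∪ R0 ∪ R1 := huniv ▸ mem_univ y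
          simp only [mem_union, hW] at ht
          simp only [mem_union, mem_filter]
          have : Near T v Z x y := Or.inr (Or.inl ⟨hy.1, hy.2.2.2⟩)
          have : y ≠ v := hy.2.2.1.symm
          tauto
        have h1 := (card_le_card hsub).trans (card_union_le _ _)
        have h2 := card_union_le R0 R1
        have h3 : ((univ.filter (fun y => Pr T v x y)).card : ℝ) ≤
            (Z.filter (Near T v Z x)).card + (R0.card + R1.card) := by
          exact_mod_cast h1.trans (by omega)
        have := hbig x hx
        linarith
    have hcompl : ((univ \ W).card : ℝ) ≤ a / 2 := by
      have : univ \ W ⊆ R0 ∪ R1 := by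
        intro t ht
        have ht' : t ∈ W ∪ R0 ∪ R1 := huniv ▸ mem_univ t
        simp only [mem_sdiff, mem_union] at *
        tauto
      have h1 := (card_le_card this).trans (card_union_le _ _)
      have : ((univ \ W).card : ℝ) ≤ R0.card + R1.card := by exact_mod_cast h1
      linarith
    have ha : 0 ≤ a := by
      have : (0:ℝ) ≤ ((univ \ W).card : ℝ) := Nat.cast_nonneg _
      linarith
    have hsplit : (Nn T v : ℝ) = ∑ x ∈ univ \ W, ((univ.filter (fun y => Pr T v x y)).card : ℝ)
        + ∑ x ∈ W, ((univ.filter (fun y => Pr T v x y)).card : ℝ) := by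
      rw [Nn, Nat.cast_sum, sum_sdiff (subset_univ W)]
    have hb1 : ∑ x ∈ univ \ W, ((univ.filter (fun y => Pr T v x y)).card : ℝ)
        ≤ (univ \ W).card * (Fintype.card V : ℝ) := by
      rw [← nsmul_eq_mul]
      apply sum_le_card_nsmul
      intro x _
      exact_mod_cast card_le_univ _
    have hb2 : ∑ x ∈ W, ((univ.filter (fun y => Pr T v x y)).card : ℝ)
        ≤ W.card * (0.6 * a) := by
      rw [← nsmul_eq_mul]
      exact sum_le_card_nsmul _ _ _ hdeg
    have hWn : (W.card : ℝ) ≤ Fintype.card V := by exact_mod_cast card_le_univ W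
    have hb3 : (W.card : ℝ) * (0.6 * a) ≤ Fintype.card V * (0.6 * a) := by gcongr
    have hb4 : (univ \ W).card * (Fintype.card V : ℝ) ≤ a / 2 * Fintype.card V := by gcongr
    rw [hsplit]
    linarith

lemma vertex_lemma {V : Type} [Fintype V] [DecidableEq V] {T : V → V → V → Prop} (h : D2T T)
    (v : V) {a : ℝ} (ha : 0 ≤ a) (han : a / 2 + 3 ≤ Fintype.card V) :
    GoodP T a ∨ (Nn T v : ℝ) ≤ 1.1 * a * Fintype.card V ∨
      (Nn (CT T) v : ℝ) ≤ 1.1 * a * Fintype.card V := by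
  classical
  let S : Finset (Finset V × Finset V × Finset V) :=
    univ.filter (fun p => DInv T v p.1 p.2.1 p.2.2 ∧ (p.2.1.card : ℝ) + p.2.2.card ≤ a / 2)
  have hS : S.Nonempty := by
    refine ⟨(univ, ∅, ∅), ?_⟩
    simp only [S, mem_filter, mem_univ, true_and]
    refine ⟨⟨mem_univ _, ⟨by simp, by simp⟩, ⟨by simp, by simp⟩, by simp, by simp⟩, ?_⟩
    simp; linarith
  obtain ⟨⟨W, R0, R1⟩, hm, hmin⟩ := exists_min_image S (fun p => p.1.card) hS
  simp only [S, mem_filter, mem_univ, true_and, Prod.forall] at hm hmin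
  obtain ⟨hI, hs⟩ := hm
  have hcard : 2 ≤ (W.erase v).card := by
    rw [card_erase_of_mem hI.1]
    have h1 : (univ : Finset V).card ≤ W.card + R0.card + R1.card := by
      rw [← hI.2.2.2.2]
      exact (card_union_le _ _).trans (by have := card_union_le W R0; omega)
    rw [card_univ] at h1
    have h1' : (Fintype.card V : ℝ) ≤ W.card + R0.card + R1.card := by exact_mod_cast h1
    have : (3 : ℝ) ≤ W.card := by linarith
    have : 3 ≤ W.card := by exact_mod_cast this
    omega
  rcases seinsche h (W.erase v) (notMem_erase v W) hcard with ⟨x, hx, y, hy, hn⟩ | ⟨x, hx, y, hy, hn⟩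
  · rcases core (a := a) h hI hs (fun W' R0' R1' h1 h2 => hmin W' R0' R1' ⟨h1, h2⟩) hx hy hn with q | q
    · exact Or.inl q
    · exact Or.inr (Or.inl q)
  · rcases core (a := a) h.compl hI.swap (by linarith) (fun W' R0' R1' h1 h2 => hmin W' R1' R0'
      ⟨by have := h1.swap; rwa [CT_CT] at this, by linarith⟩) hx hy hn with q | q
    · exact Or.inl q.swap
    · exact Or.inr (Or.inr q)

def TE {V : Type} [DecidableEq V] (E : Finset (Finset V)) (x y z : V) : Prop :=
  ({x, y, z} : Finset V) ∈ E

lemma TE_D2T {V : Type} [Fintype V] [DecidableEq V] {E : Finset (Finset V)}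
    (hu : ∀ e ∈ E, e.card = 3) (hE : InducedD2Free E) : D2T (TE E) := by
  refine ⟨?_, ?_, ?_⟩
  · intro x y z k
    unfold TE at *
    rwa [Finset.insert_comm]
  · intro x y z k
    unfold TE at *
    rwa [Finset.pair_comm]
  · intro a b c d h1 h2 h3 h4 h5 h6 k1 k2 k3 k4
    unfold TE at *
    have hS : ({a, b, c, d} : Finset V).card = 4 := by
      rw [card_insert_of_notMem, card_insert_of_notMem, card_insert_of_notMem, card_singleton] <;>
        simp [*]
    refine hE {a, b, c, d} hS ?_
    have : E.filter (fun e => e ⊆ {a, b, c, d}) = {{a, b, c}, {a, b, d}} := by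
      ext e
      simp only [mem_filter, mem_insert, mem_singleton]
      constructor
      · rintro ⟨he, hsub⟩
        have hc : (({a, b, c, d} : Finset V) \ e).card = 1 := by
          rw [card_sdiff_of_subset hsub, hS, hu e he]
        obtain ⟨t, ht⟩ := card_eq_one.1 hc
        have he' : e = ({a, b, c, d} : Finset V) \ {t} := by
          rw [← ht, Finset.sdiff_sdiff_eq_self hsub]
        have htm : t ∈ ({a, b, c, d} : Finset V) := by
          have : t ∈ ({a, b, c, d} : Finset V) \ e := by rw [ht]; simp
          exact (mem_sdiff.1 this).1
        simp only [mem_insert, mem_singleton] at htm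
        rcases htm with rfl | rfl | rfl | rfl
        · exfalso; apply k4
          convert he using 1
          rw [he']; ext s; simp; grind
        · exfalso; apply k3
          convert he using 1
          rw [he']; ext s; simp; grind
        · right
          rw [he']; ext s; simp; grind
        · left
          rw [he']; ext s; simp; grind
      · rintro (rfl | rfl)
        · exact ⟨k1, by intro s; simp; tauto⟩
        · exact ⟨k2, by intro s; simp; tauto⟩
    rw [this, card_pair]
    intro q
    have : c ∈ ({a, b, d} : Finset V) := by rw [← q]; simp
    simp at this
    grind

lemma perm3 {V : Type} [DecidableEq V] (a b c : V) :
    ({a, c, b} : Finset V) = {a, b, c} ∧ ({b, a, c} : Finset V) = {a, b, c} ∧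
    ({b, c, a} : Finset V) = {a, b, c} ∧ ({c, a, b} : Finset V) = {a, b, c} ∧
    ({c, b, a} : Finset V) = {a, b, c} := by
  refine ⟨?_, ?_, ?_, ?_, ?_⟩ <;> (ext s; simp only [mem_insert, mem_singleton]; tauto)

open Classical in
lemma six_le {V : Type} [Fintype V] [DecidableEq V] {E : Finset (Finset V)}
    (hu : ∀ e ∈ E, e.card = 3) (T : V → V → V → Prop)
    (hT : ∀ x y z, x ≠ y → x ≠ z → y ≠ z → {x, y, z} ∈ E → T x y z) :
    6 * E.card ≤ ∑ v, Nn T v := by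
  have h1 : ∑ v, Nn T v = (univ.filter (fun p : V × V × V => Pr T p.1 p.2.1 p.2.2)).card := by
    simp only [Nn, card_filter, Fintype.sum_prod_type]
  rw [h1]
  have h2 : (univ.filter (fun p : V × V × V => Pr (TE E) p.1 p.2.1 p.2.2)).card ≤
      (univ.filter (fun p : V × V × V => Pr T p.1 p.2.1 p.2.2)).card := by
    apply card_le_card
    intro p
    simp only [mem_filter, mem_univ, true_and]
    simp only [Pr]
    rintro ⟨a, b, c, d⟩
    exact ⟨a, b, c, hT _ _ _ b c a d⟩
  refine le_trans ?_ h2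
  rw [card_eq_sum_card_fiberwise (f := fun p : V × V × V => ({p.1, p.2.1, p.2.2} : Finset V))
    (t := E)]
  · rw [mul_comm, ← smul_eq_mul]
    apply card_nsmul_le_sum
    intro e he
    obtain ⟨a, b, c, hab, hac, hbc, rfl⟩ := card_eq_three.1 (hu e he)
    have hcard : ({(a, b, c), (a, c, b), (b, a, c), (b, c, a), (c, a, b), (c, b, a)} :
        Finset (V × V × V)).card = 6 := by
      simp [card_insert_of_notMem, hab, hac, hbc, hab.symm, hac.symm, hbc.symm]
    rw [← hcard]
    apply card_le_card
    obtain ⟨e1, e2, e3, e4, e5⟩ := perm3 a b c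
    intro p hp
    simp only [mem_insert, mem_singleton] at hp
    simp only [mem_filter, mem_univ, true_and]
    simp only [Pr, TE]
    rcases hp with rfl | rfl | rfl | rfl | rfl | rfl <;>
      simp [e1, e2, e3, e4, e5, he, hab, hac, hbc, hab.symm, hac.symm, hbc.symm]
  · intro p hp
    exact (mem_filter.1 hp).2.2.2.2

open Classical in
lemma PQ_count {V : Type} [Fintype V] [DecidableEq V] {T : V → V → V → Prop} (h : D2T T)
    (P Q : Finset V) (hPQ : Disjoint P Q) :
    P.card * (Q.card * (Fintype.card V - 2)) ≤ ∑ q ∈ Q, Nn T q + ∑ p ∈ P, Nn (CT T) p := by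
  have h1 : ∀ p ∈ P, ∀ q ∈ Q, Fintype.card V - 2 ≤
      (univ.filter (fun z => Pr T q p z)).card + (univ.filter (fun z => Pr (CT T) p q z)).card := by
    intro p hp q hq
    have hne : p ≠ q := fun e => disjoint_left.1 hPQ hp (e ▸ hq)
    have : (univ \ {p, q} : Finset V) ⊆
        (univ.filter (fun z => Pr T q p z)) ∪ (univ.filter (fun z => Pr (CT T) p q z)) := by
      intro z hz
      simp only [mem_sdiff, mem_univ, true_and, mem_insert, mem_singleton, not_or] at hz
      simp only [mem_union, mem_filter, mem_univ, true_and]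
      simp only [Pr, CT]
      by_cases k : T q p z
      · left; exact ⟨fun e => hz.1 e.symm, hne.symm, fun e => hz.2 e.symm, k⟩
      · right; exact ⟨fun e => hz.2 e.symm, hne, fun e => hz.1 e.symm, fun q => k (h.s1 _ _ _ q)⟩
    have h2 := (card_le_card this).trans (card_union_le _ _)
    rw [card_sdiff_of_subset (subset_univ _), card_univ, card_pair hne] at h2
    exact h2
  calc P.card * (Q.card * (Fintype.card V - 2))
      = ∑ p ∈ P, ∑ q ∈ Q, (Fintype.card V - 2) := by simp
    _ ≤ ∑ p ∈ P, ∑ q ∈ Q, ((univ.filter (fun z => Pr T q p z)).card +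
        (univ.filter (fun z => Pr (CT T) p q z)).card) :=
        sum_le_sum fun p hp => sum_le_sum fun q hq => h1 p hp q hq
    _ = ∑ q ∈ Q, ∑ p ∈ P, (univ.filter (fun z => Pr T q p z)).card +
        ∑ p ∈ P, ∑ q ∈ Q, (univ.filter (fun z => Pr (CT T) p q z)).card := by
        simp only [sum_add_distrib]
        rw [sum_comm]
    _ ≤ _ := by
        unfold Nn
        gcongr
        · exact subset_univ _
        · exact subset_univ _

lemma Nn_le {V : Type} [Fintype V] (T : V → V → V → Prop) (v : V) :
    Nn T v ≤ Fintype.card V * Fintype.card V := by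
  classical
  unfold Nn
  calc _ ≤ ∑ x : V, Fintype.card V := sum_le_sum fun x _ => card_le_univ _
    _ = _ := by simp

lemma final_arith {n p q β a : ℝ} (hβ : 0 < β) (hβ2 : β ≤ 1 / 2) (ha : a = β ^ 2 / 16 * n)
    (hn : 1000 ≤ n) (hpq : p + q = n)
    (h1 : β * (n * (n - 1) * (n - 2)) ≤ n * n * p + 1.1 * a * n * n)
    (h2 : β * (n * (n - 1) * (n - 2)) ≤ n * n * q + 1.1 * a * n * n)
    (h3 : p * (q * (n - 2)) ≤ 1.1 * a * n * n) : False := by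
  have hn0 : 0 < n := by linarith
  have hbn : 0 < β * n := by positivity
  have ha2 : a ≤ β * n / 32 := by
    rw [ha]; nlinarith
  have hk : 0.99 * (n * n) ≤ (n - 1) * (n - 2) := by nlinarith
  have hk2 : n * n * (0.99 * (β * n)) ≤ β * (n * (n - 1) * (n - 2)) := by
    have := mul_le_mul_of_nonneg_left hk hbn.le
    nlinarith
  have hnn : 0 < n * n := by positivity
  have hp : 0.95 * (β * n) ≤ p := by
    have : n * n * (0.99 * (β * n)) ≤ n * n * (p + 1.1 * a) := by linarith
    have := le_of_mul_le_mul_left this hnn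
    linarith
  have hq : 0.95 * (β * n) ≤ q := by
    have : n * n * (0.99 * (β * n)) ≤ n * n * (q + 1.1 * a) := by linarith
    have := le_of_mul_le_mul_left this hnn
    linarith
  have hprod : 0.95 * (β * n) * (n / 2) ≤ p * q := by
    rcases le_total p q with hh | hh
    · apply mul_le_mul hp (by linarith) (by linarith) (by linarith)
    · rw [mul_comm p q]
      apply mul_le_mul hq (by linarith) (by linarith) (by linarith)
  have h4 : 0.95 * (β * n) * (n / 2) * (0.99 * n) ≤ p * q * (n - 2) := by
    apply mul_le_mul hprod (by linarith) (by linarith)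
    exact le_trans (by positivity) hprod
  have h5 : 1.1 * a * n * n ≤ 1.1 * (β * n / 32) * n * n := by gcongr
  have h6 : 0 < β * n * (n * n) := by positivity
  nlinarith

lemma dens_arith {n : ℕ} {m : ℕ} {β : ℝ} (hn : 3 ≤ n)
    (h : β ≤ (m : ℝ) / (n.choose 3 : ℝ)) : β * ((n : ℝ) * (n - 1) * (n - 2)) ≤ 6 * m := by
  have hc : 6 * (n.choose 3 : ℝ) = (n : ℝ) * (n - 1) * (n - 2) := by
    have := Nat.descFactorial_eq_factorial_mul_choose n 3
    have h2 : (n.descFactorial 3 : ℝ) = (n : ℝ) * (n - 1) * (n - 2) := by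
      simp only [Nat.descFactorial, Nat.sub_zero]
      push_cast [Nat.cast_sub (show 2 ≤ n by omega), Nat.cast_sub (show 1 ≤ n by omega)]
      ring
    rw [← h2, this]
    simp [Nat.factorial]
  have hpos : (0 : ℝ) < n.choose 3 := by exact_mod_cast Nat.choose_pos hn
  rw [← hc]
  rw [le_div_iff₀ hpos] at h
  linarith

lemma good_exists {V : Type} [Fintype V] [DecidableEq V] {E : Finset (Finset V)} {β : ℝ}
    (hβ : 0 < β) (hu : ∀ e ∈ E, e.card = 3) (hE : InducedD2Free E)
    (hl : β ≤ densH E) (hr : densH E ≤ 1 - β)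
    (hbig : 1000 ≤ β ^ 2 / 16 * (Fintype.card V : ℝ)) :
    GoodP (TE E) (β ^ 2 / 16 * (Fintype.card V : ℝ)) := by
  classical
  by_contra hno
  have h := TE_D2T hu hE
  set n := Fintype.card V with hn
  set a : ℝ := β ^ 2 / 16 * (n : ℝ) with ha
  have hβ2 : β ≤ 1 / 2 := by linarith
  have hn0 : (0 : ℝ) ≤ n := Nat.cast_nonneg _
  have hxi : β ^ 2 / 16 ≤ 1 / 64 := by nlinarith
  have han : a ≤ 1 / 64 * n := by rw [ha]; gcongr
  have hn1000 : (1000 : ℝ) ≤ n := by linarith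
  have hn1000' : 1000 ≤ n := by exact_mod_cast hn1000
  have hv : ∀ v, (Nn (TE E) v : ℝ) ≤ 1.1 * a * n ∨ (Nn (CT (TE E)) v : ℝ) ≤ 1.1 * a * n := by
    intro v
    rcases vertex_lemma h v (a := a) (by linarith) (by linarith) with q | q
    · exact absurd q hno
    · exact q
  set P : Finset V := univ.filter (fun v => (Nn (CT (TE E)) v : ℝ) ≤ 1.1 * a * n) with hP
  set Q : Finset V := univ.filter (fun v => ¬ (Nn (CT (TE E)) v : ℝ) ≤ 1.1 * a * n) with hQ
  have hPQ : Disjoint P Q := disjoint_filter_filter_not _ _ _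
  have hcard : P.card + Q.card = n := by
    rw [hP, hQ, card_filter_add_card_filter_not, card_univ]
  have hcard' : (P.card : ℝ) + Q.card = n := by exact_mod_cast hcard
  have bP : ∀ v ∈ P, (Nn (CT (TE E)) v : ℝ) ≤ 1.1 * a * n := fun v hv => (mem_filter.1 hv).2
  have bQ : ∀ v ∈ Q, (Nn (TE E) v : ℝ) ≤ 1.1 * a * n := fun v hw =>
    (hv v).resolve_right (mem_filter.1 hw).2
  have hsum : ∀ f : V → ℝ, ∑ v, f v = ∑ v ∈ P, f v + ∑ v ∈ Q, f v := fun f =>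
    (sum_filter_add_sum_filter_not _ _ _).symm
  have triv : ∀ (T : V → V → V → Prop) v, (Nn T v : ℝ) ≤ n * n := fun T v => by
    exact_mod_cast Nn_le T v
  have sb : ∀ (A : Finset V) (f : V → ℝ) (b : ℝ), (∀ v ∈ A, f v ≤ b) → ∑ v ∈ A, f v ≤ A.card * b := by
    intro A f b hb
    rw [← nsmul_eq_mul]
    exact sum_le_card_nsmul _ _ _ hb
  have hpn : (P.card : ℝ) ≤ n := by have : (0 : ℝ) ≤ Q.card := Nat.cast_nonneg _; linarith
  have hqn : (Q.card : ℝ) ≤ n := by have : (0 : ℝ) ≤ P.card := Nat.cast_nonneg _; linarith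
  have hM : 0 ≤ 1.1 * a * n := by have : 0 ≤ a := by linarith
                                  positivity
  have pM : (P.card : ℝ) * (1.1 * a * n) ≤ n * (1.1 * a * n) := by gcongr
  have qM : (Q.card : ℝ) * (1.1 * a * n) ≤ n * (1.1 * a * n) := by gcongr
  refine final_arith (n := n) (p := P.card) (q := Q.card) hβ hβ2 ha hn1000 hcard' ?_ ?_ ?_
  · have h1 := dens_arith (by omega) hl
    have h2 : (6 * E.card : ℝ) ≤ ∑ v, (Nn (TE E) v : ℝ) := by
      exact_mod_cast six_le hu (TE E) (fun _ _ _ _ _ _ k => k)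
    rw [hsum] at h2
    have h3 := sb P _ _ (fun v _ => triv (TE E) v)
    have h4 := sb Q _ _ bQ
    linarith
  · have hEsub : E ⊆ powersetCard 3 univ := fun e he => mem_powersetCard.2 ⟨subset_univ _, hu e he⟩
    have hcc : ((powersetCard 3 univ \ E).card : ℝ) = n.choose 3 - E.card := by
      rw [card_sdiff_of_subset hEsub, Nat.cast_sub (card_le_card hEsub), card_powersetCard, card_univ]
    have hpos : (0 : ℝ) < n.choose 3 := by exact_mod_cast Nat.choose_pos (by omega)
    have hl' : β ≤ ((powersetCard 3 univ \ E).card : ℝ) / (n.choose 3 : ℝ) := by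
      rw [hcc, sub_div, div_self hpos.ne']
      unfold densH at hr
      linarith
    have h1 := dens_arith (by omega) hl'
    have h2 : (6 * (powersetCard 3 univ \ E).card : ℝ) ≤ ∑ v, (Nn (CT (TE E)) v : ℝ) := by
      exact_mod_cast six_le (E := powersetCard 3 univ \ E)
        (fun e he => (mem_powersetCard.1 (mem_sdiff.1 he).1).2) (CT (TE E))
        (fun _ _ _ _ _ _ k => (mem_sdiff.1 k).2)
    rw [hsum] at h2
    have h3 := sb Q _ _ (fun v _ => triv (CT (TE E)) v)
    have h4 := sb P _ _ bP
    linarith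
  · have h1 : ((P.card * (Q.card * (n - 2)) : ℕ) : ℝ) ≤
        ∑ q ∈ Q, (Nn (TE E) q : ℝ) + ∑ p ∈ P, (Nn (CT (TE E)) p : ℝ) := by
      exact_mod_cast PQ_count h P Q hPQ
    push_cast [Nat.cast_sub (show 2 ≤ n by omega)] at h1
    have h3 := sb Q _ _ bQ
    have h4 := sb P _ _ bP
    have : (P.card : ℝ) * (1.1 * a * n) + Q.card * (1.1 * a * n) = n * (1.1 * a * n) := by
      rw [← add_mul, hcard']
    linarith

/-! Counting triples. -/

lemma mem_shape {V : Type} [DecidableEq V] {X Y e : Finset V} (hd : Disjoint X Y)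
    (h3 : e.card = 3) (h1 : (e ∩ X).card = 2) (h2 : (e ∩ Y).card = 1) :
    e = (e ∩ X) ∪ (e ∩ Y) := by
  symm
  apply eq_of_subset_of_card_le
  · exact union_subset inter_subset_left inter_subset_left
  · rw [card_union_of_disjoint (hd.mono inter_subset_right inter_subset_right)]
    omega

lemma eXXY_le {V : Type} [DecidableEq V] {E : Finset (Finset V)} {X Y : Finset V}
    (hu : ∀ e ∈ E, e.card = 3) (hd : Disjoint X Y) :
    eXXY E X Y ≤ X.card.choose 2 * Y.card := by
  have : E.filter (fun e => (e ∩ X).card = 2 ∧ (e ∩ Y).card = 1) ⊆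
      (powersetCard 2 X ×ˢ Y).image (fun p => insert p.2 p.1) := by
    intro e he
    obtain ⟨heE, h1, h2⟩ := mem_filter.1 he
    have hs := mem_shape hd (hu e heE) h1 h2
    obtain ⟨y, hy⟩ := card_eq_one.1 h2
    have hyY : y ∈ e ∩ Y := by rw [hy]; simp
    refine mem_image.2 ⟨(e ∩ X, y), mem_product.2 ⟨mem_powersetCard.2 ⟨inter_subset_right, h1⟩,
      (mem_inter.1 hyY).2⟩, ?_⟩
    conv_rhs => rw [hs, hy]
    ext; simp
  refine (card_le_card this).trans (card_image_le.trans ?_)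
  rw [card_product, card_powersetCard]

lemma le_eXXY {V : Type} [Fintype V] [DecidableEq V] {E : Finset (Finset V)} {X Y : Finset V}
    (hd : Disjoint X Y) :
    X.card.choose 2 * Y.card ≤ eXXY E X Y + eXXY (powersetCard 3 univ \ E) X Y := by
  have key : ∀ p ∈ powersetCard 2 X ×ˢ Y,
      (insert p.2 p.1) ∩ X = p.1 ∧ (insert p.2 p.1) ∩ Y = {p.2} ∧ (insert p.2 p.1).card = 3 := by
    rintro ⟨s, y⟩ hp
    obtain ⟨hs, hy⟩ := mem_product.1 hp
    obtain ⟨hs, hc⟩ := mem_powersetCard.1 hs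
    simp only at *
    have hyX : y ∉ X := fun q => disjoint_left.1 hd q hy
    have hys : y ∉ s := fun q => hyX (hs q)
    refine ⟨?_, ?_, by rw [card_insert_of_notMem hys, hc]⟩
    · rw [insert_inter_of_notMem hyX, inter_eq_left.2 hs]
    · rw [insert_inter_of_mem hy, disjoint_iff_inter_eq_empty.1 (hd.mono_left hs)]
      simp
  have hinj : Set.InjOn (fun p : Finset V × V => insert p.2 p.1)
      (powersetCard 2 X ×ˢ Y : Finset (Finset V × V)) := by
    intro p hp q hq e
    simp only at e
    have k1 := key p hp
    have k2 := key q hq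
    rw [e] at k1
    exact Prod.ext (k1.1.symm.trans k2.1) (singleton_injective (k1.2.1.symm.trans k2.2.1))
  have hc := card_image_of_injOn hinj
  rw [card_product, card_powersetCard] at hc
  rw [← hc]
  unfold eXXY
  refine le_trans (card_le_card ?_) (card_union_le _ _)
  intro e he
  obtain ⟨p, hp, rfl⟩ := mem_image.1 he
  obtain ⟨k1, k2, k3⟩ := key p hp
  have hp2 := (mem_powersetCard.1 (mem_product.1 hp).1).2
  simp only [mem_union, mem_filter, mem_sdiff, mem_powersetCard, subset_univ, true_and, k1, k2, k3,
    hp2, card_singleton, and_true]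
  tauto

lemma eXXY_zero {V : Type} [DecidableEq V] {E : Finset (Finset V)} {X Y : Finset V}
    (hu : ∀ e ∈ E, e.card = 3) {T : V → V → V → Prop}
    (hT : ∀ x y z, x ≠ y → x ≠ z → y ≠ z → {x, y, z} ∈ E → T x y z)
    (hemp : Emp T X Y) : eXXY E X Y = 0 := by
  unfold eXXY
  rw [card_eq_zero, filter_eq_empty_iff]
  rintro e he ⟨h1, h2⟩
  have hs := mem_shape hemp.1 (hu e he) h1 h2
  obtain ⟨y, hy⟩ := card_eq_one.1 h2
  obtain ⟨x, x', hne, hx⟩ := card_eq_two.1 h1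
  have hyY : y ∈ Y := (mem_inter.1 (show y ∈ e ∩ Y by rw [hy]; simp)).2
  have hxX : x ∈ X := (mem_inter.1 (show x ∈ e ∩ X by rw [hx]; simp)).2
  have hxX' : x' ∈ X := (mem_inter.1 (show x' ∈ e ∩ X by rw [hx]; simp)).2
  have ne : ∀ t ∈ X, t ≠ y := fun t ht q => disjoint_left.1 hemp.1 ht (q ▸ hyY)
  refine hemp.2 x hxX x' hxX' hne y hyY (hT _ _ _ hne (ne x hxX) (ne x' hxX') ?_)
  rw [hx, hy] at hs
  have : e = {x, x', y} := by rw [hs]; ext; simp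
  rwa [← this]

lemma eYYX_le {V : Type} [DecidableEq V] {E : Finset (Finset V)} {X Y : Finset V}
    (hu : ∀ e ∈ E, e.card = 3) {T : V → V → V → Prop} (h : D2T T)
    (hT : ∀ x y z, x ≠ y → x ≠ z → y ≠ z → {x, y, z} ∈ E → T x y z)
    (hemp : Emp T X Y) : eXXY E Y X ≤ Y.card.choose 2 := by
  unfold eXXY
  rw [← card_powersetCard]
  apply card_le_card_of_injOn (fun e => e ∩ Y)
  · intro e he
    obtain ⟨he, h1, h2⟩ := mem_filter.1 he
    exact mem_coe.2 (mem_powersetCard.2 ⟨inter_subset_right, h1⟩)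
  · intro e he f hf hef
    obtain ⟨he, h1, h2⟩ := mem_filter.1 he
    obtain ⟨hf, g1, g2⟩ := mem_filter.1 hf
    simp only at hef
    have hs := mem_shape hemp.1.symm (hu e he) h1 h2
    have hs' := mem_shape hemp.1.symm (hu f hf) g1 g2
    obtain ⟨x, hx⟩ := card_eq_one.1 h2
    obtain ⟨x', hx'⟩ := card_eq_one.1 g2
    obtain ⟨y, y', hne, hy⟩ := card_eq_two.1 h1
    rw [hy] at hef
    rw [hy, hx] at hs
    rw [← hef, hx'] at hs'
    by_contra hneq
    have hxx : x ≠ x' := by rintro rfl; exact hneq (hs.trans hs'.symm)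
    have hxX : x ∈ X := (mem_inter.1 (show x ∈ e ∩ X by rw [hx]; simp)).2
    have hxX' : x' ∈ X := (mem_inter.1 (show x' ∈ f ∩ X by rw [hx']; simp)).2
    have hyY : y ∈ Y := (mem_inter.1 (show y ∈ e ∩ Y by rw [hy]; simp)).2
    have hyY' : y' ∈ Y := (mem_inter.1 (show y' ∈ e ∩ Y by rw [hy]; simp)).2
    have ne : ∀ t ∈ X, ∀ s ∈ Y, s ≠ t := fun t ht s hs q => disjoint_left.1 hemp.1 ht (q ▸ hs)
    have t1 : T y y' x := by
      refine hT _ _ _ hne (ne x hxX y hyY) (ne x hxX y' hyY') ?_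
      have : e = {y, y', x} := by rw [hs]; ext; simp
      rwa [← this]
    have t2 : T y y' x' := by
      refine hT _ _ _ hne (ne x' hxX' y hyY) (ne x' hxX' y' hyY') ?_
      have : f = {y, y', x'} := by rw [hs']; ext; simp
      rwa [← this]
    exact h.d2 y y' x x' hne (ne x hxX y hyY) (ne x' hxX' y hyY) (ne x hxX y' hyY')
      (ne x' hxX' y' hyY') hxx t1 t2
      (fun q => hemp.2 x hxX x' hxX' hxx y hyY (h.s2 _ _ _ (h.s1 _ _ _ q)))
      (fun q => hemp.2 x hxX x' hxX' hxx y' hyY' (h.s2 _ _ _ (h.s1 _ _ _ q)))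

lemma sparse_dens {V : Type} [DecidableEq V] {E : Finset (Finset V)} {X Y : Finset V}
    (hu : ∀ e ∈ E, e.card = 3) {T : V → V → V → Prop} (h : D2T T)
    (hT : ∀ x y z, x ≠ y → x ≠ z → y ≠ z → {x, y, z} ∈ E → T x y z)
    (hemp : Emp T X Y) {ε : ℝ} (hε : 0 ≤ ε) (hX : 1 / (X.card : ℝ) ≤ ε) :
    dXXY E X Y ≤ ε ∧ dXXY E Y X ≤ ε := by
  unfold dXXY
  rw [eXXY_zero hu hT hemp]
  refine ⟨by simpa using hε, le_trans ?_ hX⟩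
  have h1 : (eXXY E Y X : ℝ) ≤ Y.card.choose 2 := by exact_mod_cast eYYX_le hu h hT hemp
  calc (eXXY E Y X : ℝ) / (Y.card.choose 2 * X.card)
      ≤ (Y.card.choose 2 : ℝ) / (Y.card.choose 2 * X.card) := by gcongr
    _ = ((Y.card.choose 2 : ℝ) / Y.card.choose 2) * (1 / X.card) := by
        rw [div_mul_div_comm, mul_one]
    _ ≤ 1 * (1 / X.card) := by gcongr; exact div_self_le_one _
    _ = _ := one_mul _

lemma compl_dens {V : Type} [Fintype V] [DecidableEq V] {E : Finset (Finset V)} {X Y : Finset V}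
    (hd : Disjoint X Y) (hX : 2 ≤ X.card) (hY : 1 ≤ Y.card) {ε : ℝ}
    (hc : dXXY (powersetCard 3 univ \ E) X Y ≤ ε) : dXXY E X Y ≥ 1 - ε := by
  have h1 : ((X.card.choose 2 : ℝ) * Y.card) ≤ eXXY E X Y + eXXY (powersetCard 3 univ \ E) X Y := by
    exact_mod_cast le_eXXY (E := E) hd
  have h2 : (0 : ℝ) < X.card.choose 2 := by exact_mod_cast Nat.choose_pos hX
  have h3 : (0 : ℝ) < Y.card := by exact_mod_cast hY
  have h4 : (0 : ℝ) < (X.card.choose 2 : ℝ) * Y.card := by positivity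
  unfold dXXY at *
  have h5 : 1 ≤ (eXXY E X Y : ℝ) / ((X.card.choose 2 : ℝ) * Y.card) +
      (eXXY (powersetCard 3 univ \ E) X Y : ℝ) / ((X.card.choose 2 : ℝ) * Y.card) := by
    rw [← add_div, le_div_iff₀ h4]; linarith
  linarith

lemma dXXY_le_one {V : Type} [DecidableEq V] {E : Finset (Finset V)} {X Y : Finset V}
    (hu : ∀ e ∈ E, e.card = 3) (hd : Disjoint X Y) : dXXY E X Y ≤ 1 := by
  unfold dXXY
  apply div_le_one_of_le₀
  · exact_mod_cast eXXY_le hu hd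
  · positivity

theorem main_lemma_EH :
    ∃ C₀ : ℝ, C₀ > 1 ∧ ∀ C : ℝ, C > C₀ →
      ∀ (V : Type) [Fintype V] [DecidableEq V] (E : Finset (Finset V)) (β : ℝ),
        0 < β →
        (∀ e ∈ E, e.card = 3) →
        InducedD2Free E →
        (Fintype.card V : ℝ) ≥ 4 / β →
        β ≤ densH E →
        densH E ≤ 1 - β →
        ∃ X Y S : Finset V,
          Disjoint X Y ∧ Disjoint X S ∧ Disjoint Y S ∧
          X ∪ Y ∪ S = Finset.univ ∧
          (X.card : ℝ) ≥ (β ^ 2 / 16) * (Fintype.card V : ℝ) / 10 ∧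
          (Y.card : ℝ) ≥ (β ^ 2 / 16) * (Fintype.card V : ℝ) / 10 ∧
          (S.card : ℝ) ≤ (β ^ 2 / 16) * (Fintype.card V : ℝ) / 2 ∧
          EpsHomogeneous E X Y
            ((1 / (β ^ 2 / 16)) * (C / (Fintype.card V : ℝ)) ^ (1 / C)) := by
  refine ⟨1000, by norm_num, ?_⟩
  intro C hC V _ _ E β hβ hu hE hn hl hr
  have hβ2 : β ≤ 1 / 2 := by linarith
  set n := Fintype.card V with hnd
  have hn8 : (8 : ℝ) ≤ n := by
    refine le_trans ?_ hn
    rw [le_div_iff₀ hβ]; linarith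
  have hn8' : 8 ≤ n := by exact_mod_cast hn8
  have hn0 : (0 : ℝ) < n := by linarith
  have hxi0 : 0 < β ^ 2 / 16 := by positivity
  have hxi1 : β ^ 2 / 16 ≤ 1 / 64 := by nlinarith
  set ξ := β ^ 2 / 16 with hξ
  set ε := (1 / ξ) * (C / (n : ℝ)) ^ (1 / C) with hεd
  have hC0 : 0 < C := by linarith
  have hε0 : 0 ≤ ε := by positivity
  have hεn : C ≤ n → C / (ξ * n) ≤ ε := by
    intro hCn
    have h1 : C / n ≤ 1 := by rw [div_le_one hn0]; exact hCn
    have h2 : C / n ≤ (C / (n : ℝ)) ^ (1 / C) := by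
      have := Real.rpow_le_rpow_of_exponent_ge (x := C / n) (by positivity) h1
        (show 1 / C ≤ 1 by rw [div_le_one hC0]; linarith)
      rwa [Real.rpow_one] at this
    calc C / (ξ * n) = (1 / ξ) * (C / n) := by field_simp
      _ ≤ ε := by rw [hεd]; gcongr
  by_cases hcase : ξ * n ≤ C
  · have hε1 : 1 ≤ ε := by
      by_cases hCn : C ≤ n
      · refine le_trans ?_ (hεn hCn)
        rw [le_div_iff₀ (by positivity)]; linarith
      · have h1 : 1 ≤ (C / (n : ℝ)) ^ (1 / C) := by
          apply Real.one_le_rpow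
          · rw [le_div_iff₀ hn0]; linarith
          · positivity
        have h2 : 1 ≤ 1 / ξ := by rw [le_div_iff₀ hxi0]; linarith
        rw [hεd]
        nlinarith
    obtain ⟨X, -, hX⟩ := exists_subset_card_eq (s := (univ : Finset V)) (n := n / 2)
      (by rw [card_univ]; omega)
    have hYc : (univ \ X).card = n - n / 2 := by
      rw [card_sdiff_of_subset (subset_univ _), card_univ, hX]
    have hb : ∀ m : ℕ, n ≤ 3 * m → ξ * n / 10 ≤ (m : ℝ) := by
      intro m hm
      have : (n : ℝ) ≤ 3 * m := by exact_mod_cast hm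
      nlinarith
    refine ⟨X, univ \ X, ∅, disjoint_sdiff, by simp, by simp, by simp, ?_, ?_, ?_, ?_⟩
    · exact hb _ (by omega)
    · exact hb _ (by omega)
    · simp; positivity
    · right
      exact ⟨(dXXY_le_one hu disjoint_sdiff).trans hε1,
        (dXXY_le_one hu disjoint_sdiff.symm).trans hε1⟩
  · push Not at hcase
    have hg : GoodP (TE E) (ξ * n) := good_exists hβ hu hE hl hr (hC.trans hcase).le
    obtain ⟨X, Y, S, h1, h2, h3, h4, h5, h6, h7, h8⟩ := hg
    have hCn : C ≤ n := by nlinarith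
    have hX1 : 1 / (X.card : ℝ) ≤ ε := by
      refine le_trans ?_ (hεn hCn)
      have hp : 0 < ξ * n / 10 := by positivity
      calc 1 / (X.card : ℝ) ≤ 1 / (ξ * n / 10) := one_div_le_one_div_of_le hp h5
        _ = 10 / (ξ * n) := by field_simp
        _ ≤ C / (ξ * n) := by gcongr; linarith
    have hD := TE_D2T hu hE
    refine ⟨X, Y, S, h1, h2, h3, h4, h5, h6, h7, ?_⟩
    rcases h8 with h8 | h8
    · right
      exact sparse_dens hu hD (fun _ _ _ _ _ _ k => k) h8 hε0 hX1
    · left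
      have hX2 : 2 ≤ X.card := by
        have : (2 : ℝ) ≤ X.card := by linarith
        exact_mod_cast this
      have hY2 : 2 ≤ Y.card := by
        have : (2 : ℝ) ≤ Y.card := by linarith
        exact_mod_cast this
      obtain ⟨k1, k2⟩ := sparse_dens (E := powersetCard 3 univ \ E)
        (fun e he => (mem_powersetCard.1 (mem_sdiff.1 he).1).2) hD.compl
        (fun _ _ _ _ _ _ k => (mem_sdiff.1 k).2) h8 hε0 hX1
      exact ⟨compl_dens h1 hX2 (by omega) k1, compl_dens h1.symm hY2 (by omega) k2⟩
end

section
/- Let H be a 3-uniform hypergraph with n vertices and density 0 < d ≤ 1. Then H contains an independent set of size at least min{ n/2, sqrt(3/(4d)) }. -/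
open Finset

lemma expect_aux {V : Type} [Fintype V] [DecidableEq V] (p : ℝ) (e : Finset V) :
    ∑ S ∈ (univ : Finset V).powerset,
      (∏ _i ∈ S, p) * (∏ _i ∈ univ \ S, (1 - p)) * (if e ⊆ S then 1 else 0) = p ^ e.card := by
  have h := Finset.prod_add (fun _ : V => p) (fun i => if i ∈ e then 0 else 1 - p) univ
  have h2 : ∏ i : V, (p + if i ∈ e then 0 else 1 - p) = p ^ e.card := by
    have : ∀ i : V, (p + if i ∈ e then 0 else 1 - p) = if i ∈ e then p else 1 := by
      intro i; split_ifs <;> ring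
    simp only [this]
    rw [Finset.prod_ite_mem]; simp
  rw [← h2, h]
  refine Finset.sum_congr rfl fun S _ => ?_
  by_cases hs : e ⊆ S
  · rw [if_pos hs, mul_one]
    congr 1
    refine Finset.prod_congr rfl fun i hi => ?_
    rw [if_neg]
    intro hie
    exact (Finset.mem_sdiff.1 hi).2 (hs hie)
  · rw [if_neg hs, mul_zero]
    obtain ⟨i, hie, hiS⟩ := Finset.not_subset.1 hs
    have h0 : (∏ j ∈ univ \ S, if j ∈ e then 0 else 1 - p) = 0 :=
      Finset.prod_eq_zero (i := i) (by simp [hiS]) (by simp [hie])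
    rw [h0, mul_zero]

lemma exists_good {V : Type} [Fintype V] [DecidableEq V] (E : Finset (Finset V))
    (hE : ∀ e ∈ E, e.card = 3) (p : ℝ) (hp0 : 0 ≤ p) (hp1 : p ≤ 1) :
    ∃ S : Finset V, (Fintype.card V : ℝ) * p - E.card * p ^ 3 ≤
      (S.card : ℝ) - (E.filter (· ⊆ S)).card := by
  set w : Finset V → ℝ := fun S => (∏ _i ∈ S, p) * (∏ _i ∈ univ \ S, (1 - p)) with hw
  have hw0 : ∀ S, 0 ≤ w S := fun S =>
    mul_nonneg (Finset.prod_nonneg fun _ _ => hp0)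
      (Finset.prod_nonneg fun _ _ => by linarith)
  have ex : ∀ e : Finset V, ∑ S ∈ (univ : Finset V).powerset,
      w S * (if e ⊆ S then 1 else 0) = p ^ e.card := expect_aux p
  have h1 : ∑ S ∈ (univ : Finset V).powerset, w S = 1 := by
    have := ex ∅
    simpa using this
  have hc : ∑ S ∈ (univ : Finset V).powerset, w S * (S.card : ℝ) = Fintype.card V * p := by
    have : ∀ S : Finset V, (S.card : ℝ) = ∑ v : V, if {v} ⊆ S then (1:ℝ) else 0 := by
      intro S; simp
    simp_rw [this, Finset.mul_sum]
    rw [Finset.sum_comm]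
    simp_rw [ex]
    simp
  have he : ∑ S ∈ (univ : Finset V).powerset, w S * ((E.filter (· ⊆ S)).card : ℝ)
      = E.card * p ^ 3 := by
    have : ∀ S : Finset V, ((E.filter (· ⊆ S)).card : ℝ)
        = ∑ e ∈ E, if e ⊆ S then (1:ℝ) else 0 := by
      intro S; simp
    simp_rw [this, Finset.mul_sum]
    rw [Finset.sum_comm]
    simp_rw [ex]
    rw [Finset.sum_congr rfl (fun e h => by rw [hE e h])]
    simp
  by_contra! hcon
  set M := (Fintype.card V : ℝ) * p - E.card * p ^ 3
  have hs : ∑ S ∈ (univ : Finset V).powerset,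
      w S * (M - ((S.card : ℝ) - (E.filter (· ⊆ S)).card)) = 0 := by
    simp_rw [mul_sub, Finset.sum_sub_distrib, hc, he, ← Finset.sum_mul, h1]
    simp [M]
  rw [Finset.sum_eq_zero_iff_of_nonneg
    (fun S _ => mul_nonneg (hw0 S) (by linarith [hcon S]))] at hs
  have : ∑ S ∈ (univ : Finset V).powerset, w S = 0 := by
    refine Finset.sum_eq_zero fun S hS => ?_
    rcases mul_eq_zero.1 (hs S hS) with h | h
    · exact h
    · linarith [hcon S]
  linarith

lemma exists_indep {V : Type} [DecidableEq V] (E : Finset (Finset V))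
    (hE : ∀ e ∈ E, e.card = 3) (S : Finset V) :
    ∃ T : Finset V, (∀ t ⊆ T, t.card = 3 → t ∉ E) ∧
      (S.card : ℝ) - (E.filter (· ⊆ S)).card ≤ T.card := by
  rcases isEmpty_or_nonempty V with hV | hV
  · refine ⟨∅, ?_, ?_⟩
    · intro t ht h3
      rw [Finset.subset_empty.1 ht] at h3
      simp at h3
    · rw [Finset.eq_empty_of_isEmpty S]
      simp
  have hne : ∀ e : Finset V, ∃ v : V, e ∈ E → v ∈ e := by
    intro e
    by_cases h : e ∈ E
    · obtain ⟨v, hv⟩ := Finset.card_pos.1 (by rw [hE e h]; norm_num : 0 < e.card)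
      exact ⟨v, fun _ => hv⟩
    · exact ⟨hV.some, fun h' => absurd h' h⟩
  choose f hf using hne
  refine ⟨S \ (E.filter (· ⊆ S)).image f, ?_, ?_⟩
  · intro t ht _ htE
    have := ht (hf t htE)
    rw [Finset.mem_sdiff] at this
    exact this.2 (Finset.mem_image_of_mem f (Finset.mem_filter.2
      ⟨htE, ht.trans Finset.sdiff_subset⟩))
  · have h1 := Finset.le_card_sdiff ((E.filter (· ⊆ S)).image f) S
    have h2 : ((E.filter (· ⊆ S)).image f).card ≤ (E.filter (· ⊆ S)).card :=
      Finset.card_image_le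
    have h3 : S.card ≤ (S \ (E.filter (· ⊆ S)).image f).card + (E.filter (· ⊆ S)).card := by
      omega
    have : (S.card : ℝ) ≤ (S \ (E.filter (· ⊆ S)).image f).card + (E.filter (· ⊆ S)).card := by
      exact_mod_cast h3
    linarith

/-- Every 3-uniform hypergraph on `n` vertices with density `0 < d ≤ 1` contains an
independent set of size at least `min(n/2, √(3/(4d)))`. -/
theorem probabilistic_independent_set {V : Type} [Fintype V] [DecidableEq V]
    (E : Finset (Finset V)) (hE : ∀ e ∈ E, e.card = 3)
    (d : ℝ) (hd0 : 0 < d) (hd1 : d ≤ 1)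
    (hdens : d = (E.card : ℝ) / ((Fintype.card V).choose 3 : ℝ)) :
    ∃ S : Finset V, (∀ t ⊆ S, t.card = 3 → t ∉ E) ∧
      (S.card : ℝ) ≥ min ((Fintype.card V : ℝ) / 2) (Real.sqrt (3 / (4 * d))) := by
  have hch : ((Fintype.card V).choose 3 : ℝ) ≠ 0 := by
    intro h; rw [h, div_zero] at hdens; linarith
  have hEc : (E.card : ℝ) = d * ((Fintype.card V).choose 3 : ℝ) := by
    rw [hdens]; field_simp
  have hle : ((Fintype.card V).choose 3 : ℝ) ≤ (Fintype.card V : ℝ) ^ 3 / 6 := by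
    have := Nat.choose_le_pow_div (α := ℝ) 3 (Fintype.card V)
    simpa [Nat.factorial] using this
  have hn : 0 < (Fintype.card V : ℝ) := by
    rcases Nat.eq_zero_or_pos (Fintype.card V) with h | h
    · rw [h] at hch; simp at hch
    · exact_mod_cast h
  set n : ℝ := (Fintype.card V : ℝ) with hndef
  have hEn : (E.card : ℝ) ≤ d * (n ^ 3 / 6) := by
    rw [hEc]; exact mul_le_mul_of_nonneg_left hle hd0.le
  set m := min n (2 * Real.sqrt (3 / (4 * d))) with hm
  have hr0 : 0 ≤ Real.sqrt (3 / (4 * d)) := Real.sqrt_nonneg _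
  have hr2 : Real.sqrt (3 / (4 * d)) ^ 2 = 3 / (4 * d) := Real.sq_sqrt (by positivity)
  have hm0 : 0 ≤ m := le_min hn.le (by positivity)
  have hmn : m ≤ n := min_le_left _ _
  have hm2 : d * m ^ 2 ≤ 3 := by
    have : m ^ 2 ≤ (2 * Real.sqrt (3 / (4 * d))) ^ 2 :=
      pow_le_pow_left₀ hm0 (min_le_right _ _) 2
    rw [mul_pow, hr2] at this
    calc d * m ^ 2 ≤ d * (2 ^ 2 * (3 / (4 * d))) := mul_le_mul_of_nonneg_left this hd0.le
      _ = 3 := by field_simp; norm_num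
  have hmin : min (n / 2) (Real.sqrt (3 / (4 * d))) ≤ m / 2 := by
    rcases min_cases n (2 * Real.sqrt (3 / (4 * d))) with h | h
    · rw [hm, h.1]; exact min_le_left _ _
    · rw [hm, h.1]; exact (min_le_right _ _).trans (by linarith)
  obtain ⟨S, hS⟩ := exists_good E hE (m / n) (by positivity) ((div_le_one hn).2 hmn)
  obtain ⟨T, hT, hTc⟩ := exists_indep E hE S
  refine ⟨T, hT, ?_⟩
  have e1 : n * (m / n) = m := by field_simp
  have e2 : (E.card : ℝ) * (m / n) ^ 3 ≤ m / 2 := by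
    calc (E.card : ℝ) * (m / n) ^ 3 ≤ d * (n ^ 3 / 6) * (m / n) ^ 3 :=
          mul_le_mul_of_nonneg_right hEn (by positivity)
      _ = (d * m ^ 2) * m / 6 := by field_simp
      _ ≤ m / 2 := by nlinarith
  rw [← hndef, e1] at hS
  show min (n / 2) (Real.sqrt (3 / (4 * d))) ≤ (T.card : ℝ)
  linarith
end
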